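/- Let n ≥ 2, N = 2^⌊n/2⌋, and let α₁,…,αₙ be complex N×N matrices satisfying the Clifford relations. Let ψ : B₁ → ℂᴺ be of class C^{1,α} on the open unit ball B₁ ⊂ ℝⁿ for some α ∈ (0,1), and suppose |Dψ(x)| ≤ C |ψ(x)|^σ on B₁ for some constants C ≥ 0 and σ ≥ 1. Assume ψ(0) = 0 and ψ is not identically zero on B₁. Then there exist an integer k ≥ 1, a radius R ∈ (0,1], and maps P_k, Γ_k : B_R → ℂᴺ with ψ = P_k + Γ_k on B_R, such that: P_k is not identically zero, each component of P_k is a homogeneous harmonic polynomial of degree k, DP_k = 0, and for every δ ∈ (0,1) there exists a constant C(δ) > 0 with |Γ_k(x)| ≤ C(δ) |x|^{k+δ} and |∇Γ_k(x)| ≤ C(δ) |x|^{k+δ−1} for all x ∈ B_R. -/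

import Mathlib

open MeasureTheory Metric Filter Matrix
open scoped ENNReal NNReal

noncomputable section

/-- The Clifford anticommutation relations `αⱼαₖ + αₖαⱼ = -2 δⱼₖ Id`. -/
def CliffordRel {n N : ℕ} (α : Fin n → Matrix (Fin N) (Fin N) ℂ) : Prop :=
  ∀ j k, α j * α k + α k * α j = (-2 : ℂ) • (if j = k then (1 : Matrix (Fin N) (Fin N) ℂ) else 0)

/-- The Euclidean Dirac operator `Dψ = Σⱼ αⱼ ∂ⱼψ`. -/
def diracOp {n N : ℕ} (α : Fin n → Matrix (Fin N) (Fin N) ℂ)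
    (ψ : EuclideanSpace ℝ (Fin n) → EuclideanSpace ℂ (Fin N))
    (x : EuclideanSpace ℝ (Fin n)) : EuclideanSpace ℂ (Fin N) :=
  ∑ j : Fin n, Matrix.toEuclideanLin (α j) (fderiv ℝ ψ x (EuclideanSpace.single j (1:ℝ)))

section HomogTaylor
variable {X W : Type*} [NormedAddCommGroup X] [NormedSpace ℝ X]
  [NormedAddCommGroup W] [NormedSpace ℝ W]

lemma homog_iter_eq (G : X → W) (hG : ∀ z, z ≠ 0 → ∀ j : ℕ, ContDiffAt ℝ j G z) (p : ℝ)
    (hom : ∀ t : ℝ, 0 < t → ∀ z, G (t • z) = t ^ (-p) • G z) (j : ℕ) (t : ℝ) (ht : 0 < t)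
    (z : X) (hz : z ≠ 0) (v : Fin j → X) :
    t ^ j • iteratedFDeriv ℝ j G (t • z) v = t ^ (-p) • iteratedFDeriv ℝ j G z v := by
  let e : X ≃L[ℝ] X := ContinuousLinearEquiv.smulLeft (Units.mk0 t ht.ne')
  have he : ∀ x, e x = t • x := fun x => rfl
  have h1 := e.iteratedFDerivWithin_comp_right (s := Set.univ) G uniqueDiffOn_univ
    (x := z) (Set.mem_univ _) j
  simp only [Set.preimage_univ, iteratedFDerivWithin_univ] at h1
  have h2 : G ∘ e = t ^ (-p) • G := by
    ext x; simp [he, hom t ht]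
  rw [h2, iteratedFDeriv_const_smul_apply (hG z hz j)] at h1
  have h3 := congrArg (fun T => T v) h1
  simp only [_root_.smul_apply, ContinuousMultilinearMap.compContinuousLinearMap_apply] at h3
  rw [h3]
  have : (fun i => (e : X →L[ℝ] X) (v i)) = fun i => t • v i := by
    ext i; exact he _
  rw [this, ContinuousMultilinearMap.map_smul_univ]
  simp [he]

lemma homog_iter_bound [FiniteDimensional ℝ X] (G : X → W)
    (hG : ∀ z, z ≠ 0 → ∀ j : ℕ, ContDiffAt ℝ j G z) (p : ℝ)
    (hom : ∀ t : ℝ, 0 < t → ∀ z, G (t • z) = t ^ (-p) • G z) (j : ℕ) :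
    ∃ C : ℝ, 0 ≤ C ∧ ∀ z, z ≠ 0 → ‖iteratedFDeriv ℝ j G z‖ ≤ C * ‖z‖ ^ (-p - j) := by
  have hc : ContinuousOn (fun z => iteratedFDeriv ℝ j G z) (sphere (0:X) 1) := by
    intro z hz
    have hz0 : z ≠ 0 := by
      rintro rfl; simp at hz
    have := ((hG z hz0 j).iteratedFDeriv_right (i := j) (m := 0) (by simp)).continuousAt
    exact this.continuousWithinAt
  obtain ⟨C, hC⟩ := (isCompact_sphere (0:X) 1).exists_bound_of_continuousOn hc
  refine ⟨max C 0, le_max_right _ _, fun z hz => ?_⟩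
  have hz' : 0 < ‖z‖ := norm_pos_iff.2 hz
  set w := ‖z‖⁻¹ • z with hw
  have hw1 : ‖w‖ = 1 := by rw [hw, norm_smul]; simp [hz'.ne']
  have hw0 : w ≠ 0 := by rintro h; simp [h] at hw1
  have hzw : z = ‖z‖ • w := by rw [hw, smul_smul]; simp [hz'.ne']
  have hb := hC w (by simpa using hw1)
  refine ContinuousMultilinearMap.opNorm_le_bound (by positivity) fun v => ?_
  have h := homog_iter_eq G hG p hom j ‖z‖ hz' w hw0 v
  rw [← hzw] at h
  have h' : iteratedFDeriv ℝ j G z v = (‖z‖ ^ (-p - j)) • iteratedFDeriv ℝ j G w v := by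
    rw [Real.rpow_sub hz', Real.rpow_natCast, div_eq_inv_mul, mul_smul, ← h, smul_smul,
      inv_mul_cancel₀ (by positivity), one_smul]
  rw [h', norm_smul, Real.norm_of_nonneg (by positivity), mul_comm (max C 0), mul_assoc]
  gcongr
  refine (ContinuousMultilinearMap.le_opNorm _ _).trans ?_
  gcongr
  exact hb.trans (le_max_left _ _)

lemma homog_taylor [FiniteDimensional ℝ X] [CompleteSpace W] (G : X → W)
    (hG : ∀ z, z ≠ 0 → ∀ j : ℕ, ContDiffAt ℝ j G z) (p : ℝ)
    (hom : ∀ t : ℝ, 0 < t → ∀ z, G (t • z) = t ^ (-p) • G z) (hp : 0 ≤ p) (m : ℕ) :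
    ∃ C : ℝ, 0 ≤ C ∧ ∀ y x, y ≠ 0 → ‖x‖ ≤ ‖y‖ / 2 →
      ‖G (y + x) - ∑ k ∈ Finset.range (m + 1),
        (k.factorial : ℝ)⁻¹ • iteratedFDeriv ℝ k G y (fun _ => x)‖
        ≤ C * ‖x‖ ^ (m + 1) * ‖y‖ ^ (-p - (m + 1 : ℕ)) := by
  obtain ⟨C, hC0, hC⟩ := homog_iter_bound G hG p hom (m + 1)
  refine ⟨C * (1 / 2) ^ (-p - (m + 1 : ℕ)), by positivity, fun y x hy hx => ?_⟩
  have hy' : 0 < ‖y‖ := norm_pos_iff.2 hy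
  have hseg : ∀ t ∈ Set.Icc (0:ℝ) 1, ‖y‖ / 2 ≤ ‖y + t • x‖ := by
    intro t ht
    have h1 : ‖t • x‖ ≤ ‖y‖ / 2 := by
      rw [norm_smul, Real.norm_of_nonneg ht.1]
      nlinarith [ht.1, ht.2, norm_nonneg x]
    have h2 := norm_sub_norm_le y (-(t • x))
    rw [norm_neg, sub_neg_eq_add] at h2
    linarith
  have hne : ∀ t ∈ Set.Icc (0:ℝ) 1, y + t • x ≠ 0 := by
    intro t ht h
    have := hseg t ht
    rw [h, norm_zero] at this
    linarith
  have hT := map_add_eq_sum_add_integral_iteratedFDeriv (f := G) (x := y) (y := x) (n := m)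
    (fun t ht => by
      have := hG _ (hne t ht) (m + 1)
      exact_mod_cast this)
  rw [hT, add_sub_cancel_left, norm_smul]
  have hfac : ‖((m.factorial : ℝ))⁻¹‖ ≤ 1 := by
    rw [norm_inv, Real.norm_natCast]
    exact inv_le_one_of_one_le₀ (by exact_mod_cast Nat.one_le_iff_ne_zero.2 (Nat.factorial_ne_zero m))
  have hintg := intervalIntegral.norm_integral_le_of_norm_le_const (a := (0:ℝ)) (b := 1)
    (f := fun t => (1 - t) ^ m • iteratedFDeriv ℝ (m + 1) G (y + t • x) (fun _ => x))
    (C := C * (1 / 2) ^ (-p - (m + 1 : ℕ)) * ‖x‖ ^ (m + 1) * ‖y‖ ^ (-p - (m + 1 : ℕ))) ?_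
  · calc _ ≤ 1 * (C * (1 / 2) ^ (-p - (m + 1 : ℕ)) * ‖x‖ ^ (m + 1) * ‖y‖ ^ (-p - (m + 1 : ℕ))) := by
          apply mul_le_mul hfac _ (norm_nonneg _) zero_le_one
          simpa using hintg
      _ = _ := by ring
  · intro t ht
    rw [Set.uIoc_of_le zero_le_one] at ht
    have ht' : t ∈ Set.Icc (0:ℝ) 1 := ⟨ht.1.le, ht.2⟩
    rw [norm_smul]
    have h1 : ‖(1 - t) ^ m‖ ≤ 1 := by
      rw [norm_pow, Real.norm_of_nonneg (by linarith [ht'.2])]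
      exact pow_le_one₀ (by linarith [ht'.2]) (by linarith [ht'.1])
    have h2 := ContinuousMultilinearMap.le_opNorm (iteratedFDeriv ℝ (m + 1) G (y + t • x))
      (fun _ => x)
    simp only [Finset.prod_const, Finset.card_univ, Fintype.card_fin] at h2
    have h3 := hC _ (hne t ht')
    have h4 : ‖y + t • x‖ ^ (-p - (m + 1 : ℕ)) ≤ (‖y‖ / 2) ^ (-p - (m + 1 : ℕ)) :=
      Real.rpow_le_rpow_of_nonpos (by positivity) (hseg t ht')
        (by push_cast; linarith [(Nat.cast_nonneg m : (0:ℝ) ≤ m)])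
    have h5 : (‖y‖ / 2) ^ (-p - (m + 1 : ℕ)) =
        (1 / 2) ^ (-p - (m + 1 : ℕ)) * ‖y‖ ^ (-p - (m + 1 : ℕ)) := by
      rw [← Real.mul_rpow (by norm_num) (by positivity)]; congr 1; ring
    calc _ ≤ 1 * (C * ((1 / 2) ^ (-p - (m + 1 : ℕ)) * ‖y‖ ^ (-p - (m + 1 : ℕ))) * ‖x‖ ^ (m + 1)) := by
          apply mul_le_mul h1 _ (norm_nonneg _) zero_le_one
          refine h2.trans ?_
          gcongr
          refine h3.trans ?_
          gcongr
          exact h4.trans h5.le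
      _ = _ := by ring

end HomogTaylor

section Kernel
variable {n : ℕ} {V : Type*} [NormedAddCommGroup V] [InnerProductSpace ℝ V]
  [FiniteDimensional ℝ V]

/-- Dirac operator with real-linear coefficients. -/
def rdirac (c : Fin n → V →L[ℝ] V) (u : EuclideanSpace ℝ (Fin n) → V)
    (x : EuclideanSpace ℝ (Fin n)) : V :=
  ∑ j, c j (fderiv ℝ u x (EuclideanSpace.single j (1:ℝ)))

/-- Clifford relations. -/
def RCl (c : Fin n → V →L[ℝ] V) : Prop :=
  ∀ j k v, c j (c k v) + c k (c j v) = if j = k then (-2:ℝ) • v else 0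

/-- Clifford multiplication. -/
def clm (c : Fin n → V →L[ℝ] V) : EuclideanSpace ℝ (Fin n) →L[ℝ] (V →L[ℝ] V) :=
  ∑ j, (EuclideanSpace.proj j : EuclideanSpace ℝ (Fin n) →L[ℝ] ℝ).smulRight (c j)

lemma clm_apply (c : Fin n → V →L[ℝ] V) (z : EuclideanSpace ℝ (Fin n)) :
    clm c z = ∑ j, z j • c j := by
  simp [clm]

lemma clm_apply2 (c : Fin n → V →L[ℝ] V) (z : EuclideanSpace ℝ (Fin n)) (v : V) :
    clm c z v = ∑ j, z j • c j v := by
  simp [clm_apply]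

lemma clm_single (c : Fin n → V →L[ℝ] V) (j : Fin n) :
    clm c (EuclideanSpace.single j 1) = c j := by
  rw [clm_apply]
  simp [ite_smul]

lemma RCl.sq {c : Fin n → V →L[ℝ] V} (hc : RCl c) (j : Fin n) (v : V) : c j (c j v) = -v := by
  have h := hc j j v
  rw [if_pos rfl, ← two_smul ℝ, neg_smul, ← smul_neg] at h
  exact smul_right_injective V (two_ne_zero (α := ℝ)) h

lemma RCl.clm_sq {c : Fin n → V →L[ℝ] V} (hc : RCl c) (z : EuclideanSpace ℝ (Fin n)) (v : V) :
    clm c z (clm c z v) = -(‖z‖ ^ 2 • v) := by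
  have h1 : clm c z (clm c z v) = ∑ j, ∑ k, (z j * z k) • c j (c k v) := by
    simp only [clm_apply2 c z v, map_sum, map_smul]
    simp only [clm_apply2, Finset.smul_sum, smul_smul]
    rw [Finset.sum_comm]
    refine Finset.sum_congr rfl fun j _ => Finset.sum_congr rfl fun k _ => ?_
    rw [mul_comm]
  have h2 : clm c z (clm c z v) = ∑ j, ∑ k, (z j * z k) • c k (c j v) := by
    rw [h1, Finset.sum_comm]
    refine Finset.sum_congr rfl fun j _ => Finset.sum_congr rfl fun k _ => ?_
    rw [mul_comm (z j)]
  have h3 : (2:ℝ) • clm c z (clm c z v) = (2:ℝ) • -(‖z‖ ^ 2 • v) := by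
    rw [two_smul]
    nth_rewrite 1 [h1]
    rw [h2]
    simp only [← Finset.sum_add_distrib, ← smul_add, hc _ _ v]
    simp only [smul_ite, smul_zero, Finset.sum_ite_eq, Finset.mem_univ, if_true]
    rw [EuclideanSpace.norm_sq_eq, ← neg_smul, smul_smul]
    simp only [smul_smul]
    rw [← Finset.sum_smul, ← Finset.sum_neg_distrib, Finset.mul_sum]
    congr 1
    refine Finset.sum_congr rfl fun j _ => ?_
    rw [Real.norm_eq_abs, sq_abs]; ring
  exact smul_right_injective V (two_ne_zero (α := ℝ)) h3

/-- the singular kernel -/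
def dker (c : Fin n → V →L[ℝ] V) (z : EuclideanSpace ℝ (Fin n)) : V →L[ℝ] V :=
  ‖z‖ ^ (-(n:ℝ)) • clm c z

/-- the regularised kernel -/
def kerR (c : Fin n → V →L[ℝ] V) (ρ : ℝ) (z : EuclideanSpace ℝ (Fin n)) : V →L[ℝ] V :=
  (ρ ^ 2 + ‖z‖ ^ 2) ^ (-(n:ℝ) / 2) • clm c z

/-- the approximate identity -/
def etaR (n : ℕ) (ρ : ℝ) (z : EuclideanSpace ℝ (Fin n)) : ℝ :=
  n * ρ ^ 2 * (ρ ^ 2 + ‖z‖ ^ 2) ^ (-(n:ℝ) / 2 - 1)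

lemma dker_contDiffAt (c : Fin n → V →L[ℝ] V) (z : EuclideanSpace ℝ (Fin n)) (hz : z ≠ 0) (j : ℕ) :
    ContDiffAt ℝ j (dker c) z := by
  unfold dker
  have h : ContDiffAt ℝ j (fun z : EuclideanSpace ℝ (Fin n) => ‖z‖ ^ (-(n:ℝ))) z :=
    (contDiffAt_norm ℝ hz).rpow_const_of_ne (by simpa using hz)
  exact h.smul (clm c).contDiff.contDiffAt

lemma dker_homog (c : Fin n → V →L[ℝ] V) (t : ℝ) (ht : 0 < t) (z : EuclideanSpace ℝ (Fin n)) :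
    dker c (t • z) = t ^ (-((n:ℝ) - 1)) • dker c z := by
  unfold dker
  rw [norm_smul, Real.norm_of_nonneg ht.le, Real.mul_rpow ht.le (norm_nonneg _), map_smul,
    smul_smul, smul_smul, neg_sub, sub_eq_add_neg, Real.rpow_add ht, Real.rpow_one]
  congr 1; ring

lemma dker_norm_le (c : Fin n → V →L[ℝ] V) (z : EuclideanSpace ℝ (Fin n)) :
    ‖dker c z‖ ≤ ‖clm c‖ * ‖z‖ ^ (1 - (n:ℝ)) := by
  by_cases hz : z = 0
  · simp only [dker, hz, map_zero, smul_zero, norm_zero]; positivity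
  have hz' : 0 < ‖z‖ := norm_pos_iff.2 hz
  unfold dker
  rw [norm_smul, Real.norm_of_nonneg (by positivity), sub_eq_add_neg, Real.rpow_add hz',
    Real.rpow_one]
  have := (clm c).le_opNorm z
  calc _ ≤ ‖z‖ ^ (-(n:ℝ)) * (‖clm c‖ * ‖z‖) := by gcongr
    _ = _ := by ring

lemma kerR_norm_le (c : Fin n → V →L[ℝ] V) (ρ : ℝ) (z : EuclideanSpace ℝ (Fin n)) :
    ‖kerR c ρ z‖ ≤ ‖clm c‖ * ‖z‖ ^ (1 - (n:ℝ)) := by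
  by_cases hz : z = 0
  · simp only [kerR, hz, map_zero, smul_zero, norm_zero]; positivity
  have hz' : 0 < ‖z‖ := norm_pos_iff.2 hz
  unfold kerR
  rw [norm_smul, Real.norm_of_nonneg (by positivity), sub_eq_add_neg, Real.rpow_add hz',
    Real.rpow_one]
  have := (clm c).le_opNorm z
  have h2 : (ρ ^ 2 + ‖z‖ ^ 2) ^ (-(n:ℝ) / 2) ≤ ‖z‖ ^ (-(n:ℝ)) := by
    calc _ ≤ (‖z‖ ^ 2) ^ (-(n:ℝ) / 2) :=
          Real.rpow_le_rpow_of_nonpos (by positivity) (by nlinarith [sq_nonneg ρ])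
            (by have : (0:ℝ) ≤ n := Nat.cast_nonneg n
                linarith)
      _ = _ := by
          rw [← Real.rpow_natCast, ← Real.rpow_mul hz'.le]; congr 1; push_cast; ring
  calc _ ≤ ‖z‖ ^ (-(n:ℝ)) * (‖clm c‖ * ‖z‖) := by gcongr
    _ = _ := by ring

lemma kerR_hasFDerivAt (c : Fin n → V →L[ℝ] V) (ρ : ℝ) (hρ : 0 < ρ)
    (z : EuclideanSpace ℝ (Fin n)) :
    HasFDerivAt (kerR c ρ) ((ρ ^ 2 + ‖z‖ ^ 2) ^ (-(n:ℝ) / 2) • clm c +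
      ((-(n:ℝ) * (ρ ^ 2 + ‖z‖ ^ 2) ^ (-(n:ℝ) / 2 - 1)) • innerSL ℝ z).smulRight (clm c z)) z := by
  have h1 : HasFDerivAt (fun z : EuclideanSpace ℝ (Fin n) => ρ ^ 2 + ‖z‖ ^ 2)
      (2 • innerSL ℝ z) z := by
    simpa using (hasStrictFDerivAt_norm_sq z).hasFDerivAt.const_add (ρ ^ 2)
  have h2 := h1.rpow_const (p := -(n:ℝ) / 2) (Or.inl (by positivity))
  have h3 := h2.smul (clm c).hasFDerivAt (x := z)
  unfold kerR
  have h4 : (-(n:ℝ) / 2 * (ρ ^ 2 + ‖z‖ ^ 2) ^ (-(n:ℝ) / 2 - 1)) • 2 • innerSL ℝ z =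
    (-(n:ℝ) * (ρ ^ 2 + ‖z‖ ^ 2) ^ (-(n:ℝ) / 2 - 1)) • innerSL ℝ z := by
    rw [two_nsmul, ← two_smul ℝ, smul_smul]
    congr 1; ring
  rw [h4] at h3
  exact h3

lemma kerR_contDiff (c : Fin n → V →L[ℝ] V) (ρ : ℝ) (hρ : 0 < ρ) : ContDiff ℝ 1 (kerR c ρ) := by
  unfold kerR
  have h : ContDiff ℝ 1 (fun z : EuclideanSpace ℝ (Fin n) => ρ ^ 2 + ‖z‖ ^ 2) :=
    contDiff_const.add (contDiff_norm_sq ℝ)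
  have h2 : ContDiff ℝ 1
      (fun z : EuclideanSpace ℝ (Fin n) => (ρ ^ 2 + ‖z‖ ^ 2) ^ (-(n:ℝ) / 2)) :=
    h.rpow_const_of_ne (fun x => by positivity)
  exact h2.smul (clm c).contDiff

lemma kerR_div {c : Fin n → V →L[ℝ] V} (hc : RCl c) (ρ : ℝ) (hρ : 0 < ρ)
    (z : EuclideanSpace ℝ (Fin n)) (v : V) :
    ∑ j, fderiv ℝ (kerR c ρ) z (EuclideanSpace.single j 1) (c j v) = -(etaR n ρ z • v) := by
  rw [(kerR_hasFDerivAt c ρ hρ z).fderiv]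
  have hq : 0 < ρ ^ 2 + ‖z‖ ^ 2 := by positivity
  set q := ρ ^ 2 + ‖z‖ ^ 2 with hqd
  have h1 : q ^ (-(n:ℝ) / 2) = q ^ (-(n:ℝ) / 2 - 1) * q := by
    rw [← Real.rpow_add_one hq.ne']; congr 1; ring
  have : ∀ j : Fin n, (q ^ (-(n:ℝ) / 2) • clm c +
      ((-(n:ℝ) * q ^ (-(n:ℝ) / 2 - 1)) • innerSL ℝ z).smulRight (clm c z))
      (EuclideanSpace.single j 1) (c j v) = -(q ^ (-(n:ℝ) / 2) • v) +
      (-(n:ℝ) * q ^ (-(n:ℝ) / 2 - 1)) • clm c z (z j • c j v) := by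
    intro j
    simp only [_root_.add_apply, _root_.smul_apply, clm_single,
      ContinuousLinearMap.smulRight_apply, innerSL_apply_apply, hc.sq, smul_neg, map_smul]
    rw [EuclideanSpace.inner_single_right]
    simp [mul_smul]
  simp only [this, Finset.sum_add_distrib, ← Finset.smul_sum, ← map_sum, ← clm_apply2, hc.clm_sq]
  simp only [Finset.sum_const, Finset.card_univ, Fintype.card_fin, ← Nat.cast_smul_eq_nsmul ℝ,
    etaR, ← hqd]
  rw [h1]
  simp only [← neg_smul, smul_smul, ← add_smul]
  congr 1
  have : ‖z‖ ^ 2 = q - ρ ^ 2 := by rw [hqd]; ring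
  rw [this]; ring

end Kernel

section Rep
variable {n : ℕ} {V : Type*} [NormedAddCommGroup V] [InnerProductSpace ℝ V]
  [FiniteDimensional ℝ V]

lemma sing_integrableOn (hn : 0 < n) {s : ℝ} (hs : 0 < s) (R : ℝ) :
    IntegrableOn (fun z : EuclideanSpace ℝ (Fin n) => ‖z‖ ^ (s - n)) (ball 0 R) := by
  refine integrableOn_ball_of_norm_le_rpow (C := 1) (α := n - s) (by simpa using Nat.succ_le_of_lt hn)
    (by simpa using hs) (Eventually.of_forall fun x => ?_)
    (by apply Measurable.aestronglyMeasurable; fun_prop)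
  rw [Real.norm_of_nonneg (by positivity), one_mul, neg_sub]

lemma sing_translate (hn : 0 < n) {s : ℝ} (hs : 0 < s) (R : ℝ) (x : EuclideanSpace ℝ (Fin n)) :
    IntegrableOn (fun y : EuclideanSpace ℝ (Fin n) => ‖x - y‖ ^ (s - n)) (ball 0 R) ∧
    ∫ y in ball (0 : EuclideanSpace ℝ (Fin n)) R, ‖x - y‖ ^ (s - n) ≤
      ∫ z in ball (0 : EuclideanSpace ℝ (Fin n)) (R + ‖x‖), ‖z‖ ^ (s - n) := by
  have h1 := (integrable_indicator_iff (measurableSet_ball)).2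
    (sing_integrableOn hn hs (R + ‖x‖))
  have h2 := h1.comp_sub_left x
  have h3 : ∀ y ∈ ball (0 : EuclideanSpace ℝ (Fin n)) R,
      (ball (0 : EuclideanSpace ℝ (Fin n)) (R + ‖x‖)).indicator (fun z => ‖z‖ ^ (s - n)) (x - y) =
      ‖x - y‖ ^ (s - n) := by
    intro y hy
    rw [Set.indicator_of_mem]
    rw [mem_ball_zero_iff] at hy ⊢
    calc ‖x - y‖ ≤ ‖x‖ + ‖y‖ := norm_sub_le _ _
      _ < _ := by linarith
  refine ⟨(h2.integrableOn (s := ball 0 R)).congr_fun h3 measurableSet_ball, ?_⟩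
  rw [← setIntegral_congr_fun measurableSet_ball h3]
  refine (setIntegral_le_integral h2 (Eventually.of_forall fun y => ?_)).trans ?_
  · exact Set.indicator_nonneg (fun z _ => by positivity) _
  · rw [integral_sub_left_eq_self (fun z => (ball (0 : EuclideanSpace ℝ (Fin n))
      (R + ‖x‖)).indicator (fun z => ‖z‖ ^ (s - n)) z), integral_indicator measurableSet_ball]

lemma rdirac_continuous (c : Fin n → V →L[ℝ] V) {u : EuclideanSpace ℝ (Fin n) → V}
    (hu : ContDiff ℝ 1 u) : Continuous (rdirac c u) := by
  unfold rdirac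
  have := hu.continuous_fderiv one_ne_zero
  fun_prop

lemma rdirac_compact (c : Fin n → V →L[ℝ] V) {u : EuclideanSpace ℝ (Fin n) → V}
    (hu : HasCompactSupport u) : HasCompactSupport (rdirac c u) := by
  refine (hu.fderiv ℝ).mono ?_
  intro x hx h
  apply hx
  simp [rdirac, h]

lemma rep_reg {c : Fin n → V →L[ℝ] V} (hc : RCl c) {u : EuclideanSpace ℝ (Fin n) → V}
    (hu : ContDiff ℝ 1 u) (hcu : HasCompactSupport u) (ρ : ℝ) (hρ : 0 < ρ)
    (x : EuclideanSpace ℝ (Fin n)) :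
    ∫ y, kerR c ρ (x - y) (rdirac c u y) = -∫ y, etaR n ρ (x - y) • u y := by
  have hK := kerR_contDiff c ρ hρ
  have hK0 : Continuous (kerR c ρ) := hK.continuous
  have hK1 : Continuous (fderiv ℝ (kerR c ρ)) := hK.continuous_fderiv one_ne_zero
  have hu0 : Continuous u := hu.continuous
  have hu1 : Continuous (fderiv ℝ u) := hu.continuous_fderiv one_ne_zero
  have hf : ∀ y, HasFDerivAt (fun y => kerR c ρ (x - y))
      ((fderiv ℝ (kerR c ρ) (x - y)).comp (-ContinuousLinearMap.id ℝ _)) y := by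
    intro y
    have h1 := (hK.differentiable one_ne_zero (x - y)).hasFDerivAt
    have h2 : HasFDerivAt (fun y => x - y) (-ContinuousLinearMap.id ℝ (EuclideanSpace ℝ (Fin n))) y :=
      (hasFDerivAt_id y).const_sub x
    exact h1.comp y h2
  have i1 : ∀ j, Integrable fun y => kerR c ρ (x - y) (c j (fderiv ℝ u y (EuclideanSpace.single j 1))) := by
    intro j
    refine Continuous.integrable_of_hasCompactSupport (by fun_prop) ?_
    refine (hcu.fderiv ℝ).mono ?_
    intro y hy h
    apply hy
    simp [h]
  have i2 : ∀ j, Integrable fun y =>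
      fderiv ℝ (kerR c ρ) (x - y) (EuclideanSpace.single j 1) (c j (u y)) := by
    intro j
    refine Continuous.integrable_of_hasCompactSupport (by fun_prop) ?_
    refine hcu.mono ?_
    intro y hy h
    apply hy
    simp [h]
  have i3 : ∀ j, Integrable fun y => kerR c ρ (x - y) (c j (u y)) := by
    intro j
    refine Continuous.integrable_of_hasCompactSupport (by fun_prop) ?_
    refine hcu.mono ?_
    intro y hy h
    apply hy
    simp [h]
  have key : ∀ j, ∫ y, kerR c ρ (x - y) (c j (fderiv ℝ u y (EuclideanSpace.single j 1))) =
      ∫ y, fderiv ℝ (kerR c ρ) (x - y) (EuclideanSpace.single j 1) (c j (u y)) := by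
    intro j
    have := integral_bilinear_hasFDerivAt_right_eq_neg_left_of_integrable
      (μ := (volume : Measure (EuclideanSpace ℝ (Fin n))))
      (B := (ContinuousLinearMap.compL ℝ V V V).flip (c j)) (f := fun y => kerR c ρ (x - y))
      (f' := fun y => (fderiv ℝ (kerR c ρ) (x - y)).comp (-ContinuousLinearMap.id ℝ _))
      (g := u) (g' := fderiv ℝ u) (v := EuclideanSpace.single j 1)
      (by simpa using i2 j) (by simpa using i1 j) (by simpa using i3 j)
      (fun y _ => hf y) (fun y _ => (hu.differentiable one_ne_zero y).hasFDerivAt)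
    simpa [integral_neg] using this
  calc ∫ y, kerR c ρ (x - y) (rdirac c u y)
      = ∫ y, ∑ j, kerR c ρ (x - y) (c j (fderiv ℝ u y (EuclideanSpace.single j 1))) := by
        simp only [rdirac, map_sum]
    _ = ∫ y, ∑ j, fderiv ℝ (kerR c ρ) (x - y) (EuclideanSpace.single j 1) (c j (u y)) := by
        rw [integral_finsetSum _ (fun j _ => i1 j), integral_finsetSum _ (fun j _ => i2 j)]
        exact Finset.sum_congr rfl fun j _ => key j
    _ = _ := by
        simp only [kerR_div hc ρ hρ, integral_neg]

lemma eta_integrable : Integrable (etaR n 1) := by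
  have h := integrable_rpow_neg_one_add_norm_sq (E := EuclideanSpace ℝ (Fin n)) (μ := volume)
    (r := n + 2) (by simp)
  have h2 := h.const_mul (n:ℝ)
  refine h2.congr (Eventually.of_forall fun z => ?_)
  simp only [etaR, one_pow, mul_one]
  congr 2; ring

lemma eta_pos (hn : 0 < n) : 0 < ∫ z, etaR n 1 z := by
  have hpos : ∀ z, 0 < etaR n 1 z := fun z => by
    have : (0:ℝ) < n := by exact_mod_cast hn
    unfold etaR; positivity
  rw [integral_pos_iff_support_of_nonneg (fun z => (hpos z).le) eta_integrable]
  have : Function.support (etaR n 1) = Set.univ := by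
    ext z; simp [(hpos z).ne']
  rw [this]
  exact isOpen_univ.measure_pos _ Set.univ_nonempty

lemma eta_scale {u : EuclideanSpace ℝ (Fin n) → V} (ρ : ℝ) (hρ : 0 < ρ)
    (x : EuclideanSpace ℝ (Fin n)) :
    ∫ y, etaR n ρ (x - y) • u y = ∫ z, etaR n 1 z • u (x - ρ • z) := by
  have h1 : ∫ y, etaR n ρ (x - y) • u y = ∫ z, etaR n ρ z • u (x - z) := by
    rw [← integral_sub_left_eq_self (fun z => etaR n ρ z • u (x - z)) volume x]
    simp
  have h2 := Measure.integral_comp_smul_of_nonneg (volume : Measure (EuclideanSpace ℝ (Fin n)))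
    (fun z => etaR n ρ z • u (x - z)) ρ (hR := hρ.le)
  rw [h1]
  have h3 : ∫ z, etaR n ρ z • u (x - z) = ρ ^ n • ∫ z, etaR n ρ (ρ • z) • u (x - ρ • z) := by
    rw [h2, smul_smul]
    simp [hρ.ne']
  rw [h3, ← integral_smul]
  congr 1; ext1 z
  rw [smul_smul]
  congr 1
  unfold etaR
  have h4 : ρ ^ 2 + ‖ρ • z‖ ^ 2 = ρ ^ 2 * (1 ^ 2 + ‖z‖ ^ 2) := by
    rw [norm_smul, Real.norm_of_nonneg hρ.le]; ring
  have h5 : (ρ ^ 2) ^ (-(n:ℝ) / 2 - 1) = (ρ ^ (n + 2))⁻¹ := by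
    rw [← Real.rpow_natCast, ← Real.rpow_mul hρ.le, ← Real.rpow_natCast, ← Real.rpow_neg hρ.le]
    congr 1; push_cast; ring
  rw [h4, Real.mul_rpow (by positivity) (by positivity), h5]
  field_simp
  ring

lemma rep_formula (hn : 0 < n) {c : Fin n → V →L[ℝ] V} (hc : RCl c)
    {u : EuclideanSpace ℝ (Fin n) → V}
    (hu : ContDiff ℝ 1 u) (hcu : HasCompactSupport u) (x : EuclideanSpace ℝ (Fin n)) :
    Integrable (fun y => dker c (x - y) (rdirac c u y)) ∧
    u x = (-(∫ z, etaR n 1 z)⁻¹) • ∫ y, dker c (x - y) (rdirac c u y) := by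
  have hg := rdirac_continuous c hu
  have hgc := rdirac_compact c hcu
  obtain ⟨M, hM⟩ := hgc.exists_bound_of_continuous hg
  obtain ⟨R, hR⟩ := hgc.isCompact.isBounded.subset_ball (0 : EuclideanSpace ℝ (Fin n))
  have hM0 : 0 ≤ M := (norm_nonneg _).trans (hM 0)
  have hzero : ∀ y ∉ ball (0 : EuclideanSpace ℝ (Fin n)) R, rdirac c u y = 0 := fun y hy =>
    image_eq_zero_of_notMem_tsupport (fun h => hy (hR h))
  have hdom : Integrable (fun y => (ball (0 : EuclideanSpace ℝ (Fin n)) R).indicator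
      (fun y => ‖clm c‖ * M * ‖x - y‖ ^ ((1:ℝ) - n)) y) := by
    rw [integrable_indicator_iff measurableSet_ball]
    exact (sing_translate hn one_pos R x).1.const_mul _
  have hbd : ∀ (T : V →L[ℝ] V) y, ‖T‖ ≤ ‖clm c‖ * ‖x - y‖ ^ ((1:ℝ) - n) →
      ‖T (rdirac c u y)‖ ≤ (ball (0 : EuclideanSpace ℝ (Fin n)) R).indicator
      (fun y => ‖clm c‖ * M * ‖x - y‖ ^ ((1:ℝ) - n)) y := by
    intro T y hT
    by_cases hy : y ∈ ball (0 : EuclideanSpace ℝ (Fin n)) R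
    · rw [Set.indicator_of_mem hy]
      calc _ ≤ ‖T‖ * ‖rdirac c u y‖ := T.le_opNorm _
        _ ≤ (‖clm c‖ * ‖x - y‖ ^ ((1:ℝ) - n)) * M := by
            gcongr
            exact hM y
        _ = _ := by ring
    · rw [Set.indicator_of_notMem hy, hzero y hy]; simp
  have hmeas : AEStronglyMeasurable (fun y => dker c (x - y) (rdirac c u y)) := by
    have : Measurable (fun z : EuclideanSpace ℝ (Fin n) => ‖z‖ ^ (-(n:ℝ))) := by fun_prop
    have h2 : AEStronglyMeasurable (fun y : EuclideanSpace ℝ (Fin n) => ‖x - y‖ ^ (-(n:ℝ))) :=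
      (this.comp (by fun_prop : Measurable fun y => x - y)).aestronglyMeasurable
    unfold dker
    simp only [_root_.smul_apply]
    refine h2.smul (Continuous.aestronglyMeasurable ?_)
    have := (clm c).continuous
    fun_prop
  have hintg : Integrable (fun y => dker c (x - y) (rdirac c u y)) :=
    hdom.mono' hmeas (Eventually.of_forall fun y => hbd _ y (dker_norm_le c _))
  refine ⟨hintg, ?_⟩
  have hρ : Tendsto (fun k : ℕ => (1:ℝ) / (k + 1)) atTop (nhds 0) :=
    tendsto_one_div_add_atTop_nhds_zero_nat
  have hρ0 : ∀ k : ℕ, (0:ℝ) < 1 / (k + 1) := fun k => by positivity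
  have L1 : Tendsto (fun k : ℕ => ∫ y, kerR c (1 / (k + 1)) (x - y) (rdirac c u y)) atTop
      (nhds (∫ y, dker c (x - y) (rdirac c u y))) := by
    refine tendsto_integral_of_dominated_convergence _ (fun k => ?_) hdom
      (fun k => Eventually.of_forall fun y => hbd _ y (kerR_norm_le c _ _)) ?_
    · have := (kerR_contDiff c _ (hρ0 k)).continuous
      exact Continuous.aestronglyMeasurable (by fun_prop)
    · refine Eventually.of_forall fun y => ?_
      by_cases hxy : x - y = 0
      · simp [hxy, kerR, dker]
      · have hp : 0 < ‖x - y‖ := norm_pos_iff.2 hxy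
        have e1 : dker c (x - y) (rdirac c u y) =
            ((0:ℝ) ^ 2 + ‖x - y‖ ^ 2) ^ (-(n:ℝ) / 2) • clm c (x - y) (rdirac c u y) := by
          simp only [dker, _root_.smul_apply]
          congr 1
          rw [← Real.rpow_natCast ‖x - y‖, zero_pow two_ne_zero, zero_add, ← Real.rpow_mul hp.le]
          congr 1; push_cast; ring
        rw [e1]
        simp only [kerR, _root_.smul_apply]
        refine Tendsto.smul_const ?_ _
        refine Tendsto.rpow_const ?_ (Or.inl (by positivity))
        exact (hρ.pow 2).add_const _
  obtain ⟨Mu, hMu⟩ := hcu.exists_bound_of_continuous hu.continuous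
  have L2 : Tendsto (fun k : ℕ => ∫ z, etaR n 1 z • u (x - (1 / ((k:ℝ) + 1)) • z)) atTop
      (nhds (∫ z, etaR n 1 z • u x)) := by
    refine tendsto_integral_of_dominated_convergence (fun z => ‖etaR n 1 z‖ * Mu) (fun k => ?_)
      (eta_integrable.norm.mul_const _) (fun k => Eventually.of_forall fun z => ?_) ?_
    · refine eta_integrable.1.smul (Continuous.aestronglyMeasurable ?_)
      have := hu.continuous
      fun_prop
    · rw [norm_smul]
      gcongr
      exact hMu _
    · refine Eventually.of_forall fun z => ?_
      refine Tendsto.const_smul ?_ _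
      have h1 : Tendsto (fun k : ℕ => x - (1 / ((k:ℝ) + 1)) • z) atTop (nhds (x - (0:ℝ) • z)) :=
        tendsto_const_nhds.sub (hρ.smul_const z)
      rw [zero_smul, sub_zero] at h1
      exact (hu.continuous.tendsto x).comp h1
  have L3 : (fun k : ℕ => ∫ y, kerR c (1 / (k + 1)) (x - y) (rdirac c u y)) =
      fun k : ℕ => -∫ z, etaR n 1 z • u (x - (1 / ((k:ℝ) + 1)) • z) := by
    ext1 k
    rw [rep_reg hc hu hcu _ (hρ0 k), eta_scale _ (hρ0 k)]
  rw [L3] at L1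
  have := tendsto_nhds_unique L1 L2.neg
  rw [this, integral_smul_const, neg_smul, smul_neg, neg_neg, smul_smul,
    inv_mul_cancel₀ (eta_pos hn).ne', one_smul]

end Rep

section Bers
variable {n : ℕ} {V : Type*} [NormedAddCommGroup V] [InnerProductSpace ℝ V]
  [FiniteDimensional ℝ V]

/-- multilinear coefficient of the expansion -/
def mcoef (c : Fin n → V →L[ℝ] V) (g : EuclideanSpace ℝ (Fin n) → V) (k : ℕ)
    (v : Fin k → EuclideanSpace ℝ (Fin n)) : V :=
  (k.factorial : ℝ)⁻¹ • ∫ y, iteratedFDeriv ℝ k (dker c) (-y) v (g y)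

lemma mcoef_integrable (hn : 0 < n) (c : Fin n → V →L[ℝ] V) (g : EuclideanSpace ℝ (Fin n) → V)
    (hg : Continuous g) {K β : ℝ} (hβ : 0 < β)
    (hgb : ∀ y, ‖g y‖ ≤ K * ‖y‖ ^ β) (hg1 : ∀ y ∉ ball (0 : EuclideanSpace ℝ (Fin n)) 1, g y = 0)
    (k : ℕ) (hk : (k:ℝ) < β + 1) (v : Fin k → EuclideanSpace ℝ (Fin n)) :
    Integrable (fun y => iteratedFDeriv ℝ k (dker c) (-y) v (g y)) := by
  have hg0 : g 0 = 0 := by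
    have := hgb 0
    rw [norm_zero, Real.zero_rpow hβ.ne', mul_zero] at this
    simpa using this
  obtain ⟨B, hB0, hB⟩ := homog_iter_bound (dker c) (dker_contDiffAt c) ((n:ℝ) - 1) (dker_homog c) k
  have hmeas : AEStronglyMeasurable (fun y => iteratedFDeriv ℝ k (dker c) (-y) v (g y)) := by
    have h0 : (fun y => iteratedFDeriv ℝ k (dker c) (-y) v (g y)) =
        ({0}ᶜ : Set (EuclideanSpace ℝ (Fin n))).indicator
          (fun y => iteratedFDeriv ℝ k (dker c) (-y) v (g y)) := by
      ext1 y
      by_cases hy : y = 0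
      · rw [Set.indicator_of_notMem (by simp [hy]), hy, hg0, map_zero]
      · rw [Set.indicator_of_mem (by simp [hy])]
    rw [h0, aestronglyMeasurable_indicator_iff (measurableSet_singleton 0).compl]
    refine ContinuousOn.aestronglyMeasurable ?_ (measurableSet_singleton 0).compl
    intro y hy
    have hy' : -y ≠ 0 := by simpa using hy
    have h1 : ContinuousAt (fun z => iteratedFDeriv ℝ k (dker c) z) (-y) :=
      ((dker_contDiffAt c (-y) hy' k).iteratedFDeriv_right (i := k) (m := 0) (by simp)).continuousAt
    have h2 : ContinuousAt (fun y => iteratedFDeriv ℝ k (dker c) (-y)) y :=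
      ContinuousAt.comp (f := fun y : EuclideanSpace ℝ (Fin n) => -y) h1 continuous_neg.continuousAt
    have h3 : ContinuousAt (fun y => iteratedFDeriv ℝ k (dker c) (-y) v) y :=
      h2.eval_const v
    exact (h3.clm_apply hg.continuousAt).continuousWithinAt
  have hdom : Integrable ((ball (0 : EuclideanSpace ℝ (Fin n)) 1).indicator
      (fun y => (B * (∏ i, ‖v i‖) * K) * ‖y‖ ^ ((β + 1 - k) - n))) := by
    rw [integrable_indicator_iff measurableSet_ball]
    exact (sing_integrableOn hn (by linarith) 1).const_mul _
  refine hdom.mono' hmeas (Eventually.of_forall fun y => ?_)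
  by_cases hy : y ∈ ball (0 : EuclideanSpace ℝ (Fin n)) 1
  · rw [Set.indicator_of_mem hy]
    by_cases hy0 : y = 0
    · rw [hy0, hg0, map_zero, norm_zero]
      have hK : 0 ≤ K := by
        have := hgb (EuclideanSpace.single ⟨0, hn⟩ 1)
        simp at this
        exact (norm_nonneg _).trans this
      positivity
    have hyp : 0 < ‖y‖ := norm_pos_iff.2 hy0
    have q0 := hB (-y) (by simpa using hy0)
    rw [norm_neg] at q0
    have hprod : 0 ≤ ∏ i, ‖v i‖ := Finset.prod_nonneg fun i _ => norm_nonneg _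
    have q1 : ‖iteratedFDeriv ℝ k (dker c) (-y) v‖ ≤
        (B * ‖y‖ ^ (-((n:ℝ) - 1) - k)) * ∏ i, ‖v i‖ :=
      (ContinuousMultilinearMap.le_opNorm _ _).trans (mul_le_mul_of_nonneg_right q0 hprod)
    refine le_trans (ContinuousLinearMap.le_opNorm _ _) ?_
    refine le_trans (mul_le_mul q1 (hgb y) (norm_nonneg _) ((norm_nonneg _).trans q1)) ?_
    refine le_of_eq ?_
    calc _ = (B * (∏ i, ‖v i‖) * K) * (‖y‖ ^ (-((n:ℝ) - 1) - k) * ‖y‖ ^ β) := by ring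
      _ = _ := by
          rw [← Real.rpow_add hyp]; congr 2; ring
  · rw [Set.indicator_of_notMem hy, hg1 y hy, map_zero, norm_zero]

lemma bers_pointwise (c : Fin n → V →L[ℝ] V) {β γ : ℝ} (hn : 0 < n)
    (hβ : 0 < β) (m : ℕ) (h1 : (m:ℝ) ≤ γ) (h2 : γ ≤ m + 1) (h3 : β ≤ γ) :
    ∃ C : ℝ, 0 ≤ C ∧ ∀ x y : EuclideanSpace ℝ (Fin n), x ≠ 0 → y ≠ 0 →
      ‖dker c (x - y) - ∑ k ∈ Finset.range (m + 1),
        (k.factorial : ℝ)⁻¹ • iteratedFDeriv ℝ k (dker c) (-y) (fun _ => x)‖ * ‖y‖ ^ β ≤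
      C * ‖x‖ ^ γ * (‖y‖ ^ ((1 + β - γ) - n) + ‖x - y‖ ^ ((1 + β - γ) - n)) := by
  have hn1 : (1:ℝ) ≤ n := by exact_mod_cast hn
  obtain ⟨CT, hCT0, hCT⟩ := homog_taylor (dker c) (dker_contDiffAt c) ((n:ℝ) - 1) (dker_homog c)
    (by linarith) m
  choose B hB0 hB using fun k => homog_iter_bound (dker c) (dker_contDiffAt c) ((n:ℝ) - 1)
    (dker_homog c) k
  set S := ∑ k ∈ Finset.range (m + 1), B k * 2 ^ (γ - k) with hS
  have hS0 : 0 ≤ S := Finset.sum_nonneg fun k _ => mul_nonneg (hB0 k) (by positivity)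
  set A := ‖clm c‖ * (2 ^ β * 3 ^ (γ - β)) with hA
  have hA0 : 0 ≤ A := by positivity
  refine ⟨CT + A + S, by positivity, fun x y hx hy => ?_⟩
  have hxp : 0 < ‖x‖ := norm_pos_iff.2 hx
  have hyp : 0 < ‖y‖ := norm_pos_iff.2 hy
  set a := ‖y‖ ^ ((1 + β - γ) - n) with ha
  set b := ‖x - y‖ ^ ((1 + β - γ) - n) with hb
  have ha0 : 0 ≤ a := by positivity
  have hb0 : 0 ≤ b := by positivity
  have hxg : 0 ≤ ‖x‖ ^ γ := by positivity
  rcases le_or_gt ‖x‖ (‖y‖ / 2) with hle | hlt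
  · have hT := hCT (-y) x (by simpa using hy) (by simpa using hle)
    rw [neg_add_eq_sub, norm_neg] at hT
    calc _ ≤ (CT * ‖x‖ ^ (m + 1) * ‖y‖ ^ (-((n:ℝ) - 1) - (m + 1 : ℕ))) * ‖y‖ ^ β := by gcongr
      _ ≤ (CT * (‖x‖ ^ γ * ‖y‖ ^ ((m:ℝ) + 1 - γ)) * ‖y‖ ^ (-((n:ℝ) - 1) - (m + 1 : ℕ))) * ‖y‖ ^ β := by
          gcongr
          calc ‖x‖ ^ (m + 1) = ‖x‖ ^ γ * ‖x‖ ^ ((m:ℝ) + 1 - γ) := by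
                rw [← Real.rpow_add hxp, ← Real.rpow_natCast]; congr 1; push_cast; ring
            _ ≤ _ := by
                gcongr
                linarith
      _ = CT * ‖x‖ ^ γ * (‖y‖ ^ ((m:ℝ) + 1 - γ) * ‖y‖ ^ (-((n:ℝ) - 1) - (m + 1 : ℕ)) * ‖y‖ ^ β) := by
          ring
      _ = CT * ‖x‖ ^ γ * a := by
          rw [← Real.rpow_add hyp, ← Real.rpow_add hyp, ha]; congr 2; push_cast; ring
      _ ≤ _ := by
          nlinarith [mul_nonneg (mul_nonneg (add_nonneg hA0 hS0) hxg) (add_nonneg ha0 hb0),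
            mul_nonneg (mul_nonneg hCT0 hxg) hb0]
  · have hy2 : ‖y‖ ≤ 2 * ‖x‖ := by linarith
    have p1 : ‖dker c (x - y)‖ * ‖y‖ ^ β ≤ A * ‖x‖ ^ γ * b := by
      by_cases hxy : x - y = 0
      · rw [hxy]
        have : dker c (0 : EuclideanSpace ℝ (Fin n)) = 0 := by simp [dker]
        rw [this, norm_zero, zero_mul]; positivity
      have hxyp : 0 < ‖x - y‖ := norm_pos_iff.2 hxy
      have hxy3 : ‖x - y‖ ≤ 3 * ‖x‖ := by linarith [norm_sub_le x y]
      calc _ ≤ (‖clm c‖ * ‖x - y‖ ^ (1 - (n:ℝ))) * (2 * ‖x‖) ^ β := by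
            gcongr
            exact dker_norm_le c _
        _ = (‖clm c‖ * (b * ‖x - y‖ ^ (γ - β))) * (2 * ‖x‖) ^ β := by
            rw [hb, ← Real.rpow_add hxyp]; congr 3; ring
        _ ≤ (‖clm c‖ * (b * (3 * ‖x‖) ^ (γ - β))) * (2 * ‖x‖) ^ β := by
            gcongr
        _ = A * (‖x‖ ^ (γ - β) * ‖x‖ ^ β) * b := by
            rw [Real.mul_rpow (by norm_num) hxp.le, Real.mul_rpow (by norm_num) hxp.le, hA]; ring
        _ = _ := by rw [← Real.rpow_add hxp]; congr 3; ring
    have p2 : ∀ k ∈ Finset.range (m + 1), ‖(k.factorial : ℝ)⁻¹ •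
        iteratedFDeriv ℝ k (dker c) (-y) (fun _ => x)‖ * ‖y‖ ^ β ≤
        (B k * 2 ^ (γ - k)) * (‖x‖ ^ γ * a) := by
      intro k hk
      have hkm : (k:ℝ) ≤ m := by exact_mod_cast Nat.lt_succ_iff.1 (Finset.mem_range.1 hk)
      have hfac : ‖((k.factorial : ℝ))⁻¹‖ ≤ 1 := by
        rw [norm_inv, Real.norm_natCast]
        exact inv_le_one_of_one_le₀
          (by exact_mod_cast Nat.one_le_iff_ne_zero.2 (Nat.factorial_ne_zero k))
      have q1 : ‖iteratedFDeriv ℝ k (dker c) (-y) (fun _ => x)‖ ≤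
          (B k * ‖y‖ ^ (-((n:ℝ) - 1) - k)) * ‖x‖ ^ k := by
        have := ContinuousMultilinearMap.le_opNorm (iteratedFDeriv ℝ k (dker c) (-y)) (fun _ => x)
        simp only [Finset.prod_const, Finset.card_univ, Fintype.card_fin] at this
        refine this.trans ?_
        gcongr
        simpa using hB k (-y) (by simpa using hy)
      have hBk := hB0 k
      calc _ ≤ (1 * ((B k * ‖y‖ ^ (-((n:ℝ) - 1) - k)) * ‖x‖ ^ k)) * ‖y‖ ^ β := by
            gcongr
            rw [norm_smul]
            gcongr
        _ = B k * ‖x‖ ^ (k:ℝ) * (‖y‖ ^ (-((n:ℝ) - 1) - k) * ‖y‖ ^ β) := by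
            rw [Real.rpow_natCast]; ring
        _ = B k * ‖x‖ ^ (k:ℝ) * (a * ‖y‖ ^ (γ - k)) := by
            rw [ha, ← Real.rpow_add hyp, ← Real.rpow_add hyp]; congr 2; ring
        _ ≤ B k * ‖x‖ ^ (k:ℝ) * (a * (2 * ‖x‖) ^ (γ - k)) := by
            gcongr
            linarith
        _ = (B k * 2 ^ (γ - k)) * ((‖x‖ ^ (k:ℝ) * ‖x‖ ^ (γ - k)) * a) := by
            rw [Real.mul_rpow (by norm_num) hxp.le]; ring
        _ = _ := by
            rw [← Real.rpow_add hxp]; congr 4; ring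
    calc _ ≤ (‖dker c (x - y)‖ + ∑ k ∈ Finset.range (m + 1), ‖(k.factorial : ℝ)⁻¹ •
          iteratedFDeriv ℝ k (dker c) (-y) (fun _ => x)‖) * ‖y‖ ^ β := by
          gcongr
          refine (norm_sub_le _ _).trans ?_
          gcongr
          exact norm_sum_le _ _
      _ ≤ A * ‖x‖ ^ γ * b + S * (‖x‖ ^ γ * a) := by
          rw [add_mul, Finset.sum_mul, hS, Finset.sum_mul]
          exact add_le_add p1 (Finset.sum_le_sum p2)
      _ ≤ _ := by
          have : A * ‖x‖ ^ γ * b + S * (‖x‖ ^ γ * a) + (CT * ‖x‖ ^ γ * (a + b) +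
            A * (‖x‖ ^ γ * a) + S * (‖x‖ ^ γ * b)) = (CT + A + S) * ‖x‖ ^ γ * (a + b) := by ring
          rw [← this]
          have : 0 ≤ CT * ‖x‖ ^ γ * (a + b) + A * (‖x‖ ^ γ * a) + S * (‖x‖ ^ γ * b) := by positivity
          linarith

lemma bers (hn : 0 < n) (c : Fin n → V →L[ℝ] V) (g : EuclideanSpace ℝ (Fin n) → V)
    (hg : Continuous g) {K β γ : ℝ} (hβ : 0 < β) (m : ℕ) (h1 : (m:ℝ) ≤ γ) (h2 : γ ≤ m + 1)
    (h3 : β ≤ γ) (h4 : γ < β + 1)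
    (hgb : ∀ y, ‖g y‖ ≤ K * ‖y‖ ^ β) (hg1 : ∀ y ∉ ball (0 : EuclideanSpace ℝ (Fin n)) 1, g y = 0)
    (hintg : ∀ x, Integrable (fun y => dker c (x - y) (g y))) :
    ∃ C : ℝ, ∀ x : EuclideanSpace ℝ (Fin n), x ≠ 0 → ‖x‖ ≤ 1 →
      ‖(∫ y, dker c (x - y) (g y)) - ∑ k ∈ Finset.range (m + 1), mcoef c g k (fun _ => x)‖ ≤
        C * ‖x‖ ^ γ := by
  obtain ⟨C, hC0, hC⟩ := bers_pointwise c hn hβ m h1 h2 h3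
  have hK : 0 ≤ K := by
    have := hgb (EuclideanSpace.single ⟨0, hn⟩ 1)
    simp at this
    exact (norm_nonneg _).trans this
  have hg0 : g 0 = 0 := by
    have := hgb 0
    rw [norm_zero, Real.zero_rpow hβ.ne', mul_zero] at this
    simpa using this
  have hε : 0 < 1 + β - γ := by linarith
  set I := ∫ z in ball (0 : EuclideanSpace ℝ (Fin n)) 1, ‖z‖ ^ ((1 + β - γ) - n)
  set I2 := ∫ z in ball (0 : EuclideanSpace ℝ (Fin n)) 2, ‖z‖ ^ ((1 + β - γ) - n)
  refine ⟨K * C * (I + I2), fun x hx hx1 => ?_⟩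
  have hi : ∀ k ∈ Finset.range (m + 1), Integrable (fun y => (k.factorial : ℝ)⁻¹ •
      iteratedFDeriv ℝ k (dker c) (-y) (fun _ => x) (g y)) := by
    intro k hk
    have hkm : (k:ℝ) ≤ m := by exact_mod_cast Nat.lt_succ_iff.1 (Finset.mem_range.1 hk)
    exact (mcoef_integrable hn c g hg hβ hgb hg1 k (by linarith) _).smul _
  have e1 : (∫ y, dker c (x - y) (g y)) - ∑ k ∈ Finset.range (m + 1), mcoef c g k (fun _ => x) =
      ∫ y, (dker c (x - y) - ∑ k ∈ Finset.range (m + 1),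
        (k.factorial : ℝ)⁻¹ • iteratedFDeriv ℝ k (dker c) (-y) (fun _ => x)) (g y) := by
    simp only [mcoef, ← integral_smul]
    rw [← integral_finsetSum _ hi, ← integral_sub (hintg x) (integrable_finsetSum _ hi)]
    congr 1; ext1 y
    simp
  rw [e1]
  have s1 := sing_integrableOn hn hε 1
  have s2 := sing_translate hn hε 1 x
  have hI2 : ∫ y in ball (0 : EuclideanSpace ℝ (Fin n)) 1, ‖x - y‖ ^ ((1 + β - γ) - n) ≤ I2 := by
    refine s2.2.trans ?_
    refine setIntegral_mono_set (sing_integrableOn hn hε 2)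
      (Eventually.of_forall fun z => by positivity) ?_
    exact HasSubset.Subset.eventuallyLE (ball_subset_ball (by linarith))
  have hdom : Integrable ((ball (0 : EuclideanSpace ℝ (Fin n)) 1).indicator fun y =>
      K * C * ‖x‖ ^ γ * (‖y‖ ^ ((1 + β - γ) - n) + ‖x - y‖ ^ ((1 + β - γ) - n))) := by
    rw [integrable_indicator_iff measurableSet_ball]
    exact (s1.add s2.1).const_mul _
  refine (norm_integral_le_of_norm_le hdom (Eventually.of_forall fun y => ?_)).trans ?_
  · by_cases hy : y ∈ ball (0 : EuclideanSpace ℝ (Fin n)) 1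
    · rw [Set.indicator_of_mem hy]
      by_cases hy0 : y = 0
      · rw [hy0, hg0, map_zero, norm_zero]; positivity
      · have hyb := hgb y
        calc _ ≤ _ := ContinuousLinearMap.le_opNorm _ _
          _ ≤ ‖dker c (x - y) - ∑ k ∈ Finset.range (m + 1),
            (k.factorial : ℝ)⁻¹ • iteratedFDeriv ℝ k (dker c) (-y) (fun _ => x)‖ *
              (K * ‖y‖ ^ β) := by gcongr
          _ = K * (‖dker c (x - y) - ∑ k ∈ Finset.range (m + 1),
            (k.factorial : ℝ)⁻¹ • iteratedFDeriv ℝ k (dker c) (-y) (fun _ => x)‖ *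
              ‖y‖ ^ β) := by ring
          _ ≤ K * (C * ‖x‖ ^ γ * (‖y‖ ^ ((1 + β - γ) - n) + ‖x - y‖ ^ ((1 + β - γ) - n))) := by
              exact mul_le_mul_of_nonneg_left (hC x y hx hy0) hK
          _ = _ := by ring
    · rw [Set.indicator_of_notMem hy, hg1 y hy, map_zero, norm_zero]
  · rw [integral_indicator measurableSet_ball, integral_const_mul, integral_add s1 s2.1]
    calc _ ≤ K * C * ‖x‖ ^ γ * (I + I2) := by gcongr
      _ = _ := by ring

end Bers

section Expand
variable {n : ℕ} {V : Type*} [NormedAddCommGroup V] [InnerProductSpace ℝ V]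
  [FiniteDimensional ℝ V]

lemma rdirac_smul (c : Fin n → V →L[ℝ] V) {f : EuclideanSpace ℝ (Fin n) → ℝ}
    {u : EuclideanSpace ℝ (Fin n) → V} {x : EuclideanSpace ℝ (Fin n)}
    (hf : DifferentiableAt ℝ f x) (hu : DifferentiableAt ℝ u x) :
    rdirac c (fun y => f y • u y) x = f x • rdirac c u x +
      ∑ j, (fderiv ℝ f x (EuclideanSpace.single j 1)) • c j (u x) := by
  simp only [rdirac, fderiv_fun_smul hf hu, Finset.smul_sum, ← Finset.sum_add_distrib]
  refine Finset.sum_congr rfl fun j _ => ?_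
  simp [_root_.add_apply, _root_.smul_apply]

lemma rdirac_smul_rest (c : Fin n → V →L[ℝ] V) (L : EuclideanSpace ℝ (Fin n) →L[ℝ] ℝ) (v : V) :
    ‖∑ j, (L (EuclideanSpace.single j 1)) • c j v‖ ≤ (∑ j, ‖c j‖) * (‖L‖ * ‖v‖) := by
  rw [Finset.sum_mul]
  refine norm_sum_le_of_le _ fun j _ => ?_
  rw [norm_smul]
  have h1 : ‖L (EuclideanSpace.single j 1)‖ ≤ ‖L‖ := by
    refine (L.le_opNorm _).trans ?_
    simp
  have h2 := (c j).le_opNorm v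
  calc _ ≤ ‖L‖ * (‖c j‖ * ‖v‖) := by gcongr
    _ = _ := by ring

/-- the standard cutoff -/
def bmp (n : ℕ) : ContDiffBump (0 : EuclideanSpace ℝ (Fin n)) := ⟨1/2, 3/4, by norm_num, by norm_num⟩

/-- cut off spinor -/
def cutu (ψ : EuclideanSpace ℝ (Fin n) → V) (x : EuclideanSpace ℝ (Fin n)) : V := bmp n x • ψ x

lemma bmp_zero {x : EuclideanSpace ℝ (Fin n)} (h : 3/4 ≤ ‖x‖) : bmp n x = 0 := by
  apply ContDiffBump.zero_of_le_dist
  simpa [bmp] using h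

lemma smul_supp_contDiff {f : EuclideanSpace ℝ (Fin n) → ℝ} {ψ : EuclideanSpace ℝ (Fin n) → V}
    {U : Set (EuclideanSpace ℝ (Fin n))} (hU : IsOpen U)
    (hf : ContDiff ℝ 1 f) (hψ : ContDiffOn ℝ 1 ψ U) (hs : tsupport f ⊆ U) :
    ContDiff ℝ 1 (fun x => f x • ψ x) := by
  rw [contDiff_iff_contDiffAt]
  intro x
  by_cases hx : x ∈ U
  · have h1 : ContDiffAt ℝ 1 ψ x := hψ.contDiffAt (hU.mem_nhds hx)
    have h2 : ContDiffAt ℝ 1 f x := hf.contDiffAt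
    exact h2.smul h1
  · have h3 : x ∉ tsupport f := fun h => hx (hs h)
    have h4 : (fun x => f x • ψ x) =ᶠ[nhds x] fun _ => 0 := by
      filter_upwards [(isClosed_tsupport f).isOpen_compl.mem_nhds h3] with y hy
      rw [image_eq_zero_of_notMem_tsupport hy, zero_smul]
    exact contDiffAt_const.congr_of_eventuallyEq h4

lemma bmp_tsupport : tsupport (bmp n) ⊆ ball (0 : EuclideanSpace ℝ (Fin n)) 1 := by
  rw [ContDiffBump.tsupport_eq]
  exact closedBall_subset_ball (by norm_num [bmp])

lemma cutu_contDiff {ψ : EuclideanSpace ℝ (Fin n) → V} (hψ : ContDiffOn ℝ 1 ψ (ball 0 1)) :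
    ContDiff ℝ 1 (cutu ψ) :=
  smul_supp_contDiff isOpen_ball (bmp n).contDiff hψ bmp_tsupport

lemma cutu_compact (ψ : EuclideanSpace ℝ (Fin n) → V) : HasCompactSupport (cutu ψ) :=
  (bmp n).hasCompactSupport.smul_right

lemma cutu_eq (ψ : EuclideanSpace ℝ (Fin n) → V) {x : EuclideanSpace ℝ (Fin n)} (hx : ‖x‖ ≤ 1/2) :
    cutu ψ x = ψ x := by
  rw [cutu, ContDiffBump.one_of_mem_closedBall, one_smul]
  simpa [bmp] using hx

lemma cutu_bound (c : Fin n → V →L[ℝ] V) {ψ : EuclideanSpace ℝ (Fin n) → V}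
    (hψ : ContDiffOn ℝ 1 ψ (ball 0 1)) {C' : ℝ}
    (hD : ∀ x ∈ ball (0 : EuclideanSpace ℝ (Fin n)) 1, ‖rdirac c ψ x‖ ≤ C' * ‖ψ x‖) :
    ∃ A, 0 ≤ A ∧ (∀ x ∈ ball (0 : EuclideanSpace ℝ (Fin n)) 1,
      ‖rdirac c (cutu ψ) x‖ ≤ A * ‖ψ x‖) ∧
      ∀ x ∉ ball (0 : EuclideanSpace ℝ (Fin n)) 1, rdirac c (cutu ψ) x = 0 := by
  have hb1 : ContDiff ℝ 1 (bmp n) := (bmp n).contDiff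
  obtain ⟨M, hM⟩ := (hb1.continuous_fderiv one_ne_zero).bounded_above_of_compact_support
    ((bmp n).hasCompactSupport.fderiv ℝ)
  have hM0 : 0 ≤ M := (norm_nonneg _).trans (hM 0)
  refine ⟨|C'| + (∑ j, ‖c j‖) * M, by positivity, fun x hx => ?_, fun x hx => ?_⟩
  · have hd : DifferentiableAt ℝ ψ x :=
      (hψ.contDiffAt (isOpen_ball.mem_nhds hx)).differentiableAt one_ne_zero
    unfold cutu
    rw [rdirac_smul c (hb1.differentiable one_ne_zero x) hd]
    refine (norm_add_le _ _).trans ?_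
    rw [add_mul]
    refine add_le_add ?_ ?_
    · rw [norm_smul]
      have h1 : ‖bmp n x‖ ≤ 1 := by
        rw [Real.norm_of_nonneg (bmp n).nonneg]; exact (bmp n).le_one
      calc _ ≤ 1 * (C' * ‖ψ x‖) := by
            gcongr
            exact hD x hx
        _ ≤ _ := by
            rw [one_mul]; gcongr; exact le_abs_self _
    · refine (rdirac_smul_rest c _ _).trans ?_
      rw [mul_assoc]
      have := hM x
      gcongr
  · have h3 : x ∉ tsupport (cutu ψ) := by
      intro h
      have : tsupport (cutu ψ) ⊆ tsupport (bmp n) := tsupport_smul_subset_left _ _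
      exact hx (bmp_tsupport (this h))
    have h4 : fderiv ℝ (cutu ψ) x = 0 := by
      by_contra hne
      exact h3 (support_fderiv_subset ℝ hne)
    simp [rdirac, h4]

/-- homogeneous terms of the expansion -/
def Qh (c : Fin n → V →L[ℝ] V) (ψ : EuclideanSpace ℝ (Fin n) → V) (k : ℕ)
    (v : Fin k → EuclideanSpace ℝ (Fin n)) : V :=
  (-(∫ z, etaR n 1 z)⁻¹) • mcoef c (rdirac c (cutu ψ)) k v

lemma Qh_smul (c : Fin n → V →L[ℝ] V) (ψ : EuclideanSpace ℝ (Fin n) → V) (k : ℕ)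
    (t : ℝ) (x : EuclideanSpace ℝ (Fin n)) :
    Qh c ψ k (fun _ => t • x) = t ^ k • Qh c ψ k (fun _ => x) := by
  have h : ∀ y, iteratedFDeriv ℝ k (dker c) (-y) (fun _ => t • x) =
      t ^ k • iteratedFDeriv ℝ k (dker c) (-y) (fun _ => x) := by
    intro y
    have := (iteratedFDeriv ℝ k (dker c) (-y)).map_smul_univ (fun _ => t) (fun _ => x)
    simpa using this
  simp only [Qh, mcoef, h, _root_.smul_apply, integral_smul]
  rw [smul_comm (t ^ k), smul_comm (t ^ k)]

lemma expand (hn : 0 < n) {c : Fin n → V →L[ℝ] V} (hc : RCl c) {ψ : EuclideanSpace ℝ (Fin n) → V}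
    (hψ : ContDiffOn ℝ 1 ψ (ball 0 1)) {C' : ℝ}
    (hD : ∀ x ∈ ball (0 : EuclideanSpace ℝ (Fin n)) 1, ‖rdirac c ψ x‖ ≤ C' * ‖ψ x‖)
    {K β γ : ℝ} (hβ : 0 < β) (m : ℕ) (h1 : (m:ℝ) ≤ γ) (h2 : γ ≤ m + 1)
    (h3 : β ≤ γ) (h4 : γ < β + 1)
    (hS : ∀ x ∈ ball (0 : EuclideanSpace ℝ (Fin n)) 1, ‖ψ x‖ ≤ K * ‖x‖ ^ β) :
    ∃ C : ℝ, ∀ x : EuclideanSpace ℝ (Fin n), x ≠ 0 → ‖x‖ ≤ 1/2 →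
      ‖ψ x - ∑ k ∈ Finset.range (m + 1), Qh c ψ k (fun _ => x)‖ ≤ C * ‖x‖ ^ γ := by
  obtain ⟨A, hA0, hA, hA1⟩ := cutu_bound c hψ hD
  have hu := cutu_contDiff hψ
  have hcu := cutu_compact ψ
  have hK : 0 ≤ K := by
    have := hS (EuclideanSpace.single ⟨0, hn⟩ (1/2)) (by simp; norm_num)
    have h5 : (0:ℝ) < (1/2:ℝ) ^ β := by positivity
    simp at this
    have h6 := (norm_nonneg _).trans this
    exact nonneg_of_mul_nonneg_left h6 (by positivity)
  have hgb : ∀ y, ‖rdirac c (cutu ψ) y‖ ≤ (A * K) * ‖y‖ ^ β := by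
    intro y
    by_cases hy : y ∈ ball (0 : EuclideanSpace ℝ (Fin n)) 1
    · refine (hA y hy).trans ?_
      rw [mul_assoc]
      gcongr
      exact hS y hy
    · rw [hA1 y hy, norm_zero]; positivity
  obtain ⟨C, hC⟩ := bers hn c _ (rdirac_continuous c hu) hβ m h1 h2 h3 h4 hgb hA1
    (fun x => (rep_formula hn hc hu hcu x).1)
  refine ⟨|(-(∫ z, etaR n 1 z)⁻¹)| * C, fun x hx hx1 => ?_⟩
  rw [← cutu_eq ψ hx1, (rep_formula hn hc hu hcu x).2]
  simp only [Qh]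
  rw [← Finset.smul_sum, ← smul_sub, norm_smul, mul_assoc, Real.norm_eq_abs]
  gcongr
  exact hC x hx (by linarith)

lemma poly_vanish (m : ℕ) : ∀ (q : ℕ → V) (C : ℝ),
    (∀ t : ℝ, 0 < t → t ≤ 1 → ‖∑ j ∈ Finset.range m, t ^ j • q j‖ ≤ C * t ^ m) →
    ∀ j < m, q j = 0 := by
  induction m with
  | zero => intro q C _ j hj; omega
  | succ m ih =>
    intro q C h
    have hq0 : q 0 = 0 := by
      have t1 : Tendsto (fun t : ℝ => ‖∑ j ∈ Finset.range (m+1), t ^ j • q j‖) (nhdsWithin 0 (Set.Ioi 0))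
          (nhds ‖∑ j ∈ Finset.range (m+1), (0:ℝ) ^ j • q j‖) := by
        have : Continuous (fun t : ℝ => ‖∑ j ∈ Finset.range (m+1), t ^ j • q j‖) := by fun_prop
        exact (this.tendsto 0).mono_left nhdsWithin_le_nhds
      have t2 : Tendsto (fun t : ℝ => C * t ^ (m+1)) (nhdsWithin 0 (Set.Ioi 0)) (nhds (C * 0 ^ (m+1))) := by
        have : Continuous (fun t : ℝ => C * t ^ (m+1)) := by fun_prop
        exact (this.tendsto 0).mono_left nhdsWithin_le_nhds
      have h3 := le_of_tendsto_of_tendsto t1 t2 (by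
        filter_upwards [Ioc_mem_nhdsGT (zero_lt_one' ℝ)] with t ht
        exact h t ht.1 ht.2)
      rw [Finset.sum_range_succ'] at h3
      simpa using h3
    have ih' := ih (fun j => q (j+1)) C (fun t ht ht1 => by
      have h4 := h t ht ht1
      rw [Finset.sum_range_succ', hq0, smul_zero, add_zero] at h4
      have h5 : ∑ j ∈ Finset.range m, t ^ (j+1) • q (j+1) =
          t • ∑ j ∈ Finset.range m, t ^ j • q (j+1) := by
        rw [Finset.smul_sum]
        refine Finset.sum_congr rfl fun j _ => ?_
        rw [smul_smul, pow_succ']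
      rw [h5, norm_smul, Real.norm_of_nonneg ht.le, pow_succ'] at h4
      have h6 : t * ‖∑ j ∈ Finset.range m, t ^ j • q (j+1)‖ ≤ t * (C * t ^ m) := by linarith
      exact le_of_mul_le_mul_left h6 ht)
    intro j hj
    rcases j with _ | j
    · exact hq0
    · exact ih' j (by omega)

/-- vanishing to order `m` on the unit ball -/
def VanOrd (ψ : EuclideanSpace ℝ (Fin n) → V) (β : ℝ) : Prop :=
  ∃ K : ℝ, ∀ x ∈ ball (0 : EuclideanSpace ℝ (Fin n)) 1, ‖ψ x‖ ≤ K * ‖x‖ ^ β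

lemma lower_vanish (hn : 0 < n) {c : Fin n → V →L[ℝ] V} {ψ : EuclideanSpace ℝ (Fin n) → V}
    {C : ℝ} (m : ℕ)
    (h : ∀ x : EuclideanSpace ℝ (Fin n), x ≠ 0 → ‖x‖ ≤ 1/2 →
      ‖∑ k ∈ Finset.range m, Qh c ψ k (fun _ => x)‖ ≤ C * ‖x‖ ^ (m:ℝ)) :
    ∀ x : EuclideanSpace ℝ (Fin n), x ≠ 0 → ‖x‖ ≤ 1/2 → ∀ j < m, Qh c ψ j (fun _ => x) = 0 := by
  intro x hx hx1
  refine poly_vanish m (fun j => Qh c ψ j (fun _ => x)) (C * ‖x‖ ^ (m:ℝ)) (fun t ht ht1 => ?_)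
  have h1 := h (t • x) (by simp [ht.ne', hx]) (by
    rw [norm_smul, Real.norm_of_nonneg ht.le]; nlinarith [norm_nonneg x])
  simp only [Qh_smul] at h1
  refine h1.trans (le_of_eq ?_)
  rw [norm_smul, Real.norm_of_nonneg ht.le, Real.rpow_natCast, Real.rpow_natCast]; ring

lemma lower0 (hn : 0 < n) {c : Fin n → V →L[ℝ] V} (hc : RCl c) {ψ : EuclideanSpace ℝ (Fin n) → V}
    (hψ : ContDiffOn ℝ 1 ψ (ball 0 1)) {C' : ℝ}
    (hD : ∀ x ∈ ball (0 : EuclideanSpace ℝ (Fin n)) 1, ‖rdirac c ψ x‖ ≤ C' * ‖ψ x‖)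
    (m : ℕ) (hm : 1 ≤ m) (hS : VanOrd ψ (m:ℝ)) :
    ∀ x : EuclideanSpace ℝ (Fin n), x ≠ 0 → ‖x‖ ≤ 1/2 → ∀ j < m, Qh c ψ j (fun _ => x) = 0 := by
  obtain ⟨K, hK⟩ := hS
  have hm1 : (1:ℝ) ≤ m := by exact_mod_cast hm
  -- lower order terms: use order m-1 expansion
  obtain ⟨C2, hC2⟩ := expand hn hc hψ hD (β := m) (γ := m) (by linarith) (m-1)
    (by rw [Nat.cast_sub hm]; push_cast; linarith)
    (by rw [Nat.cast_sub hm]; push_cast; linarith) (by linarith) (by linarith) hK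
  rw [Nat.sub_add_cancel hm] at hC2
  exact lower_vanish (c := c) (ψ := ψ) hn (C := C2 + K) m (by
    intro x hx hx1
    have h1 := hC2 x hx hx1
    have h2 := hK x (by simp; linarith)
    have h3 : ∑ k ∈ Finset.range m, Qh c ψ k (fun _ => x) =
      ψ x - (ψ x - ∑ k ∈ Finset.range m, Qh c ψ k (fun _ => x)) := by abel
    rw [h3]
    refine (norm_sub_le _ _).trans ?_
    linarith)

lemma stage1 (hn : 0 < n) {c : Fin n → V →L[ℝ] V} (hc : RCl c) {ψ : EuclideanSpace ℝ (Fin n) → V}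
    (hψ : ContDiffOn ℝ 1 ψ (ball 0 1)) {C' : ℝ}
    (hD : ∀ x ∈ ball (0 : EuclideanSpace ℝ (Fin n)) 1, ‖rdirac c ψ x‖ ≤ C' * ‖ψ x‖)
    (m : ℕ) (hm : 1 ≤ m) (hS : VanOrd ψ (m:ℝ)) (δ : ℝ) (hδ : 0 < δ) (hδ1 : δ < 1) :
    ∃ C : ℝ, 0 ≤ C ∧ ∀ x : EuclideanSpace ℝ (Fin n), ‖x‖ ≤ 1/2 →
      ‖ψ x - Qh c ψ m (fun _ => x)‖ ≤ C * ‖x‖ ^ ((m:ℝ) + δ) := by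
  obtain ⟨K, hK⟩ := hS
  have hm1 : (1:ℝ) ≤ m := by exact_mod_cast hm
  obtain ⟨C, hC⟩ := expand hn hc hψ hD (β := m) (γ := m + δ) (by linarith) m (by linarith)
    (by linarith) (by linarith) (by linarith) hK
  have hlow := lower0 hn hc hψ hD m hm ⟨K, hK⟩
  refine ⟨|C|, abs_nonneg _, fun x hx1 => ?_⟩
  by_cases hx : x = 0
  · have h2 := hK x (by simp [hx])
    have hψ0 : ψ x = 0 := by
      rw [hx, norm_zero, Real.zero_rpow (by linarith), mul_zero] at h2
      rw [hx]; simpa using h2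
    have hQ0 : Qh c ψ m (fun _ => x) = 0 := by
      have := Qh_smul c ψ m 0 x
      rw [zero_pow (by omega), zero_smul, zero_smul] at this
      rw [hx]; exact this
    rw [hψ0, hQ0, sub_zero, norm_zero]; positivity
  · have h1 := hC x hx hx1
    rw [Finset.sum_range_succ, Finset.sum_eq_zero (fun j hj => hlow x hx hx1 j (Finset.mem_range.1 hj)),
      zero_add] at h1
    refine h1.trans ?_
    gcongr
    exact le_abs_self _

lemma stage2 (hn : 0 < n) {c : Fin n → V →L[ℝ] V} (hc : RCl c) {ψ : EuclideanSpace ℝ (Fin n) → V}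
    (hψ : ContDiffOn ℝ 1 ψ (ball 0 1)) {C' : ℝ}
    (hD : ∀ x ∈ ball (0 : EuclideanSpace ℝ (Fin n)) 1, ‖rdirac c ψ x‖ ≤ C' * ‖ψ x‖)
    (m : ℕ) (hm : 1 ≤ m) (hS : VanOrd ψ (m:ℝ)) (hQ : ∀ x, Qh c ψ m (fun _ => x) = 0) :
    VanOrd ψ ((m + 1 : ℕ) : ℝ) := by
  have hm1 : (1:ℝ) ≤ m := by exact_mod_cast hm
  -- extending small ball estimates
  have ext : ∀ (γ C : ℝ), 0 < γ → (∀ x : EuclideanSpace ℝ (Fin n), x ≠ 0 → ‖x‖ ≤ 1/2 →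
      ‖ψ x‖ ≤ C * ‖x‖ ^ γ) → VanOrd ψ γ := by
    intro γ C hγ h
    obtain ⟨K, hK⟩ := hS
    refine ⟨|C| + |K| * 2 ^ γ, fun x hx => ?_⟩
    have hx1 : ‖x‖ < 1 := by simpa using hx
    by_cases hx0 : x = 0
    · have h2 := hK x hx
      rw [hx0, norm_zero, Real.zero_rpow (by linarith), mul_zero] at h2
      rw [hx0]; refine h2.trans ?_; positivity
    by_cases hx2 : ‖x‖ ≤ 1/2
    · refine (h x hx0 hx2).trans ?_
      gcongr
      have := le_abs_self C
      have : 0 ≤ |K| * 2 ^ γ := by positivity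
      linarith
    · push Not at hx2
      have h3 : (1:ℝ) ≤ 2 ^ γ * ‖x‖ ^ γ := by
        rw [← Real.mul_rpow (by norm_num) (norm_nonneg _)]
        exact Real.one_le_rpow (by linarith) hγ.le
      calc ‖ψ x‖ ≤ K * ‖x‖ ^ (m:ℝ) := hK x hx
        _ ≤ |K| * 1 := by
            gcongr
            · exact le_abs_self _
            · exact Real.rpow_le_one (norm_nonneg _) hx1.le (by linarith)
        _ ≤ |K| * (2 ^ γ * ‖x‖ ^ γ) := by gcongr
        _ ≤ _ := by
            have : 0 ≤ |C| * ‖x‖ ^ γ := by positivity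
            nlinarith
  obtain ⟨C1, hC10, hC1⟩ := stage1 hn hc hψ hD m hm hS (1/2) (by norm_num) (by norm_num)
  have hS1 : VanOrd ψ ((m:ℝ) + 1/2) := ext _ C1 (by linarith) (fun x _ hx => by
    have := hC1 x hx
    rwa [hQ, sub_zero] at this)
  obtain ⟨K, hK⟩ := hS1
  obtain ⟨C, hC⟩ := expand hn hc hψ hD (β := m + 1/2) (γ := m + 1) (by linarith) m (by linarith)
    (by linarith) (by linarith) (by linarith) hK
  have hlow := lower0 hn hc hψ hD m hm hS
  push_cast
  refine ext _ C (by linarith) (fun x hx hx1 => ?_)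
  have h1 := hC x hx hx1
  rwa [Finset.sum_range_succ, Finset.sum_eq_zero (fun j hj => hlow x hx hx1 j (Finset.mem_range.1 hj)),
      zero_add, hQ, sub_zero] at h1
end Expand

section Blow
variable {n : ℕ} {V : Type*} [NormedAddCommGroup V] [InnerProductSpace ℝ V]
  [FiniteDimensional ℝ V]

lemma integral_fderiv_zero {F : Type*} [NormedAddCommGroup F] [NormedSpace ℝ F]
    [FiniteDimensional ℝ F] {u : EuclideanSpace ℝ (Fin n) → F} (hu : ContDiff ℝ 1 u)
    (hcu : HasCompactSupport u) (v : EuclideanSpace ℝ (Fin n)) :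
    ∫ x, fderiv ℝ u x v = 0 := by
  have hc1 : Continuous (fun x => fderiv ℝ u x v) := by
    have := hu.continuous_fderiv one_ne_zero
    fun_prop
  have hcs : HasCompactSupport (fun x => fderiv ℝ u x v) :=
    (hcu.fderiv ℝ).mono (fun x hx h => hx (by simp [h]))
  have := integral_bilinear_hasLineDerivAt_right_eq_neg_left_of_integrable
    (μ := (volume : Measure (EuclideanSpace ℝ (Fin n))))
    (f := fun _ => (1:ℝ)) (f' := fun _ => (0:ℝ)) (g := u) (g' := fun x => fderiv ℝ u x v)
    (v := v) (B := ContinuousLinearMap.lsmul ℝ ℝ)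
    (by simp) (by simpa using hc1.integrable_of_hasCompactSupport hcs)
    (by simpa using hu.continuous.integrable_of_hasCompactSupport hcu)
    (fun x _ => by simpa using (hasFDerivAt_const (1:ℝ) x).hasLineDerivAt v)
    (fun x _ => ((hu.differentiable one_ne_zero x).hasFDerivAt.hasLineDerivAt v))
  simpa using this

lemma integral_rdirac_zero (c : Fin n → V →L[ℝ] V) {u : EuclideanSpace ℝ (Fin n) → V}
    (hu : ContDiff ℝ 1 u) (hcu : HasCompactSupport u) : ∫ x, rdirac c u x = 0 := by
  have hcs : ∀ v, HasCompactSupport (fun x => fderiv ℝ u x v) := fun v =>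
    (hcu.fderiv ℝ).mono (fun x hx h => hx (by simp [h]))
  have hi : ∀ j : Fin n, Integrable (fun x => fderiv ℝ u x (EuclideanSpace.single j 1)) := by
    intro j
    have := hu.continuous_fderiv one_ne_zero
    exact Continuous.integrable_of_hasCompactSupport (by fun_prop) (hcs _)
  unfold rdirac
  rw [integral_finsetSum _ (fun j _ => (c j).integrable_comp (hi j))]
  refine Finset.sum_eq_zero fun j _ => ?_
  rw [ContinuousLinearMap.integral_comp_comm _ (hi j), integral_fderiv_zero hu hcu, map_zero]

lemma rdirac_sub (c : Fin n → V →L[ℝ] V) {u w : EuclideanSpace ℝ (Fin n) → V}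
    {x : EuclideanSpace ℝ (Fin n)} (hu : DifferentiableAt ℝ u x) (hw : DifferentiableAt ℝ w x) :
    rdirac c (fun y => u y - w y) x = rdirac c u x - rdirac c w x := by
  simp only [rdirac, fderiv_fun_sub hu hw, ← Finset.sum_sub_distrib]
  refine Finset.sum_congr rfl fun j _ => ?_
  rw [_root_.sub_apply, map_sub]

lemma blowup {c : Fin n → V →L[ℝ] V} {ψ P : EuclideanSpace ℝ (Fin n) → V}
    (hψ : ContDiffOn ℝ 1 ψ (ball 0 1)) {C' : ℝ}
    (hD : ∀ x ∈ ball (0 : EuclideanSpace ℝ (Fin n)) 1, ‖rdirac c ψ x‖ ≤ C' * ‖ψ x‖)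
    (m : ℕ) (hS : VanOrd ψ (m:ℝ)) (hP : ContDiff ℝ 1 P)
    (hhom : ∀ (t : ℝ) x, P (t • x) = t ^ m • P x) {C : ℝ}
    (hE : ∀ x : EuclideanSpace ℝ (Fin n), ‖x‖ ≤ 1/2 → ‖ψ x - P x‖ ≤ C * ‖x‖ ^ ((m:ℝ) + 1/2)) :
    ∀ x, rdirac c P x = 0 := by
  obtain ⟨K, hK⟩ := hS
  have hcont := rdirac_continuous c hP
  suffices h : ∀ᵐ x, rdirac c P x = 0 by
    have := (Continuous.ae_eq_iff_eq (μ := (volume : Measure (EuclideanSpace ℝ (Fin n)))) hcont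
      (continuous_const (y := (0:V)))).1 h
    exact fun x => congrFun this x
  refine ae_eq_zero_of_integral_contDiff_smul_eq_zero hcont.locallyIntegrable ?_
  intro φ hφ hφc
  have hφ1 : ContDiff ℝ 1 φ := hφ.of_le (by exact_mod_cast le_top)
  obtain ⟨ρ, hρ0, hρ⟩ := hφc.isCompact.isBounded.subset_ball_lt 1 (0 : EuclideanSpace ℝ (Fin n))
  obtain ⟨M0, hM0⟩ := hφc.exists_bound_of_continuous hφ1.continuous
  obtain ⟨M1, hM1⟩ := (hφc.fderiv ℝ).exists_bound_of_continuous (hφ1.continuous_fderiv one_ne_zero)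
  have hM00 : 0 ≤ M0 := (norm_nonneg _).trans (hM0 0)
  have hM10 : 0 ≤ M1 := (norm_nonneg _).trans (hM1 0)
  set W := (volume (ball (0 : EuclideanSpace ℝ (Fin n)) ρ)).toReal with hW
  set A := M0 * (|C'| * |K| * ρ ^ (m:ℝ))  with hA
  set B := (∑ j, ‖c j‖) * (M1 * (|C| * ρ ^ ((m:ℝ) + 1/2))) with hB
  have key : ∀ r : ℝ, 0 < r → r ≤ 1 / (2 * ρ) →
      ‖∫ x, φ x • rdirac c P x‖ ≤ (A * r + B * r ^ (1/2:ℝ)) * W := by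
    intro r hr hr1
    have hrρ : r * ρ ≤ 1/2 := by
      rw [le_div_iff₀ (by positivity)] at hr1; linarith
    set ψr : EuclideanSpace ℝ (Fin n) → V := fun x => (r ^ m)⁻¹ • ψ (r • x) with hψr
    have hbr : ∀ x ∈ ball (0 : EuclideanSpace ℝ (Fin n)) ρ, ‖r • x‖ < 1/2 := by
      intro x hx
      rw [norm_smul, Real.norm_of_nonneg hr.le]
      have : ‖x‖ < ρ := by simpa using hx
      nlinarith
    have hψrc : ContDiffOn ℝ 1 ψr (ball 0 ρ) := by
      have h1 : ContDiffOn ℝ 1 (fun x => ψ (r • x)) (ball (0 : EuclideanSpace ℝ (Fin n)) ρ) := by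
        refine hψ.comp (g := ψ) (f := fun x => r • x) (contDiff_const_smul r).contDiffOn ?_
        intro x hx
        have := hbr x hx
        simp only [mem_ball_zero_iff]
        linarith
      exact h1.const_smul _
    have hErc : ContDiffOn ℝ 1 (fun x => ψr x - P x) (ball 0 ρ) := hψrc.sub hP.contDiffOn
    have hw := smul_supp_contDiff isOpen_ball hφ1 hErc hρ
    have hwc : HasCompactSupport (fun x => φ x • (ψr x - P x)) := hφc.smul_right
    have hz := integral_rdirac_zero c hw hwc
    have hrd : ∀ x ∈ ball (0 : EuclideanSpace ℝ (Fin n)) ρ,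
        rdirac c ψr x = (r ^ m)⁻¹ • r • rdirac c ψ (r • x) := by
      intro x hx
      have h2 : DifferentiableAt ℝ ψ (r • x) := by
        refine (hψ.contDiffAt (isOpen_ball.mem_nhds ?_)).differentiableAt one_ne_zero
        have := hbr x hx
        simp only [mem_ball_zero_iff]
        linarith
      have h3 : DifferentiableAt ℝ (fun x => ψ (r • x)) x :=
        DifferentiableAt.comp (g := ψ) (f := fun x => r • x) x h2 (differentiableAt_id.const_smul r)
      simp only [rdirac, hψr]
      simp only [fderiv_fun_const_smul h3, fderiv_comp_smul, _root_.smul_apply, map_smul, Finset.smul_sum]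
    have heq : ∀ x, φ x • rdirac c P x + rdirac c (fun x => φ x • (ψr x - P x)) x =
        (ball (0 : EuclideanSpace ℝ (Fin n)) ρ).indicator (fun x =>
        φ x • rdirac c ψr x + ∑ j, (fderiv ℝ φ x (EuclideanSpace.single j 1)) • c j (ψr x - P x)) x := by
      intro x
      by_cases hx : x ∈ ball (0 : EuclideanSpace ℝ (Fin n)) ρ
      · rw [Set.indicator_of_mem hx]
        have d1 : DifferentiableAt ℝ ψr x :=
          (hψrc.contDiffAt (isOpen_ball.mem_nhds hx)).differentiableAt one_ne_zero
        have d2 := hP.differentiable one_ne_zero x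
        rw [rdirac_smul c (hφ1.differentiable one_ne_zero x) (d1.fun_sub d2), rdirac_sub c d1 d2, smul_sub]
        abel
      · rw [Set.indicator_of_notMem hx]
        have h1 : x ∉ tsupport φ := fun h => hx (hρ h)
        have h2 : x ∉ tsupport (fun x => φ x • (ψr x - P x)) :=
          fun h => h1 (tsupport_smul_subset_left _ _ h)
        have h4 : fderiv ℝ (fun x => φ x • (ψr x - P x)) x = 0 := by
          by_contra hne
          exact h2 (support_fderiv_subset ℝ hne)
        rw [image_eq_zero_of_notMem_tsupport h1]
        simp [rdirac, h4]
    have hI1 : Integrable (fun x => φ x • rdirac c P x) := by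
      refine Continuous.integrable_of_hasCompactSupport ?_ hφc.smul_right
      exact hφ1.continuous.smul hcont
    have hI2 : Integrable (fun x => rdirac c (fun x => φ x • (ψr x - P x)) x) :=
      (rdirac_continuous c hw).integrable_of_hasCompactSupport (rdirac_compact c hwc)
    have h5 := integral_add hI1 hI2
    rw [hz, add_zero] at h5
    rw [← h5]
    simp only [heq]
    rw [integral_indicator measurableSet_ball]
    have hrm : (0:ℝ) < r ^ m := by positivity
    refine (norm_setIntegral_le_of_norm_le_const (C := A * r + B * r ^ (1/2:ℝ)) measure_ball_lt_top
      (fun x hx => ?_)).trans (le_of_eq (by rw [hW]; rfl))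
    have hxρ : ‖x‖ ≤ ρ := by simpa using (mem_ball.1 hx).le
    have hrx := hbr x hx
    have hrx1 : r • x ∈ ball (0 : EuclideanSpace ℝ (Fin n)) 1 := by
      simp only [mem_ball_zero_iff]; linarith
    have hnr : ‖r • x‖ = r * ‖x‖ := by rw [norm_smul, Real.norm_of_nonneg hr.le]
    refine (norm_add_le _ _).trans (add_le_add ?_ ?_)
    · rw [norm_smul, hrd x hx, norm_smul, norm_smul, norm_inv, Real.norm_of_nonneg hrm.le,
        Real.norm_of_nonneg hr.le]
      have b1 : ‖rdirac c ψ (r • x)‖ ≤ |C'| * |K| * (r ^ m * ρ ^ (m:ℝ)) := by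
        calc _ ≤ C' * ‖ψ (r • x)‖ := hD _ hrx1
          _ ≤ |C'| * (|K| * (r * ρ) ^ (m:ℝ)) := by
              gcongr
              · exact le_abs_self _
              refine (hK _ hrx1).trans ?_
              rw [hnr]
              gcongr
              exact le_abs_self _
          _ = _ := by rw [Real.mul_rpow hr.le (by linarith), Real.rpow_natCast]; ring
      calc _ ≤ M0 * ((r ^ m)⁻¹ * (r * (|C'| * |K| * (r ^ m * ρ ^ (m:ℝ))))) := by
            gcongr
            exact hM0 x
        _ = A * r := by rw [hA]; field_simp
    · refine (rdirac_smul_rest c _ _).trans ?_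
      have b2 : ‖ψr x - P x‖ ≤ |C| * ρ ^ ((m:ℝ) + 1/2) * r ^ (1/2:ℝ) := by
        have e : ψr x - P x = (r ^ m)⁻¹ • (ψ (r • x) - P (r • x)) := by
          rw [hhom, smul_sub, smul_smul, inv_mul_cancel₀ hrm.ne', one_smul]
        rw [e, norm_smul, norm_inv, Real.norm_of_nonneg hrm.le]
        calc _ ≤ (r ^ m)⁻¹ * (|C| * (r * ρ) ^ ((m:ℝ) + 1/2)) := by
              gcongr
              refine (hE _ hrx.le).trans ?_
              rw [hnr]
              gcongr
              exact le_abs_self _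
          _ = _ := by
              rw [Real.mul_rpow hr.le (by linarith), Real.rpow_add hr, Real.rpow_natCast]
              field_simp
      calc _ ≤ (∑ j, ‖c j‖) * (M1 * (|C| * ρ ^ ((m:ℝ) + 1/2) * r ^ (1/2:ℝ))) := by
            gcongr
            exact hM1 x
        _ = _ := by rw [hB]; ring
  have lim : Tendsto (fun r : ℝ => (A * r + B * r ^ (1/2:ℝ)) * W) (nhdsWithin 0 (Set.Ioi 0)) (nhds 0) := by
    have : Continuous (fun r : ℝ => (A * r + B * r ^ (1/2:ℝ)) * W) := by
      have : Continuous (fun r : ℝ => r ^ (1/2:ℝ)) := Real.continuous_rpow_const (by norm_num)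
      fun_prop
    have h := (this.tendsto 0).mono_left (nhdsWithin_le_nhds (s := Set.Ioi 0))
    simpa using h
  have := ge_of_tendsto lim (b := ‖∫ x, φ x • rdirac c P x‖) (by
    filter_upwards [Ioc_mem_nhdsGT (show (0:ℝ) < 1 / (2 * ρ) by positivity)] with r hr
    exact key r hr.1 hr.2)
  simpa using this

lemma Qh_poly (hn : 0 < n) {c : Fin n → V →L[ℝ] V} {ψ : EuclideanSpace ℝ (Fin n) → V}
    (hψ : ContDiffOn ℝ 1 ψ (ball 0 1)) {C' : ℝ}
    (hD : ∀ x ∈ ball (0 : EuclideanSpace ℝ (Fin n)) 1, ‖rdirac c ψ x‖ ≤ C' * ‖ψ x‖)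
    (m : ℕ) (hm : 1 ≤ m) (hS : VanOrd ψ (m:ℝ)) (x : EuclideanSpace ℝ (Fin n)) :
    Qh c ψ m (fun _ => x) = ∑ J : Fin m → Fin n, (∏ i, x (J i)) •
      Qh c ψ m (fun i => EuclideanSpace.single (J i) 1) := by
  obtain ⟨K, hS⟩ := hS
  obtain ⟨A, hA0, hA, hA1⟩ := cutu_bound c hψ hD
  have hm1 : (1:ℝ) ≤ m := by exact_mod_cast hm
  have hu := cutu_contDiff hψ
  have hgb : ∀ y, ‖rdirac c (cutu ψ) y‖ ≤ (A * |K|) * ‖y‖ ^ (m:ℝ) := by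
    intro y
    by_cases hy : y ∈ ball (0 : EuclideanSpace ℝ (Fin n)) 1
    · refine (hA y hy).trans ?_
      rw [mul_assoc]
      gcongr
      refine (hS y hy).trans ?_
      gcongr
      exact le_abs_self _
    · rw [hA1 y hy, norm_zero]; positivity
  have hintg := fun v => mcoef_integrable hn c _ (rdirac_continuous c hu) (by linarith) hgb hA1 m
    (by linarith) v
  have hx : x = ∑ j, x j • EuclideanSpace.single j (1:ℝ) := by
    ext i
    simp [Finset.sum_apply, Pi.single_apply]
  have e1 : ∀ y, iteratedFDeriv ℝ m (dker c) (-y) (fun _ => x) =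
      ∑ J : Fin m → Fin n, (∏ i, x (J i)) • iteratedFDeriv ℝ m (dker c) (-y)
        (fun i => EuclideanSpace.single (J i) 1) := by
    intro y
    conv_lhs => rw [hx]
    have := (iteratedFDeriv ℝ m (dker c) (-y)).map_sum
      (g := fun (_ : Fin m) (j : Fin n) => x j • EuclideanSpace.single j (1:ℝ))
    rw [this]
    refine Finset.sum_congr rfl fun J _ => ?_
    exact (iteratedFDeriv ℝ m (dker c) (-y)).map_smul_univ (fun i => x (J i))
      (fun i => EuclideanSpace.single (J i) 1)
  simp only [Qh, mcoef, e1, _root_.sum_apply, _root_.smul_apply]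
  rw [integral_finsetSum _ (fun J _ => by exact (hintg _).smul (∏ i, x (J i)))]
  simp only [integral_smul, Finset.smul_sum]
  refine Finset.sum_congr rfl fun J _ => ?_
  rw [smul_comm (∏ i, x (J i)), smul_comm (∏ i, x (J i))]

end Blow

section Grad
variable {n : ℕ} {V : Type*} [NormedAddCommGroup V] [InnerProductSpace ℝ V]
  [FiniteDimensional ℝ V]

lemma kdiff (hn : 0 < n) (c : Fin n → V →L[ℝ] V) {s : ℝ} (hs0 : 0 < s) (hs1 : s < 1) :
    ∃ C : ℝ, 0 ≤ C ∧ ∀ z w : EuclideanSpace ℝ (Fin n), w ≠ 0 →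
      ‖dker c (z + w) - dker c z‖ ≤ C * ‖w‖ ^ (1 - s) * (‖z‖ ^ (s - n) + ‖z + w‖ ^ (s - n)) := by
  have hn1 : (1:ℝ) ≤ n := by exact_mod_cast hn
  obtain ⟨CT, hCT0, hCT⟩ := homog_taylor (dker c) (dker_contDiffAt c) ((n:ℝ) - 1) (dker_homog c)
    (by linarith) 0
  refine ⟨CT + ‖clm c‖ * 3 ^ (1 - s), by positivity, fun z w hw => ?_⟩
  have hwp : 0 < ‖w‖ := norm_pos_iff.2 hw
  set W := ‖w‖ ^ (1 - s) with hW
  set a := ‖z‖ ^ (s - n) with ha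
  set b := ‖z + w‖ ^ (s - n) with hb
  have hW0 : 0 ≤ W := by positivity
  have ha0 : 0 ≤ a := by positivity
  have hb0 : 0 ≤ b := by positivity
  by_cases hcase : z ≠ 0 ∧ ‖w‖ ≤ ‖z‖ / 2
  · obtain ⟨hz, hle⟩ := hcase
    have hzp : 0 < ‖z‖ := norm_pos_iff.2 hz
    have h1 := hCT z w hz hle
    have e0 : -((n:ℝ) - 1) - ((0 + 1 : ℕ) : ℝ) = 1 - (n:ℝ) - 1 := by push_cast; ring
    rw [e0] at h1
    simp only [zero_add, Finset.range_one, Finset.sum_singleton, Nat.factorial_zero, Nat.cast_one,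
      inv_one, one_smul, iteratedFDeriv_zero_apply, pow_one] at h1
    have e : ‖w‖ * ‖z‖ ^ (1 - (n:ℝ) - 1) ≤ W * a := by
      calc _ = W * (‖w‖ ^ s * ‖z‖ ^ (-(n:ℝ))) := by
            rw [hW, ← mul_assoc, ← Real.rpow_add hwp]
            norm_num
        _ ≤ W * (‖z‖ ^ s * ‖z‖ ^ (-(n:ℝ))) := by
            gcongr
            linarith
        _ = _ := by rw [← Real.rpow_add hzp]; rfl
    calc _ ≤ CT * ‖w‖ * ‖z‖ ^ (1 - (n:ℝ) - 1) := h1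
      _ = CT * (‖w‖ * ‖z‖ ^ (1 - (n:ℝ) - 1)) := by ring
      _ ≤ CT * (W * a) := by gcongr
      _ ≤ _ := by
          have : (CT + ‖clm c‖ * 3 ^ (1 - s)) * W * (a + b) = CT * (W * a) +
            (CT * (W * b) + ‖clm c‖ * 3 ^ (1 - s) * W * (a + b)) := by ring
          rw [this]
          have : 0 ≤ CT * (W * b) + ‖clm c‖ * 3 ^ (1 - s) * W * (a + b) := by positivity
          linarith
  · have hz3 : ‖z‖ ≤ 3 * ‖w‖ := by
      by_cases hz : z = 0
      · rw [hz, norm_zero]; positivity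
      · have : ¬ (‖w‖ ≤ ‖z‖ / 2) := fun h => hcase ⟨hz, h⟩
        linarith
    have hzw3 : ‖z + w‖ ≤ 3 * ‖w‖ := by
      by_cases hz : z = 0
      · rw [hz, zero_add]; linarith
      · have : ¬ (‖w‖ ≤ ‖z‖ / 2) := fun h => hcase ⟨hz, h⟩
        linarith [norm_add_le z w]
    have gen : ∀ y : EuclideanSpace ℝ (Fin n), ‖y‖ ≤ 3 * ‖w‖ →
        ‖dker c y‖ ≤ ‖clm c‖ * 3 ^ (1 - s) * W * ‖y‖ ^ (s - n) := by
      intro y hy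
      by_cases hy0 : y = 0
      · have : dker c (0 : EuclideanSpace ℝ (Fin n)) = 0 := by simp [dker]
        rw [hy0, this, norm_zero]; positivity
      have hyp : 0 < ‖y‖ := norm_pos_iff.2 hy0
      calc _ ≤ ‖clm c‖ * ‖y‖ ^ (1 - (n:ℝ)) := dker_norm_le c y
        _ = ‖clm c‖ * (‖y‖ ^ (1 - s) * ‖y‖ ^ (s - n)) := by
            rw [← Real.rpow_add hyp]; congr 2; ring
        _ ≤ ‖clm c‖ * ((3 * ‖w‖) ^ (1 - s) * ‖y‖ ^ (s - n)) := by
            gcongr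
        _ = _ := by rw [Real.mul_rpow (by norm_num) hwp.le]; ring
    have g1 := gen z hz3
    have g2 := gen _ hzw3
    refine (norm_sub_le _ _).trans ?_
    have : 0 ≤ CT * W * (a + b) := by positivity
    have e : (CT + ‖clm c‖ * 3 ^ (1 - s)) * W * (a + b) = CT * W * (a + b) +
      ‖clm c‖ * 3 ^ (1 - s) * W * a + ‖clm c‖ * 3 ^ (1 - s) * W * b := by ring
    rw [e]
    linarith

/-- Hölder type estimate for compactly supported functions -/
lemma hol_est (hn : 0 < n) {c : Fin n → V →L[ℝ] V} (hc : RCl c) {s : ℝ} (hs0 : 0 < s) (hs1 : s < 1) :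
    ∃ C : ℝ, 0 ≤ C ∧ ∀ (v : EuclideanSpace ℝ (Fin n) → V) (B : ℝ), ContDiff ℝ 1 v →
      HasCompactSupport v → (∀ y, ‖rdirac c v y‖ ≤ B) →
      (∀ y ∉ ball (0 : EuclideanSpace ℝ (Fin n)) 1, rdirac c v y = 0) →
      ∀ x w : EuclideanSpace ℝ (Fin n), ‖x‖ ≤ 1 → ‖x + w‖ ≤ 1 → w ≠ 0 →
        ‖v (x + w) - v x‖ ≤ C * ‖w‖ ^ (1 - s) * B := by
  obtain ⟨C, hC0, hC⟩ := kdiff hn c hs0 hs1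
  set I2 := ∫ z in ball (0 : EuclideanSpace ℝ (Fin n)) 2, ‖z‖ ^ (s - n) with hI2
  have hI20 : 0 ≤ I2 := integral_nonneg fun z => by positivity
  refine ⟨|(-(∫ z, etaR n 1 z)⁻¹)| * (C * (I2 + I2)), by positivity, ?_⟩
  intro v B hv hcv hB hz x w hx hxw hw
  have hB0 : 0 ≤ B := (norm_nonneg _).trans (hB 0)
  have r1 := rep_formula hn hc hv hcv x
  have r2 := rep_formula hn hc hv hcv (x + w)
  rw [r1.2, r2.2, ← smul_sub, ← integral_sub r2.1 r1.1, norm_smul, Real.norm_eq_abs]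
  rw [mul_assoc, mul_assoc]
  refine mul_le_mul_of_nonneg_left ?_ (abs_nonneg _)
  have hIb : ∀ y : EuclideanSpace ℝ (Fin n), ‖y‖ ≤ 1 →
      ∫ z in ball (0 : EuclideanSpace ℝ (Fin n)) 1, ‖y - z‖ ^ (s - n) ≤ I2 := by
    intro y hy
    refine (sing_translate hn hs0 1 y).2.trans ?_
    refine setIntegral_mono_set (sing_integrableOn hn hs0 2)
      (Eventually.of_forall fun z => by positivity) ?_
    exact HasSubset.Subset.eventuallyLE (ball_subset_ball (by linarith))
  have t1 := (sing_translate hn hs0 1 x).1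
  have t2 := (sing_translate hn hs0 1 (x + w)).1
  have hdom : Integrable ((ball (0 : EuclideanSpace ℝ (Fin n)) 1).indicator fun y =>
      (C * ‖w‖ ^ (1 - s) * B) * (‖x - y‖ ^ (s - n) + ‖x + w - y‖ ^ (s - n))) := by
    rw [integrable_indicator_iff measurableSet_ball]
    exact (t1.add t2).const_mul _
  refine (norm_integral_le_of_norm_le hdom (Eventually.of_forall fun y => ?_)).trans ?_
  · by_cases hy : y ∈ ball (0 : EuclideanSpace ℝ (Fin n)) 1
    · rw [Set.indicator_of_mem hy, ← _root_.sub_apply]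
      have k1 := hC (x - y) w hw
      have e : x - y + w = x + w - y := by abel
      rw [e] at k1
      refine (ContinuousLinearMap.le_opNorm _ _).trans ?_
      refine (mul_le_mul k1 (hB y) (norm_nonneg _) ((norm_nonneg _).trans k1)).trans (le_of_eq ?_)
      ring
    · rw [Set.indicator_of_notMem hy, hz y hy, map_zero, map_zero, sub_zero, norm_zero]
  · rw [integral_indicator measurableSet_ball, integral_const_mul, integral_add t1 t2]
    have i1 := hIb x hx
    have i2 := hIb _ hxw
    calc _ ≤ (C * ‖w‖ ^ (1 - s) * B) * (I2 + I2) := by gcongr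
      _ = _ := by ring

lemma grad_est (hn : 0 < n) {c : Fin n → V →L[ℝ] V} (hc : RCl c) {Γ : EuclideanSpace ℝ (Fin n) → V}
    (hΓ : ContDiffOn ℝ 1 Γ (ball 0 (1/2))) {k : ℕ} (hk : 1 ≤ k) {a : ℝ} (ha : 0 < a) {L : ℝ}
    (hL : ∀ x ∈ ball (0 : EuclideanSpace ℝ (Fin n)) (1/2), ∀ y ∈ ball (0 : EuclideanSpace ℝ (Fin n)) (1/2),
      ‖fderiv ℝ Γ x - fderiv ℝ Γ y‖ ≤ L * ‖x - y‖ ^ a)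
    {δ δ' : ℝ} (hδ : 0 < δ) (hδδ : δ < δ') (hδ1 : δ' < 1) {C : ℝ}
    (hC : ∀ x : EuclideanSpace ℝ (Fin n), ‖x‖ ≤ 1/2 → ‖Γ x‖ ≤ C * ‖x‖ ^ ((k:ℝ) + δ'))
    (hD : ∀ x : EuclideanSpace ℝ (Fin n), ‖x‖ ≤ 1/2 → ‖rdirac c Γ x‖ ≤ C * ‖x‖ ^ (k:ℝ)) :
    ∃ C2 : ℝ, 0 ≤ C2 ∧ ∀ x : EuclideanSpace ℝ (Fin n), ‖x‖ < 1/4 →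
      ‖fderiv ℝ Γ x‖ ≤ C2 * ‖x‖ ^ ((k:ℝ) + δ - 1) := by
  have hk1 : (1:ℝ) ≤ k := by exact_mod_cast hk
  set b : ContDiffBump (0 : EuclideanSpace ℝ (Fin n)) := ⟨1/4, 1/2, by norm_num, by norm_num⟩ with hb
  have hb1 : ContDiff ℝ 1 b := b.contDiff
  obtain ⟨M1, hM1⟩ := (b.hasCompactSupport.fderiv ℝ).exists_bound_of_continuous
    (hb1.continuous_fderiv one_ne_zero)
  have hM10 : 0 ≤ M1 := (norm_nonneg _).trans (hM1 0)
  set M := (k:ℝ) / a + 1 with hM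
  have hM_1 : 1 ≤ M := by
    have : 0 ≤ (k:ℝ) / a := by positivity
    linarith
  set s := (δ' - δ) / M with hs
  have hs0 : 0 < s := div_pos (by linarith) (by linarith)
  have hs1 : s < 1 := by rw [hs, div_lt_one (by linarith)]; linarith
  obtain ⟨CH, hCH0, hCH⟩ := hol_est hn hc hs0 hs1
  set C3 := |C| * 2 ^ (k:ℝ) + (∑ j, ‖c j‖) * (M1 * (|C| * 2 ^ ((k:ℝ) + δ'))) with hC3
  have hC30 : 0 ≤ C3 := by positivity
  set C2 := CH * C3 * 8 ^ s + |L| with hC2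
  have main : ∀ x : EuclideanSpace ℝ (Fin n), ‖x‖ < 1/4 → x ≠ 0 →
      ‖fderiv ℝ Γ x‖ ≤ C2 * ‖x‖ ^ ((k:ℝ) + δ - 1) := by
    intro x hx hx0
    set r := ‖x‖ with hr
    have hr0 : 0 < r := norm_pos_iff.2 hx0
    set χ : EuclideanSpace ℝ (Fin n) → ℝ := fun y => b (r⁻¹ • (y - x)) with hχ
    have hχ1 : ContDiff ℝ 1 χ := by
      refine hb1.comp (f := fun y : EuclideanSpace ℝ (Fin n) => r⁻¹ • (y - x)) ?_
      exact ContDiff.const_smul _ (contDiff_id.sub contDiff_const)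
    have hχsupp : tsupport χ ⊆ closedBall x (r/2) := by
      refine closure_minimal (fun y hy => ?_) isClosed_closedBall
      rw [mem_closedBall, dist_eq_norm]
      by_contra hlt
      push Not at hlt
      refine hy (b.zero_of_le_dist ?_)
      rw [dist_zero_right, norm_smul, norm_inv, Real.norm_of_nonneg hr0.le]
      simp only [hb]
      rw [inv_mul_eq_div, le_div_iff₀ hr0]; linarith
    have hball : ∀ y ∈ closedBall x (r/2), ‖y‖ ≤ 2 * r ∧ ‖y‖ < 1/2 := by
      intro y hy
      rw [mem_closedBall, dist_eq_norm] at hy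
      have : ‖y‖ ≤ ‖y - x‖ + ‖x‖ := by simpa using norm_add_le (y - x) x
      constructor <;> linarith
    have hχc : HasCompactSupport χ := (isCompact_closedBall x (r/2)).of_isClosed_subset
      (isClosed_tsupport _) hχsupp
    have hsub : tsupport χ ⊆ ball 0 (1/2) := fun y hy => by
      simpa using (hball y (hχsupp hy)).2
    set v : EuclideanSpace ℝ (Fin n) → V := fun y => χ y • Γ y with hv
    have hvC : ContDiff ℝ 1 v := smul_supp_contDiff isOpen_ball hχ1 hΓ hsub
    have hvc : HasCompactSupport v := hχc.smul_right
    have hvz : ∀ y ∉ closedBall x (r/2), rdirac c v y = 0 := by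
      intro y hy
      have h2 : y ∉ tsupport v := fun h => hy (hχsupp (tsupport_smul_subset_left _ _ h))
      have h4 : fderiv ℝ v y = 0 := by
        by_contra hne
        exact h2 (support_fderiv_subset ℝ hne)
      simp [rdirac, h4]
    have hχd : ∀ y, ‖fderiv ℝ χ y‖ ≤ r⁻¹ * M1 := by
      intro y
      have e : fderiv ℝ χ y = r⁻¹ • fderiv ℝ b (r⁻¹ • (y - x)) := by
        have h1 : HasFDerivAt (fun y : EuclideanSpace ℝ (Fin n) => r⁻¹ • (y - x))
          (r⁻¹ • ContinuousLinearMap.id ℝ _) y := ((hasFDerivAt_id y).sub_const x).const_smul r⁻¹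
        have h2 := ((hb1.differentiable one_ne_zero (r⁻¹ • (y - x))).hasFDerivAt.comp y h1).fderiv
        have h3 : fderiv ℝ χ y = _ := h2
        rw [h3]
        ext z
        simp
      rw [e, norm_smul, norm_inv, Real.norm_of_nonneg hr0.le]
      gcongr
      exact hM1 _
    have hvB : ∀ y, ‖rdirac c v y‖ ≤ C3 * r ^ ((k:ℝ) + δ' - 1) := by
      intro y
      by_cases hy : y ∈ closedBall x (r/2)
      · obtain ⟨hy1, hy2⟩ := hball y hy
        have hd : DifferentiableAt ℝ Γ y :=
          (hΓ.contDiffAt (isOpen_ball.mem_nhds (by simpa using hy2))).differentiableAt one_ne_zero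
        rw [hv, rdirac_smul c (hχ1.differentiable one_ne_zero y) hd]
        refine (norm_add_le _ _).trans ?_
        rw [hC3, add_mul]
        refine add_le_add ?_ ?_
        · rw [norm_smul]
          have h1 : ‖χ y‖ ≤ 1 := by
            rw [Real.norm_of_nonneg b.nonneg]; exact b.le_one
          calc _ ≤ 1 * (|C| * (2 * r) ^ (k:ℝ)) := by
                gcongr
                refine (hD y hy2.le).trans ?_
                gcongr
                exact le_abs_self _
            _ = |C| * 2 ^ (k:ℝ) * r ^ (k:ℝ) := by
                rw [Real.mul_rpow (by norm_num) hr0.le]; ring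
            _ ≤ _ := by
                gcongr ?_ * ?_
                exact Real.rpow_le_rpow_of_exponent_ge hr0 (by linarith) (by linarith)
        · refine (rdirac_smul_rest c _ _).trans ?_
          have b1 := hχd y
          calc _ ≤ (∑ j, ‖c j‖) * ((r⁻¹ * M1) * (|C| * (2 * r) ^ ((k:ℝ) + δ'))) := by
                gcongr
                refine (hC y hy2.le).trans ?_
                gcongr
                · exact le_abs_self _
                · linarith
            _ = _ := by
                rw [Real.mul_rpow (by norm_num) hr0.le, Real.rpow_sub hr0, Real.rpow_one]
                field_simp
      · rw [hvz y hy, norm_zero]; positivity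
    have hB1 := hCH v _ hvC hvc hvB (fun y hy => hvz y (fun h => hy (by
      have := (hball y h).2
      simp only [mem_ball_zero_iff]; linarith)))
    -- choose h
    set h := r ^ M / 8 with hh
    have hh0 : 0 < h := by positivity
    have hrM : r ^ M ≤ r := by
      calc r ^ M ≤ r ^ (1:ℝ) := Real.rpow_le_rpow_of_exponent_ge hr0 (by linarith) hM_1
        _ = r := Real.rpow_one r
    have hhr : h ≤ r / 8 := by rw [hh]; linarith
    refine ContinuousLinearMap.opNorm_le_of_unit_norm (by positivity) (fun e he => ?_)
    have hne : ‖h • e‖ = h := by rw [norm_smul, he, mul_one, Real.norm_of_nonneg hh0.le]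
    have hw0 : h • e ≠ 0 := by rw [← norm_pos_iff, hne]; exact hh0
    have hxw : ‖x + h • e‖ ≤ 1 := by
      have := norm_add_le x (h • e)
      rw [hne] at this; linarith
    have est1 := hB1 x (h • e) (by linarith) hxw hw0
    have hveq : ∀ w : EuclideanSpace ℝ (Fin n), ‖w‖ ≤ r / 4 → v (x + w) = Γ (x + w) := by
      intro w hw
      have : χ (x + w) = 1 := by
        rw [hχ]
        refine b.one_of_mem_closedBall ?_
        rw [add_sub_cancel_left, mem_closedBall, dist_zero_right, norm_smul, norm_inv,
          Real.norm_of_nonneg hr0.le]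
        simp only [hb]
        rw [inv_mul_eq_div, div_le_iff₀ hr0]; linarith
      rw [hv]; simp only [this, one_smul]
    rw [hveq _ (by rw [hne]; linarith)] at est1
    have hv0 := hveq 0 (by rw [norm_zero]; linarith)
    rw [add_zero] at hv0
    rw [hv0, hne] at est1
    have hcb : closedBall x h ⊆ ball 0 (1/2) := by
      intro y hy
      have := (hball y (closedBall_subset_closedBall (by linarith) hy)).2
      simpa using this
    have est2 : ‖Γ (x + h • e) - Γ x - fderiv ℝ Γ x (x + h • e - x)‖ ≤
        (|L| * h ^ a) * ‖x + h • e - x‖ := by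
      refine (convex_closedBall x h).norm_image_sub_le_of_norm_fderiv_le'
        (fun y hy => ?_) (fun y hy => ?_) (mem_closedBall_self hh0.le) ?_
      · exact (hΓ.contDiffAt (isOpen_ball.mem_nhds (hcb hy))).differentiableAt one_ne_zero
      · refine (hL y (hcb hy) x (hcb (mem_closedBall_self hh0.le))).trans ?_
        rw [mem_closedBall, dist_eq_norm] at hy
        gcongr
        exact le_abs_self _
      · rw [mem_closedBall, dist_eq_norm, add_sub_cancel_left, hne]
    rw [add_sub_cancel_left, hne, map_smul] at est2
    have est3 : h * ‖fderiv ℝ Γ x e‖ ≤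
        CH * h ^ (1 - s) * (C3 * r ^ ((k:ℝ) + δ' - 1)) + |L| * h ^ a * h := by
      have e1 : h • fderiv ℝ Γ x e = (Γ (x + h • e) - Γ x) -
        (Γ (x + h • e) - Γ x - h • fderiv ℝ Γ x e) := by abel
      have e2 : h * ‖fderiv ℝ Γ x e‖ = ‖h • fderiv ℝ Γ x e‖ := by
        rw [norm_smul, Real.norm_of_nonneg hh0.le]
      rw [e2, e1]
      exact (norm_sub_le _ _).trans (add_le_add est1 est2)
    have hhs : h ^ (1 - s) = h * (8 ^ s * r ^ (-(δ' - δ))) := by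
      rw [Real.rpow_sub hh0, Real.rpow_one, div_eq_mul_inv]
      congr 1
      rw [hh, Real.div_rpow (by positivity) (by norm_num), ← Real.rpow_mul hr0.le, inv_div,
        Real.rpow_neg hr0.le]
      rw [div_eq_mul_inv]
      congr 3
      rw [hs]; field_simp
    have hha : h ^ a ≤ r ^ ((k:ℝ) + δ - 1) := by
      calc h ^ a ≤ (r ^ M) ^ a := by
            gcongr
            rw [hh]
            have : 0 ≤ r ^ M := by positivity
            linarith
        _ = r ^ (M * a) := by rw [← Real.rpow_mul hr0.le]
        _ ≤ _ := by
            refine Real.rpow_le_rpow_of_exponent_ge hr0 (by linarith) ?_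
            rw [hM, add_mul, div_mul_cancel₀ _ ha.ne']
            linarith
    have hcomb : r ^ (-(δ' - δ)) * r ^ ((k:ℝ) + δ' - 1) = r ^ ((k:ℝ) + δ - 1) := by
      rw [← Real.rpow_add hr0]; congr 1; ring
    rw [hhs] at est3
    have est4 : h * ‖fderiv ℝ Γ x e‖ ≤ h * (C2 * r ^ ((k:ℝ) + δ - 1)) := by
      refine est3.trans ?_
      calc _ = h * (CH * C3 * 8 ^ s * (r ^ (-(δ' - δ)) * r ^ ((k:ℝ) + δ' - 1)) + |L| * h ^ a) := by ring
        _ ≤ h * (CH * C3 * 8 ^ s * r ^ ((k:ℝ) + δ - 1) + |L| * r ^ ((k:ℝ) + δ - 1)) := by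
            rw [hcomb]; gcongr
        _ = _ := by rw [hC2]; ring
    exact le_of_mul_le_mul_left est4 hh0
  refine ⟨C2, by positivity, fun x hx => ?_⟩
  by_cases hx0 : x = 0
  · subst hx0
    set e : EuclideanSpace ℝ (Fin n) := EuclideanSpace.single ⟨0, hn⟩ 1 with he
    have hen : ‖e‖ = 1 := by simp [he]
    have hcf : ContinuousAt (fderiv ℝ Γ) 0 := by
      have h1 := hΓ.continuousOn_fderiv_of_isOpen isOpen_ball le_rfl
      exact h1.continuousAt (ball_mem_nhds _ (by norm_num))
    have hpath : Tendsto (fun t : ℝ => t • e) (nhdsWithin 0 (Set.Ioi 0)) (nhds 0) := by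
      have : Continuous (fun t : ℝ => t • e) := by fun_prop
      have h := (this.tendsto 0).mono_left (nhdsWithin_le_nhds (s := Set.Ioi 0))
      simpa using h
    have t1 := (hcf.tendsto.comp hpath).norm
    have t2 : Tendsto (fun t : ℝ => C2 * ‖t • e‖ ^ ((k:ℝ) + δ - 1)) (nhdsWithin 0 (Set.Ioi 0))
        (nhds (C2 * ‖(0 : EuclideanSpace ℝ (Fin n))‖ ^ ((k:ℝ) + δ - 1))) :=
      ((hpath.norm).rpow_const (Or.inr (by linarith))).const_mul _
    refine le_of_tendsto_of_tendsto t1 t2 ?_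
    filter_upwards [Ioo_mem_nhdsGT (show (0:ℝ) < 1/4 by norm_num)] with t ht
    refine main (t • e) ?_ ?_
    · rw [norm_smul, hen, mul_one, Real.norm_of_nonneg ht.1.le]; exact ht.2
    · rw [← norm_pos_iff, norm_smul, hen, mul_one, Real.norm_of_nonneg ht.1.le]; exact ht.1
  · exact main x hx hx0

end Grad

section Carl
variable {n : ℕ} {V : Type*} [NormedAddCommGroup V] [InnerProductSpace ℝ V]
  [FiniteDimensional ℝ V]

/-- skew-adjointness of the Clifford action -/
def Skew (c : Fin n → V →L[ℝ] V) : Prop := ∀ j u v, inner ℝ (c j u) v = -inner ℝ u (c j v)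

lemma Skew.cinner {c : Fin n → V →L[ℝ] V} (h : Skew c) (z : EuclideanSpace ℝ (Fin n)) (u v : V) :
    inner ℝ (clm c z u) v = -inner ℝ u (clm c z v) := by
  rw [clm_apply2, clm_apply2, sum_inner, inner_sum, ← Finset.sum_neg_distrib]
  refine Finset.sum_congr rfl fun j _ => ?_
  rw [inner_smul_left, inner_smul_right, h j u v]
  simp

lemma skew_clm_norm {c : Fin n → V →L[ℝ] V} (h : Skew c) (hc : RCl c)
    (z : EuclideanSpace ℝ (Fin n)) (v : V) : ‖clm c z v‖ = ‖z‖ * ‖v‖ := by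
  have : ‖clm c z v‖ ^ 2 = (‖z‖ * ‖v‖) ^ 2 := by
    rw [← real_inner_self_eq_norm_sq, h.cinner, hc.clm_sq, inner_neg_right, neg_neg, inner_smul_right,
      real_inner_self_eq_norm_sq]
    ring
  exact (pow_left_inj₀ (norm_nonneg _) (by positivity) two_ne_zero).1 this

/-- Euler field plus angular part -/
def opA (c : Fin n → V →L[ℝ] V) (u : EuclideanSpace ℝ (Fin n) → V) (x : EuclideanSpace ℝ (Fin n)) : V :=
  clm c x (rdirac c u x) + fderiv ℝ u x x

lemma vec_sum (x : EuclideanSpace ℝ (Fin n)) : ∑ j, x j • EuclideanSpace.single j (1:ℝ) = x := by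
  ext i
  simp [Finset.sum_apply, Pi.single_apply]

lemma eul_sum {F : Type*} [NormedAddCommGroup F] [NormedSpace ℝ F]
    (L : EuclideanSpace ℝ (Fin n) →L[ℝ] F) (x : EuclideanSpace ℝ (Fin n)) :
    L x = ∑ j, x j • L (EuclideanSpace.single j 1) := by
  conv_lhs => rw [← vec_sum x]
  simp only [map_sum, map_smul]

lemma RCl.anti {c : Fin n → V →L[ℝ] V} (hc : RCl c) (k : Fin n) (x : EuclideanSpace ℝ (Fin n)) (v : V) :
    c k (clm c x v) = -clm c x (c k v) - (2 * x k) • v := by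
  rw [clm_apply2, clm_apply2, map_sum, ← Finset.sum_neg_distrib]
  have : ∀ j, c k (x j • c j v) = -(x j • c j (c k v)) - (if k = j then (2 * x j) • v else 0) := by
    intro j
    have h := hc k j v
    rw [map_smul]
    have h2 : c k (c j v) = (if k = j then (-2:ℝ) • v else 0) - c j (c k v) := by rw [← h]; abel
    rw [h2]
    split_ifs
    · module
    · module
  simp only [this, Finset.sum_sub_distrib]
  simp

lemma opA_div {c : Fin n → V →L[ℝ] V} (hc : RCl c) (hs : Skew c) {u v : EuclideanSpace ℝ (Fin n) → V}
    {x : EuclideanSpace ℝ (Fin n)} (hu : DifferentiableAt ℝ u x) (hv : DifferentiableAt ℝ v x) :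
    ∑ k, fderiv ℝ (fun x : EuclideanSpace ℝ (Fin n) => inner ℝ (u x) (c k (clm c x (v x))) +
      x k * inner ℝ (u x) (v x)) x (EuclideanSpace.single k 1) =
    inner ℝ (opA c u x) (v x) - inner ℝ (u x) (opA c v x) := by
  have e1 : ∀ k : Fin n, fderiv ℝ (fun x : EuclideanSpace ℝ (Fin n) =>
      inner ℝ (u x) (c k (clm c x (v x))) +
      x k * inner ℝ (u x) (v x)) x (EuclideanSpace.single k 1) =
      inner ℝ (u x) (c k (clm c x (fderiv ℝ v x (EuclideanSpace.single k 1)))) - inner ℝ (u x) (v x)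
      + inner ℝ (fderiv ℝ u x (EuclideanSpace.single k 1)) (c k (clm c x (v x)))
      + (inner ℝ (u x) (v x) + x k * (inner ℝ (u x) (fderiv ℝ v x (EuclideanSpace.single k 1))
        + inner ℝ (fderiv ℝ u x (EuclideanSpace.single k 1)) (v x))) := by
    intro k
    have hx : DifferentiableAt ℝ (fun x : EuclideanSpace ℝ (Fin n) => x k) x :=
      (EuclideanSpace.proj k : EuclideanSpace ℝ (Fin n) →L[ℝ] ℝ).differentiableAt
    have hx' : fderiv ℝ (fun x : EuclideanSpace ℝ (Fin n) => x k) x =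
      (EuclideanSpace.proj k : EuclideanSpace ℝ (Fin n) →L[ℝ] ℝ) :=
      (EuclideanSpace.proj k : EuclideanSpace ℝ (Fin n) →L[ℝ] ℝ).fderiv
    have hg : HasFDerivAt (fun x : EuclideanSpace ℝ (Fin n) => clm c x (v x))
        ((clm c x).comp (fderiv ℝ v x) + ((clm c).flip (v x))) x := by
      have := (clm c).hasFDerivAt (x := x) |>.clm_apply hv.hasFDerivAt
      exact this
    have hg2 := (c k).hasFDerivAt.comp x hg
    have hg3 : HasFDerivAt (fun x : EuclideanSpace ℝ (Fin n) => c k (clm c x (v x))) _ x := hg2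
    rw [fderiv_fun_add (hu.inner ℝ hg3.differentiableAt) (hx.fun_mul (hu.inner ℝ hv)),
      fderiv_fun_mul hx (hu.inner ℝ hv), _root_.add_apply, _root_.add_apply,
      fderiv_inner_apply ℝ hu hg3.differentiableAt, hg3.fderiv, hx', _root_.smul_apply,
      _root_.smul_apply, fderiv_inner_apply ℝ hu hv]
    simp only [ContinuousLinearMap.comp_apply, _root_.add_apply, ContinuousLinearMap.flip_apply,
      clm_single, map_add, hc.sq, inner_add_right, inner_neg_right, smul_eq_mul]
    simp
    ring
  simp only [e1]
  have e2 : ∀ k : Fin n, inner ℝ (fderiv ℝ u x (EuclideanSpace.single k 1)) (c k (clm c x (v x))) =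
      inner ℝ (clm c x (c k (fderiv ℝ u x (EuclideanSpace.single k 1)))) (v x) := by
    intro k
    rw [hs.cinner, hs k, neg_neg]
  simp only [e2]
  simp only [hc.anti, inner_sub_right, inner_neg_right, inner_smul_right]
  simp only [opA, rdirac, map_sum, inner_add_left, inner_add_right, sum_inner, inner_sum]
  rw [eul_sum (fderiv ℝ u x) x, eul_sum (fderiv ℝ v x) x]
  simp only [sum_inner, inner_sum, ← Finset.sum_add_distrib, ← Finset.sum_sub_distrib]
  refine Finset.sum_congr rfl fun k _ => ?_
  rw [inner_smul_left, inner_smul_right]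
  simp
  ring

lemma opA_continuous (c : Fin n → V →L[ℝ] V) {u : EuclideanSpace ℝ (Fin n) → V}
    (hu : ContDiff ℝ 1 u) : Continuous (opA c u) := by
  have h1 := rdirac_continuous c hu
  have h2 := hu.continuous_fderiv one_ne_zero
  have h3 := (clm c).continuous
  unfold opA
  fun_prop

lemma opA_compact (c : Fin n → V →L[ℝ] V) {u : EuclideanSpace ℝ (Fin n) → V}
    (hu : HasCompactSupport u) : HasCompactSupport (opA c u) := by
  refine (hu.fderiv ℝ).mono ?_
  intro x hx h
  apply hx
  simp [opA, rdirac, h]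

lemma opA_symm {c : Fin n → V →L[ℝ] V} (hc : RCl c) (hs : Skew c) {u v : EuclideanSpace ℝ (Fin n) → V}
    (hu : ContDiff ℝ 1 u) (hv : ContDiff ℝ 1 v) (hcu : HasCompactSupport u) (hcv : HasCompactSupport v) :
    ∫ x, inner ℝ (opA c u x) (v x) = ∫ x, inner ℝ (u x) (opA c v x) := by
  have i1 : Integrable (fun x => inner ℝ (opA c u x) (v x)) := by
    refine Continuous.integrable_of_hasCompactSupport
      ((opA_continuous c hu).inner hv.continuous) (hcv.mono ?_)
    intro x hx h; apply hx; simp [h]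
  have i2 : Integrable (fun x => inner ℝ (u x) (opA c v x)) := by
    refine Continuous.integrable_of_hasCompactSupport
      (hu.continuous.inner (opA_continuous c hv)) (hcu.mono ?_)
    intro x hx h; apply hx; simp [h]
  rw [← sub_eq_zero, ← integral_sub i1 i2]
  have := fun x => opA_div hc hs (hu.differentiable one_ne_zero x) (hv.differentiable one_ne_zero x)
  simp only [← this]
  have hf : ∀ k : Fin n, ContDiff ℝ 1 (fun x : EuclideanSpace ℝ (Fin n) =>
      inner ℝ (u x) (c k (clm c x (v x))) + x k * inner ℝ (u x) (v x)) := by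
    intro k
    have hx : ContDiff ℝ 1 (fun x : EuclideanSpace ℝ (Fin n) => x k) :=
      (EuclideanSpace.proj k : EuclideanSpace ℝ (Fin n) →L[ℝ] ℝ).contDiff
    have h1 : ContDiff ℝ 1 (fun x : EuclideanSpace ℝ (Fin n) => clm c x (v x)) :=
      (clm c).contDiff.clm_apply hv
    exact (hu.inner ℝ ((c k).contDiff.comp h1)).add (hx.mul (hu.inner ℝ hv))
  have hfc : ∀ k : Fin n, HasCompactSupport (fun x : EuclideanSpace ℝ (Fin n) =>
      inner ℝ (u x) (c k (clm c x (v x))) + x k * inner ℝ (u x) (v x)) := by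
    intro k
    refine hcu.mono ?_
    intro x hx h; apply hx; simp [h]
  rw [integral_finsetSum]
  · exact Finset.sum_eq_zero fun k _ => integral_fderiv_zero (hf k) (hfc k) _
  · intro k _
    have := (hf k).continuous_fderiv one_ne_zero
    refine Continuous.integrable_of_hasCompactSupport (by fun_prop) (((hfc k).fderiv ℝ).mono ?_)
    intro x hx h; apply hx; simp [h]

lemma opA_dil (c : Fin n → V →L[ℝ] V) {u : EuclideanSpace ℝ (Fin n) → V} (t : ℝ)
    (x : EuclideanSpace ℝ (Fin n)) : opA c (fun y => u (t • y)) x = opA c u (t • x) := by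
  simp only [opA, rdirac, fderiv_comp_smul, _root_.smul_apply, map_smul, map_sum]

lemma euler_int {f : EuclideanSpace ℝ (Fin n) → ℝ} (hf : ContDiff ℝ 1 f) (hcf : HasCompactSupport f) :
    ∫ x, (fderiv ℝ f x x + n * f x) = 0 := by
  have hx : ∀ k : Fin n, ContDiff ℝ 1 (fun x : EuclideanSpace ℝ (Fin n) => x k) := fun k =>
    (EuclideanSpace.proj k : EuclideanSpace ℝ (Fin n) →L[ℝ] ℝ).contDiff
  have e : ∀ x : EuclideanSpace ℝ (Fin n), fderiv ℝ f x x + n * f x =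
      ∑ k, fderiv ℝ (fun x : EuclideanSpace ℝ (Fin n) => x k * f x) x (EuclideanSpace.single k 1) := by
    intro x
    have hx' : ∀ k : Fin n, fderiv ℝ (fun x : EuclideanSpace ℝ (Fin n) => x k) x =
      (EuclideanSpace.proj k : EuclideanSpace ℝ (Fin n) →L[ℝ] ℝ) := fun k =>
      (EuclideanSpace.proj k : EuclideanSpace ℝ (Fin n) →L[ℝ] ℝ).fderiv
    rw [eul_sum (fderiv ℝ f x) x]
    have : ∀ k, fderiv ℝ (fun x : EuclideanSpace ℝ (Fin n) => x k * f x) x (EuclideanSpace.single k 1) =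
      x k • fderiv ℝ f x (EuclideanSpace.single k 1) + f x := by
      intro k
      rw [fderiv_fun_mul ((hx k).differentiable one_ne_zero x) (hf.differentiable one_ne_zero x), hx']
      simp
    simp [this, Finset.sum_add_distrib]
  simp only [e]
  have hf' : ∀ k : Fin n, ContDiff ℝ 1 (fun x : EuclideanSpace ℝ (Fin n) => x k * f x) :=
    fun k => (hx k).mul hf
  have hfc : ∀ k : Fin n, HasCompactSupport (fun x : EuclideanSpace ℝ (Fin n) => x k * f x) :=
    fun k => hcf.mul_left
  rw [integral_finsetSum]
  · exact Finset.sum_eq_zero fun k _ => integral_fderiv_zero (hf' k) (hfc k) _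
  · intro k _
    have := (hf' k).continuous_fderiv one_ne_zero
    refine Continuous.integrable_of_hasCompactSupport (by fun_prop) (((hfc k).fderiv ℝ).mono ?_)
    intro x hx h; apply hx; simp [h]

end Carl

section Cross
variable {n : ℕ} {V : Type*} [NormedAddCommGroup V] [InnerProductSpace ℝ V]
  [FiniteDimensional ℝ V]

lemma inner_cc_integrable {f g : EuclideanSpace ℝ (Fin n) → V} (hf : Continuous f) (hg : Continuous g)
    (hcf : HasCompactSupport f) : Integrable (fun x => inner ℝ (f x) (g x)) := by
  refine Continuous.integrable_of_hasCompactSupport (hf.inner hg) (hcf.mono ?_)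
  intro x hx h; apply hx; simp [h]

lemma cross_step {c : Fin n → V →L[ℝ] V} (hc : RCl c) (hs : Skew c) {w : EuclideanSpace ℝ (Fin n) → V}
    (hw : ContDiff ℝ 1 w) (hcw : HasCompactSupport w) {t : ℝ} (ht : 0 < t) :
    ((t ^ n)⁻¹ - 1) * ∫ x, inner ℝ (w x) (opA c w x) =
      ∫ x, inner ℝ (w (t • x) - w x) (opA c w (t • x) + opA c w x) := by
  have hwt : ContDiff ℝ 1 (fun x => w (t • x)) := hw.comp (contDiff_const_smul t)
  have hcwt : HasCompactSupport (fun x => w (t • x)) :=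
    hcw.comp_homeomorph (Homeomorph.smulOfNeZero t ht.ne')
  have hA := opA_continuous c hw
  have hAt : Continuous (fun x => opA c w (t • x)) := hA.comp (continuous_const_smul t)
  have hsym := opA_symm hc hs hwt hw hcwt hcw
  simp only [opA_dil] at hsym
  have i1 := inner_cc_integrable hwt.continuous hAt hcwt
  have i2 := inner_cc_integrable hwt.continuous hA hcwt
  have i3 := inner_cc_integrable hw.continuous hAt hcw
  have i4 := inner_cc_integrable hw.continuous hA hcw
  have e : ∀ x, inner ℝ (w (t • x) - w x) (opA c w (t • x) + opA c w x) =
      inner ℝ (w (t • x)) (opA c w (t • x)) + inner ℝ (w (t • x)) (opA c w x)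
      - inner ℝ (w x) (opA c w (t • x)) - inner ℝ (w x) (opA c w x) := by
    intro x
    rw [inner_sub_left, inner_add_right, inner_add_right]; ring
  simp only [e]
  rw [integral_sub, integral_sub, integral_add i1 i2]
  · have h1 := Measure.integral_comp_smul (volume : Measure (EuclideanSpace ℝ (Fin n)))
      (fun x => inner ℝ (w x) (opA c w x)) t
    rw [h1]
    have h2 : ∫ x, inner ℝ (w x) (opA c w (t • x)) = ∫ x, inner ℝ (w (t • x)) (opA c w x) := by
      rw [← hsym]; congr 1; ext x; rw [real_inner_comm]
    rw [h2]
    simp [abs_of_pos ht]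
    ring
  · exact i1.add i2
  · exact i3
  · exact (i1.add i2).sub i3
  · exact i4

lemma cross_term {c : Fin n → V →L[ℝ] V} (hc : RCl c) (hs : Skew c) {w : EuclideanSpace ℝ (Fin n) → V}
    (hw : ContDiff ℝ 1 w) (hcw : HasCompactSupport w) :
    2 * ∫ x, inner ℝ (fderiv ℝ w x x) (opA c w x) = - n * ∫ x, inner ℝ (w x) (opA c w x) := by
  set a : ℕ → ℝ := fun k => (k:ℝ) + 1 with ha
  have hapos : ∀ k, 0 < a k := fun k => by simp only [ha]; positivity
  have hat : Tendsto (fun k => ‖a k‖) atTop atTop := by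
    have : Tendsto a atTop atTop := tendsto_atTop_add_const_right _ _ tendsto_natCast_atTop_atTop
    exact tendsto_norm_atTop_atTop.comp this
  have hainv : Tendsto (fun k => (a k)⁻¹) atTop (nhds 0) := by
    have : Tendsto a atTop atTop := tendsto_atTop_add_const_right _ _ tendsto_natCast_atTop_atTop
    exact tendsto_inv_atTop_zero.comp this
  have L1 : Tendsto (fun k => a k * (((1 + (a k)⁻¹) ^ n)⁻¹ - 1)) atTop (nhds (-(n:ℝ))) := by
    have hd : HasDerivAt (fun t : ℝ => (t ^ n)⁻¹) (-(n:ℝ)) 1 := by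
      have := (hasDerivAt_pow n (1:ℝ)).fun_inv (by simp)
      simpa using this
    have := hd.hasFDerivAt.lim 1 hat
    simpa using this
  have hA := opA_continuous c hw
  have hcA := opA_compact c hcw
  obtain ⟨KA, hKA⟩ := hA.bounded_above_of_compact_support hcA
  obtain ⟨Lw, hLw⟩ := hw.lipschitzWith_of_hasCompactSupport hcw one_ne_zero
  obtain ⟨R, hR⟩ := hcw.isBounded.subset_closedBall (0 : EuclideanSpace ℝ (Fin n))
  have hz : ∀ x, R < ‖x‖ → w x = 0 := by
    intro x hx
    by_contra h
    have := hR (subset_tsupport _ h)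
    simp at this; linarith
  have L2 : Tendsto (fun k => ∫ x, inner ℝ (a k • (w ((1 + (a k)⁻¹) • x) - w x))
      (opA c w ((1 + (a k)⁻¹) • x) + opA c w x)) atTop
      (nhds (∫ x, inner ℝ (fderiv ℝ w x x) (opA c w x + opA c w x))) := by
    refine tendsto_integral_of_dominated_convergence
      ((closedBall (0 : EuclideanSpace ℝ (Fin n)) R).indicator (fun _ => (Lw * R) * (KA + KA))) ?_ ?_ ?_ ?_
    · intro k
      have := hw.continuous
      exact Continuous.aestronglyMeasurable (by fun_prop)
    · exact (integrable_indicator_iff isClosed_closedBall.measurableSet).2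
        (integrableOn_const (isCompact_closedBall _ _).measure_lt_top.ne)
    · intro k
      refine Eventually.of_forall fun x => ?_
      by_cases hx : ‖x‖ ≤ R
      · rw [Set.indicator_of_mem (by simpa using hx)]
        refine (norm_inner_le_norm _ _).trans ?_
        have h1 : ‖a k • (w ((1 + (a k)⁻¹) • x) - w x)‖ ≤ Lw * R := by
          rw [norm_smul, Real.norm_of_nonneg (hapos k).le]
          have := hLw.norm_sub_le ((1 + (a k)⁻¹) • x) x
          have e : (1 + (a k)⁻¹) • x - x = (a k)⁻¹ • x := by module
          rw [e, norm_smul, norm_inv, Real.norm_of_nonneg (hapos k).le] at this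
          calc a k * ‖w ((1 + (a k)⁻¹) • x) - w x‖ ≤ a k * (Lw * ((a k)⁻¹ * ‖x‖)) :=
                mul_le_mul_of_nonneg_left this (hapos k).le
            _ = Lw * ‖x‖ := by have := (hapos k).ne'; field_simp
            _ ≤ Lw * R := by gcongr
        exact mul_le_mul h1 ((norm_add_le _ _).trans (add_le_add (hKA _) (hKA _))) (norm_nonneg _)
          ((norm_nonneg _).trans h1)
      · push Not at hx
        rw [Set.indicator_of_notMem (by simpa using hx), hz x hx, hz]
        · simp
        · rw [norm_smul, Real.norm_of_nonneg (by have := hapos k; positivity)]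
          have : 0 ≤ (a k)⁻¹ := (inv_pos.2 (hapos k)).le
          nlinarith [norm_nonneg x]
    · refine Eventually.of_forall fun x => ?_
      refine Tendsto.inner ?_ ?_
      · have := (hw.differentiable one_ne_zero x).hasFDerivAt.lim x hat
        simpa [add_smul] using this
      · refine Tendsto.add ?_ tendsto_const_nhds
        have : Tendsto (fun k => (1 + (a k)⁻¹) • x) atTop (nhds ((1 + (0:ℝ)) • x)) :=
          (tendsto_const_nhds.add hainv).smul_const x
        have := (hA.tendsto _).comp this
        simpa [Function.comp_def] using this
  have L3 := L1.mul_const (∫ x, inner ℝ (w x) (opA c w x))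
  have e : ∀ k, a k * (((1 + (a k)⁻¹) ^ n)⁻¹ - 1) * ∫ x, inner ℝ (w x) (opA c w x) =
      ∫ x, inner ℝ (a k • (w ((1 + (a k)⁻¹) • x) - w x))
      (opA c w ((1 + (a k)⁻¹) • x) + opA c w x) := by
    intro k
    have h1 : 0 < 1 + (a k)⁻¹ := by have := hapos k; positivity
    simp only [real_inner_smul_left]
    rw [integral_const_mul, ← cross_step hc hs hw hcw h1, mul_assoc]
  simp only [e] at L3
  have h := tendsto_nhds_unique L2 L3
  rw [← h, ← integral_const_mul]
  congr 1; ext x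
  rw [inner_add_right]; ring

/-- the conjugated Carleman inequality -/
lemma carl_w {c : Fin n → V →L[ℝ] V} (hc : RCl c) (hs : Skew c) {w : EuclideanSpace ℝ (Fin n) → V}
    (hw : ContDiff ℝ 1 w) (hcw : HasCompactSupport w) (τ : ℝ) :
    2 * τ * ∫ x, ‖x‖ ^ 2 * ‖w x‖ ^ 2 ≤
      ∫ x, ‖clm c x (rdirac c w x) + (τ * (‖x‖ ^ 2 - 1)) • w x‖ ^ 2 := by
  have hA := opA_continuous c hw
  have hwc := hw.continuous
  have hdw := hw.continuous_fderiv one_ne_zero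
  have hdwx : Continuous (fun x => fderiv ℝ w x x) := by fun_prop
  have hcdw : HasCompactSupport (fun x => fderiv ℝ w x x) := by
    refine (hcw.fderiv ℝ).mono ?_
    intro x hx h; apply hx; simp [h]
  have hD := rdirac_continuous c hw
  have hcD := rdirac_compact c hcw
  have hcl := (clm c).continuous
  -- Euler identity
  have hq : ContDiff ℝ 1 (fun x : EuclideanSpace ℝ (Fin n) => ‖x‖ ^ 2) := contDiff_norm_sq ℝ
  have hg : ContDiff ℝ 1 (fun x : EuclideanSpace ℝ (Fin n) => τ * (‖x‖ ^ 2 - 1) + n / 2) := by fun_prop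
  have hf : ContDiff ℝ 1 (fun x => (τ * (‖x‖ ^ 2 - 1) + n / 2) * ‖w x‖ ^ 2) := hg.mul (hw.norm_sq ℝ)
  have hcf : HasCompactSupport (fun x => (τ * (‖x‖ ^ 2 - 1) + n / 2) * ‖w x‖ ^ 2) := by
    refine hcw.mono ?_
    intro x hx h; apply hx; simp [h]
  have he := euler_int hf hcf
  have hfd : ∀ x, fderiv ℝ (fun x => (τ * (‖x‖ ^ 2 - 1) + n / 2) * ‖w x‖ ^ 2) x x =
      2 * τ * (‖x‖ ^ 2 * ‖w x‖ ^ 2) + 2 * (τ * (‖x‖ ^ 2 - 1) + n / 2) * inner ℝ (w x) (fderiv ℝ w x x) := by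
    intro x
    have hwd := (hw.differentiable one_ne_zero x).hasFDerivAt.norm_sq
    have hgd : HasFDerivAt (fun x : EuclideanSpace ℝ (Fin n) => τ * (‖x‖ ^ 2 - 1) + n / 2)
        (τ • (2 • (innerSL ℝ x).comp (ContinuousLinearMap.id ℝ (EuclideanSpace ℝ (Fin n))))) x :=
      (((hasFDerivAt_id x).norm_sq.sub_const 1).const_mul τ).add_const _
    rw [(hgd.fun_mul hwd).fderiv]
    simp
    ring
  simp only [hfd] at he
  have i1 : Integrable (fun x : EuclideanSpace ℝ (Fin n) => ‖x‖ ^ 2 * ‖w x‖ ^ 2) := by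
    refine Continuous.integrable_of_hasCompactSupport (by fun_prop) (hcw.mono ?_)
    intro x hx h; apply hx; simp [h]
  have i2 : Integrable (fun x => inner ℝ (fderiv ℝ w x x) (opA c w x)) :=
    inner_cc_integrable hdwx hA hcdw
  have i3 : Integrable (fun x => inner ℝ (w x) (opA c w x)) :=
    inner_cc_integrable hwc hA hcw
  have i4 : Integrable (fun x => 2 * τ * (‖x‖ ^ 2 * ‖w x‖ ^ 2) + 2 * (τ * (‖x‖ ^ 2 - 1) + n / 2) * inner ℝ (w x) (fderiv ℝ w x x) + n * ((τ * (‖x‖ ^ 2 - 1) + n / 2) * ‖w x‖ ^ 2)) := by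
    refine Continuous.integrable_of_hasCompactSupport (by fun_prop) (hcw.mono ?_)
    intro x hx h; apply hx; simp [h]
  have i5 : Integrable (fun x => ‖clm c x (rdirac c w x) + (τ * (‖x‖ ^ 2 - 1)) • w x‖ ^ 2) := by
    refine Continuous.integrable_of_hasCompactSupport (by fun_prop) (HasCompactSupport.intro hcw ?_)
    intro x hx
    simp only [rdirac, image_eq_zero_of_notMem_tsupport hx, fderiv_of_notMem_tsupport ℝ hx]
    simp
  have hct := cross_term hc hs hw hcw
  have key : ∀ x, 2 * τ * (‖x‖ ^ 2 * ‖w x‖ ^ 2) - (2 * inner ℝ (fderiv ℝ w x x) (opA c w x)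
      + n * inner ℝ (w x) (opA c w x)) - (2 * τ * (‖x‖ ^ 2 * ‖w x‖ ^ 2) + 2 * (τ * (‖x‖ ^ 2 - 1) + n / 2) * inner ℝ (w x) (fderiv ℝ w x x) + n * ((τ * (‖x‖ ^ 2 - 1) + n / 2) * ‖w x‖ ^ 2))
      ≤ ‖clm c x (rdirac c w x) + (τ * (‖x‖ ^ 2 - 1)) • w x‖ ^ 2 := by
    intro x
    set A := opA c w x with hAd
    set g := τ * (‖x‖ ^ 2 - 1) + n / 2 with hgd
    set E := fderiv ℝ w x x with hE
    have e1 : clm c x (rdirac c w x) + (τ * (‖x‖ ^ 2 - 1)) • w x =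
        (A + g • w x) - (E + ((n:ℝ)/2) • w x) := by
      rw [hAd, hgd, opA]; module
    rw [e1, norm_sub_sq_real, inner_add_left, inner_add_right, inner_add_right, inner_smul_left,
      inner_smul_left, inner_smul_right, inner_smul_right, real_inner_self_eq_norm_sq,
      real_inner_comm E A, real_inner_comm (w x) A]
    simp only [conj_trivial]
    nlinarith [sq_nonneg ‖A + g • w x‖, sq_nonneg ‖E + ((n:ℝ)/2) • w x‖]
  have := integral_mono (((i1.const_mul (2*τ)).sub ((i2.const_mul 2).add (i3.const_mul (n:ℝ)))).sub i4) i5 key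
  refine le_trans (le_of_eq ?_) this
  have j1 := integral_sub ((i1.const_mul (2*τ)).sub ((i2.const_mul 2).add (i3.const_mul (n:ℝ)))) i4
  have j2 := integral_sub (i1.const_mul (2*τ)) ((i2.const_mul 2).add (i3.const_mul (n:ℝ)))
  have j3 := integral_add (i2.const_mul 2) (i3.const_mul (n:ℝ))
  rw [integral_const_mul, integral_const_mul, hct] at j3
  rw [integral_const_mul] at j2
  rw [he, sub_zero] at j1
  refine Eq.trans ?_ j1.symm
  refine Eq.trans ?_ j2.symm
  rw [show (∫ a, ((fun x => 2 * inner ℝ ((fderiv ℝ w x) x) (opA c w x)) + fun x => ↑n * inner ℝ (w x) (opA c w x)) a) = _ from j3]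
  ring

end Cross

section Weight
variable {n : ℕ} {V : Type*} [NormedAddCommGroup V] [InnerProductSpace ℝ V]
  [FiniteDimensional ℝ V]

/-- Carleman weight -/
def cw (τ : ℝ) (x : EuclideanSpace ℝ (Fin n)) : ℝ :=
  Real.exp (τ / 2 * (‖x‖ ^ 2 - Real.log (‖x‖ ^ 2)))

lemma cw_pos (τ : ℝ) (x : EuclideanSpace ℝ (Fin n)) : 0 < cw τ x := Real.exp_pos _

lemma cw_measurable (τ : ℝ) : Measurable (cw τ : EuclideanSpace ℝ (Fin n) → ℝ) := by
  unfold cw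
  fun_prop

lemma cw_hasFDerivAt (τ : ℝ) {x : EuclideanSpace ℝ (Fin n)} (hx : x ≠ 0) :
    HasFDerivAt (cw τ) ((cw τ x * (τ * (1 - (‖x‖ ^ 2)⁻¹))) • innerSL ℝ x) x := by
  have hq : HasFDerivAt (fun x : EuclideanSpace ℝ (Fin n) => ‖x‖ ^ 2) _ x := (hasFDerivAt_id x).norm_sq
  have hne : ‖x‖ ^ 2 ≠ 0 := by have := norm_pos_iff.2 hx; positivity
  have h := ((hq.fun_sub (hq.log hne)).const_mul (τ / 2)).exp
  refine h.congr_fderiv ?_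
  ext v
  simp [cw]
  ring

lemma cw_contDiffAt (τ : ℝ) {x : EuclideanSpace ℝ (Fin n)} (hx : x ≠ 0) :
    ContDiffAt ℝ 1 (cw τ) x := by
  have hne : ‖x‖ ^ 2 ≠ 0 := by have := norm_pos_iff.2 hx; positivity
  have hq : ContDiffAt ℝ 1 (fun x : EuclideanSpace ℝ (Fin n) => ‖x‖ ^ 2) x := (contDiff_norm_sq ℝ).contDiffAt
  exact (contDiffAt_const.mul (hq.sub (hq.log hne))).exp

lemma cw_anti {τ : ℝ} (hτ : 0 ≤ τ) {a b : ℝ} (ha : 0 < a) (hab : a ≤ b) (hb : b ≤ 1) :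
    Real.exp (τ / 2 * (b ^ 2 - Real.log (b ^ 2))) ≤ Real.exp (τ / 2 * (a ^ 2 - Real.log (a ^ 2))) := by
  have hb0 : 0 < b := ha.trans_le hab
  have h1 := Real.one_sub_inv_le_log_of_pos (x := b ^ 2 / a ^ 2) (by positivity)
  rw [Real.log_div (by positivity) (by positivity)] at h1
  have h2 : b ^ 2 - a ^ 2 ≤ 1 - (b ^ 2 / a ^ 2)⁻¹ := by
    rw [inv_div]
    have : 1 - a ^ 2 / b ^ 2 = (b ^ 2 - a ^ 2) / b ^ 2 := by field_simp
    rw [this, le_div_iff₀ (by positivity)]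
    have : 0 ≤ b ^ 2 - a ^ 2 := by nlinarith
    have : b ^ 2 ≤ 1 := by nlinarith
    nlinarith
  apply Real.exp_le_exp.2
  apply mul_le_mul_of_nonneg_left _ (by linarith)
  linarith

lemma cw_bound {τ : ℝ} (hτ : 0 ≤ τ) {m : ℕ} (hm : τ ≤ m) {x : EuclideanSpace ℝ (Fin n)}
    (hx : x ≠ 0) (hx1 : ‖x‖ ≤ 1) : cw τ x * ‖x‖ ^ m ≤ Real.exp (τ / 2) := by
  have hp := norm_pos_iff.2 hx
  have e : ‖x‖ ^ m = Real.exp (m * Real.log ‖x‖) := by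
    rw [Real.exp_nat_mul, Real.exp_log hp]
  rw [e, cw, ← Real.exp_add]
  apply Real.exp_le_exp.2
  rw [Real.log_pow]
  have hl := Real.log_nonpos hp.le hx1
  have : ‖x‖ ^ 2 ≤ 1 := by nlinarith
  push_cast
  nlinarith

lemma carleman {c : Fin n → V →L[ℝ] V} (hc : RCl c) (hs : Skew c) {u : EuclideanSpace ℝ (Fin n) → V}
    (hu : ContDiff ℝ 1 u) (hcu : HasCompactSupport u) (h0 : (0 : EuclideanSpace ℝ (Fin n)) ∉ tsupport u)
    (τ : ℝ) :
    2 * τ * ∫ x, ‖x‖ ^ 2 * (cw τ x * ‖u x‖) ^ 2 ≤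
      ∫ x, (cw τ x * (‖x‖ * ‖rdirac c u x‖)) ^ 2 := by
  have hw : ContDiff ℝ 1 (fun x => cw τ x • u x) := by
    refine contDiff_iff_contDiffAt.2 fun x => ?_
    by_cases hx' : x ∈ tsupport u
    swap
    · refine contDiffAt_const (c := (0:V)) |>.congr_of_eventuallyEq ?_
      filter_upwards [notMem_tsupport_iff_eventuallyEq.1 hx'] with y hy
      simp [hy]
    have hx0 : x ≠ 0 := fun h => h0 (h ▸ hx')
    exact (cw_contDiffAt τ hx0).smul hu.contDiffAt
  have hcw : HasCompactSupport (fun x => cw τ x • u x) := hcu.smul_left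
  have h := carl_w hc hs hw hcw τ
  refine le_trans (le_of_eq ?_) (h.trans (le_of_eq ?_))
  · congr 2; ext x
    rw [norm_smul, Real.norm_of_nonneg (cw_pos τ x).le]
  · congr 1; ext x
    congr 1
    by_cases hx : x ∈ tsupport u
    · have hx0 : x ≠ 0 := fun h => h0 (h ▸ hx)
      have hd := cw_hasFDerivAt τ hx0
      rw [rdirac_smul c hd.differentiableAt (hu.differentiable one_ne_zero x), hd.fderiv]
      have e : ∑ j, ((cw τ x * (τ * (1 - (‖x‖ ^ 2)⁻¹))) • innerSL ℝ x) (EuclideanSpace.single j 1) • c j (u x)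
          = (cw τ x * (τ * (1 - (‖x‖ ^ 2)⁻¹))) • clm c x (u x) := by
        rw [clm_apply2, Finset.smul_sum]
        refine Finset.sum_congr rfl fun j _ => ?_
        rw [_root_.smul_apply, innerSL_apply_apply, EuclideanSpace.inner_single_right]
        simp [smul_smul]
      rw [e, map_add, map_smul, map_smul, hc.clm_sq]
      have hne : ‖x‖ ^ 2 ≠ 0 := by have := norm_pos_iff.2 hx0; positivity
      have e2 : cw τ x • clm c x (rdirac c u x) + (cw τ x * (τ * (1 - (‖x‖ ^ 2)⁻¹))) • -(‖x‖ ^ 2 • u x)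
          + (τ * (‖x‖ ^ 2 - 1)) • cw τ x • u x = cw τ x • clm c x (rdirac c u x) := by
        rw [smul_neg, smul_smul, smul_smul]
        have : cw τ x * (τ * (1 - (‖x‖ ^ 2)⁻¹)) * ‖x‖ ^ 2 = τ * (‖x‖ ^ 2 - 1) * cw τ x := by
          field_simp
        rw [this]; abel
      rw [e2, norm_smul, Real.norm_of_nonneg (cw_pos τ x).le, skew_clm_norm hs hc]
    · have hx' : x ∉ tsupport (fun x => cw τ x • u x) := fun h =>
        hx (tsupport_smul_subset_right (cw τ) u h)
      simp [rdirac, fderiv_of_notMem_tsupport ℝ hx, fderiv_of_notMem_tsupport ℝ hx',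
        image_eq_zero_of_notMem_tsupport hx]

end Weight

section Sucp
variable {n : ℕ} {V : Type*} [NormedAddCommGroup V] [InnerProductSpace ℝ V]
  [FiniteDimensional ℝ V]

/-- Carleman estimate for a function vanishing to infinite order -/
lemma carleman_inf {c : Fin n → V →L[ℝ] V} (hc : RCl c) (hs : Skew c) {φ : EuclideanSpace ℝ (Fin n) → V}
    (hφ : ContDiff ℝ 1 φ) (hsup : tsupport φ ⊆ ball 0 1) {τ B : ℝ} (hcφ : HasCompactSupport φ)
    (hB1 : ∀ x, cw τ x * ‖φ x‖ ≤ B)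
    (hB2 : ∀ x, cw τ x * (‖x‖ * ‖rdirac c φ x‖) ≤ B) :
    2 * τ * ∫ x, ‖x‖ ^ 2 * (cw τ x * ‖φ x‖) ^ 2 ≤
      ∫ x, (cw τ x * (‖x‖ * ‖rdirac c φ x‖)) ^ 2 := by
  have hB0 : 0 ≤ B := le_trans (mul_nonneg (cw_pos τ 0).le (norm_nonneg _)) (hB1 0)
  let b : ContDiffBump (0 : EuclideanSpace ℝ (Fin n)) := ⟨1, 2, one_pos, one_lt_two⟩
  have hb1 : ContDiff ℝ 1 b := b.contDiff
  have hbc : HasCompactSupport b := b.hasCompactSupport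
  obtain ⟨M, hM⟩ := (hb1.continuous_fderiv one_ne_zero).bounded_above_of_compact_support (hbc.fderiv ℝ)
  have hM0 : 0 ≤ M := (norm_nonneg _).trans (hM 0)
  set η : ℕ → EuclideanSpace ℝ (Fin n) → ℝ := fun k x => 1 - b (((k:ℝ)+1) • x) with hη
  have hηC : ∀ k, ContDiff ℝ 1 (η k) := fun k =>
    contDiff_const.sub (hb1.comp (contDiff_const_smul _))
  have hη01 : ∀ k x, |η k x| ≤ 1 := by
    intro k x
    have h1 := b.nonneg (x := ((k:ℝ)+1) • x)
    have h2 := b.le_one (x := ((k:ℝ)+1) • x)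
    simp only [hη]
    rw [abs_le]; constructor <;> linarith
  have hηd : ∀ k x, ‖x‖ * ‖fderiv ℝ (η k) x‖ ≤ 2 * M := by
    intro k x
    have e : fderiv ℝ (η k) x = -(((k:ℝ)+1) • fderiv ℝ b (((k:ℝ)+1) • x)) := by
      simp only [hη]
      rw [fderiv_const_sub, fderiv_comp_smul]
    by_cases hx : ‖((k:ℝ)+1) • x‖ ≤ 2
    · rw [e, norm_neg, norm_smul, Real.norm_of_nonneg (by positivity)]
      rw [norm_smul, Real.norm_of_nonneg (by positivity)] at hx
      calc ‖x‖ * (((k:ℝ)+1) * ‖fderiv ℝ b (((k:ℝ)+1) • x)‖)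
          = (((k:ℝ)+1) * ‖x‖) * ‖fderiv ℝ b (((k:ℝ)+1) • x)‖ := by ring
        _ ≤ 2 * M := mul_le_mul hx (hM _) (norm_nonneg _) (by norm_num)
    · have : fderiv ℝ b (((k:ℝ)+1) • x) = 0 := by
        apply fderiv_of_notMem_tsupport
        rw [b.tsupport_eq]
        simpa using hx
      rw [e, this]
      simp [hM0]
  have hev : ∀ x : EuclideanSpace ℝ (Fin n), x ≠ 0 → ∀ᶠ k in atTop, η k =ᶠ[nhds x] fun _ => 1 := by
    intro x hx
    have hp := norm_pos_iff.2 hx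
    obtain ⟨k0, hk0⟩ := exists_nat_gt (2 / ‖x‖)
    filter_upwards [eventually_ge_atTop k0] with k hk
    have hk' : (k0:ℝ) ≤ k := by exact_mod_cast hk
    have hlt : 2 < ‖((k:ℝ)+1) • x‖ := by
      rw [norm_smul, Real.norm_of_nonneg (by positivity)]
      rw [div_lt_iff₀ hp] at hk0
      nlinarith
    have : ∀ᶠ y in nhds x, 2 < ‖((k:ℝ)+1) • y‖ :=
      (show Continuous (fun y : EuclideanSpace ℝ (Fin n) => ‖((k:ℝ)+1) • y‖) by fun_prop).continuousAt.eventually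
        (lt_mem_nhds hlt)
    filter_upwards [this] with y hy
    simp only [hη]
    rw [b.zero_of_le_dist (by simpa using hy.le)]
    simp
  have hu : ∀ k, ContDiff ℝ 1 (fun x => η k x • φ x) := fun k => (hηC k).smul hφ
  have hcu : ∀ k, HasCompactSupport (fun x => η k x • φ x) := fun k => hcφ.smul_left
  have hu0 : ∀ k, (0 : EuclideanSpace ℝ (Fin n)) ∉ tsupport (fun x => η k x • φ x) := by
    intro k
    rw [notMem_tsupport_iff_eventuallyEq]
    have : ∀ᶠ y : EuclideanSpace ℝ (Fin n) in nhds 0, ‖((k:ℝ)+1) • y‖ < 1 :=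
      (show Continuous (fun y : EuclideanSpace ℝ (Fin n) => ‖((k:ℝ)+1) • y‖) by fun_prop).continuousAt.eventually
        (gt_mem_nhds (by simp))
    filter_upwards [this] with y hy
    simp only [hη]
    rw [b.one_of_mem_closedBall (by simpa using hy.le)]
    simp
  have hk := fun k => carleman hc hs (hu k) (hcu k) (hu0 k) τ
  have hzero : ∀ x, x ∉ ball (0 : EuclideanSpace ℝ (Fin n)) 1 → φ x = 0 := fun x hx =>
    image_eq_zero_of_notMem_tsupport fun h => hx (hsup h)
  set S := ∑ j, ‖c j‖ with hS
  have hS0 : 0 ≤ S := Finset.sum_nonneg fun _ _ => norm_nonneg _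
  have hDk : ∀ k x, cw τ x * (‖x‖ * ‖rdirac c (fun x => η k x • φ x) x‖) ≤ B + S * (2 * M) * B := by
    intro k x
    rw [rdirac_smul c ((hηC k).differentiable one_ne_zero x) (hφ.differentiable one_ne_zero x)]
    have h1 := rdirac_smul_rest c (fderiv ℝ (η k) x) (φ x)
    have h2 : ‖η k x • rdirac c φ x‖ ≤ ‖rdirac c φ x‖ := by
      rw [norm_smul]
      exact mul_le_of_le_one_left (norm_nonneg _) (hη01 k x)
    have hp := cw_pos τ x
    calc _ ≤ cw τ x * (‖x‖ * (‖rdirac c φ x‖ + S * (‖fderiv ℝ (η k) x‖ * ‖φ x‖))) := by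
          gcongr
          exact (norm_add_le _ _).trans (add_le_add h2 h1)
      _ = cw τ x * (‖x‖ * ‖rdirac c φ x‖) + S * (‖x‖ * ‖fderiv ℝ (η k) x‖) * (cw τ x * ‖φ x‖) := by ring
      _ ≤ B + S * (2 * M) * B := by
          refine add_le_add (hB2 x) ?_
          refine mul_le_mul ?_ (hB1 x) (by positivity) (by positivity)
          exact mul_le_mul_of_nonneg_left (hηd k x) hS0
  have hcwm := cw_measurable (n := n) τ
  have hconst : ∀ K : ℝ, Integrable ((ball (0 : EuclideanSpace ℝ (Fin n)) 1).indicator (fun _ => K)) :=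
    fun K => (integrable_indicator_iff measurableSet_ball).2 (integrableOn_const measure_ball_lt_top.ne)
  have T1 : Tendsto (fun k => ∫ x, ‖x‖ ^ 2 * (cw τ x * ‖η k x • φ x‖) ^ 2) atTop
      (nhds (∫ x, ‖x‖ ^ 2 * (cw τ x * ‖φ x‖) ^ 2)) := by
    refine tendsto_integral_of_dominated_convergence _ ?_ (hconst (1 * B ^ 2)) ?_ ?_
    · intro k
      have := ((hu k).continuous.norm).measurable
      exact Measurable.aestronglyMeasurable (by fun_prop)
    · intro k
      refine Eventually.of_forall fun x => ?_
      by_cases hx : x ∈ ball (0 : EuclideanSpace ℝ (Fin n)) 1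
      · rw [Set.indicator_of_mem hx, Real.norm_of_nonneg (by positivity)]
        have hx1 : ‖x‖ ≤ 1 := by simpa using (mem_ball_zero_iff.1 hx).le
        have hp := cw_pos τ x
        gcongr
        · nlinarith [norm_nonneg x]
        · refine le_trans ?_ (hB1 x)
          gcongr
          rw [norm_smul]
          exact mul_le_of_le_one_left (norm_nonneg _) (hη01 k x)
      · rw [Set.indicator_of_notMem hx, hzero x hx]
        simp
    · refine Eventually.of_forall fun x => ?_
      by_cases hx : x = 0
      · simp [hx]
      · refine tendsto_nhds_of_eventually_eq ?_
        filter_upwards [hev x hx] with k hk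
        rw [hk.eq_of_nhds, one_smul]
  have T2 : Tendsto (fun k => ∫ x, (cw τ x * (‖x‖ * ‖rdirac c (fun x => η k x • φ x) x‖)) ^ 2) atTop
      (nhds (∫ x, (cw τ x * (‖x‖ * ‖rdirac c φ x‖)) ^ 2)) := by
    refine tendsto_integral_of_dominated_convergence _ ?_ (hconst ((B + S * (2 * M) * B) ^ 2)) ?_ ?_
    · intro k
      have := ((rdirac_continuous c (hu k)).norm).measurable
      exact Measurable.aestronglyMeasurable (by fun_prop)
    · intro k
      refine Eventually.of_forall fun x => ?_
      by_cases hx : x ∈ ball (0 : EuclideanSpace ℝ (Fin n)) 1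
      · rw [Set.indicator_of_mem hx, Real.norm_of_nonneg (by positivity)]
        have hp := cw_pos τ x
        gcongr
        exact hDk k x
      · rw [Set.indicator_of_notMem hx]
        have : x ∉ tsupport (fun x => η k x • φ x) := fun h =>
          hx (hsup (tsupport_smul_subset_right (η k) φ h))
        simp [rdirac, fderiv_of_notMem_tsupport ℝ this]
    · refine Eventually.of_forall fun x => ?_
      by_cases hx : x = 0
      · simp [hx]
      · refine tendsto_nhds_of_eventually_eq ?_
        filter_upwards [hev x hx] with k hk
        have : (fun x => η k x • φ x) =ᶠ[nhds x] φ := by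
          filter_upwards [hk] with y hy
          simp [hy]
        simp only [rdirac, this.fderiv_eq]
  exact le_of_tendsto_of_tendsto' (T1.const_mul (2 * τ)) T2 hk

lemma sucp_core {c : Fin n → V →L[ℝ] V} (hc : RCl c) (hs : Skew c) {φ : EuclideanSpace ℝ (Fin n) → V}
    (hφ : ContDiff ℝ 1 φ) (hsup : tsupport φ ⊆ ball 0 1) (hcφ : HasCompactSupport φ)
    {R1 C' : ℝ} (hR0 : 0 < R1) (hR1 : R1 < 1) (hC' : 0 ≤ C')
    (hD : ∀ x ∈ ball (0 : EuclideanSpace ℝ (Fin n)) R1, ‖rdirac c φ x‖ ≤ C' * ‖φ x‖)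
    (hV : ∀ m : ℕ, ∃ K : ℝ, ∀ x, ‖φ x‖ ≤ K * ‖x‖ ^ m) :
    ∀ x ∈ ball (0 : EuclideanSpace ℝ (Fin n)) R1, φ x = 0 := by
  have hDc := rdirac_continuous c hφ
  obtain ⟨M0, hM0⟩ := hDc.bounded_above_of_compact_support (rdirac_compact c hcφ)
  have hM00 : 0 ≤ M0 := (norm_nonneg _).trans (hM0 0)
  have hφ0 : φ 0 = 0 := by
    obtain ⟨K, hK⟩ := hV 1
    have := hK 0
    simpa using this
  have hzero : ∀ x, x ∉ ball (0 : EuclideanSpace ℝ (Fin n)) 1 → φ x = 0 := fun x hx =>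
    image_eq_zero_of_notMem_tsupport fun h => hx (hsup h)
  have hzeroD : ∀ x, x ∉ ball (0 : EuclideanSpace ℝ (Fin n)) 1 → rdirac c φ x = 0 := fun x hx => by
    simp [rdirac, fderiv_of_notMem_tsupport ℝ (fun h => hx (hsup h))]
  have hconst : ∀ K : ℝ, Integrable ((ball (0 : EuclideanSpace ℝ (Fin n)) 1).indicator (fun _ => K)) :=
    fun K => (integrable_indicator_iff measurableSet_ball).2 (integrableOn_const measure_ball_lt_top.ne)
  set κ := ∫ x in ball (0 : EuclideanSpace ℝ (Fin n)) R1, ‖x‖ ^ 2 * ‖φ x‖ ^ 2 with hκ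
  have hgc : Continuous (fun x : EuclideanSpace ℝ (Fin n) => ‖x‖ ^ 2 * ‖φ x‖ ^ 2) := by
    have := hφ.continuous; fun_prop
  have hgi : Integrable (fun x : EuclideanSpace ℝ (Fin n) => ‖x‖ ^ 2 * ‖φ x‖ ^ 2) := by
    refine hgc.integrable_of_hasCompactSupport (hcφ.mono ?_)
    intro x hx h; apply hx; simp [h]
  set vol := (volume : Measure (EuclideanSpace ℝ (Fin n))).real (ball 0 1) with hvol
  have main : ∀ τ : ℝ, C' ^ 2 ≤ 2 * τ → (2 * τ - C' ^ 2) * κ ≤ M0 ^ 2 * vol := by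
    intro τ hτC
    have hτ : 0 ≤ τ := by nlinarith [sq_nonneg C']
    obtain ⟨m, hm⟩ := exists_nat_ge τ
    obtain ⟨K, hK⟩ := hV m
    set ER := Real.exp (τ / 2 * (R1 ^ 2 - Real.log (R1 ^ 2))) with hER
    have hERp : 0 < ER := Real.exp_pos _
    have hle : ∀ x : EuclideanSpace ℝ (Fin n), R1 ≤ ‖x‖ → ‖x‖ ≤ 1 → cw τ x ≤ ER := fun x h1 h2 =>
      cw_anti hτ hR0 h1 h2
    have hge : ∀ x : EuclideanSpace ℝ (Fin n), x ≠ 0 → ‖x‖ ≤ R1 → ER ≤ cw τ x := fun x h1 h2 =>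
      cw_anti hτ (norm_pos_iff.2 h1) h2 hR1.le
    have hB1 : ∀ x, cw τ x * ‖φ x‖ ≤ |K| * Real.exp (τ / 2) := by
      intro x
      by_cases hx0 : x = 0
      · rw [hx0, hφ0]; simp; positivity
      by_cases hx : x ∈ ball (0 : EuclideanSpace ℝ (Fin n)) 1
      · have := cw_bound hτ hm hx0 (mem_ball_zero_iff.1 hx).le
        have hp := cw_pos τ x
        calc cw τ x * ‖φ x‖ ≤ cw τ x * (|K| * ‖x‖ ^ m) := by
              gcongr
              exact (hK x).trans (mul_le_mul_of_nonneg_right (le_abs_self K) (by positivity))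
          _ = |K| * (cw τ x * ‖x‖ ^ m) := by ring
          _ ≤ _ := by gcongr
      · rw [hzero x hx]; simp; positivity
    set B := max (C' * (|K| * Real.exp (τ / 2))) (max (ER * M0) (|K| * Real.exp (τ / 2))) with hB
    have hB2 : ∀ x, cw τ x * (‖x‖ * ‖rdirac c φ x‖) ≤ B := by
      intro x
      have hp := cw_pos τ x
      by_cases hx : x ∈ ball (0 : EuclideanSpace ℝ (Fin n)) 1
      · have hx1 := (mem_ball_zero_iff.1 hx).le
        by_cases hxR : ‖x‖ < R1
        · refine le_trans ?_ (le_max_left _ _)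
          have := hD x (mem_ball_zero_iff.2 hxR)
          calc _ ≤ cw τ x * (1 * (C' * ‖φ x‖)) := by gcongr
            _ = C' * (cw τ x * ‖φ x‖) := by ring
            _ ≤ _ := mul_le_mul_of_nonneg_left (hB1 x) hC'
        · push Not at hxR
          refine le_trans ?_ ((le_max_left _ _).trans (le_max_right _ _))
          calc _ ≤ ER * (1 * M0) := by
                gcongr
                · exact hle x hxR hx1
                · exact hM0 x
            _ = _ := by ring
      · rw [hzeroD x hx]
        simp only [norm_zero, mul_zero]
        exact le_trans (by positivity) ((le_max_right _ _).trans (le_max_right _ _))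
    have hcar := carleman_inf hc hs hφ hsup (B := B) hcφ
      (fun x => (hB1 x).trans ((le_max_right _ _).trans (le_max_right _ _))) hB2
    have hcwm := cw_measurable (n := n) τ
    have hφm := hφ.continuous.norm.measurable
    have hDm := hDc.norm.measurable
    have hB0 : 0 ≤ B := le_trans (by positivity) ((le_max_right _ _).trans (le_max_right _ _))
    have I1 : Integrable (fun x => ‖x‖ ^ 2 * (cw τ x * ‖φ x‖) ^ 2) := by
      refine (hconst (1 * B ^ 2)).mono' (Measurable.aestronglyMeasurable (by fun_prop))
        (Eventually.of_forall fun x => ?_)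
      have hp := cw_pos τ x
      by_cases hx : x ∈ ball (0 : EuclideanSpace ℝ (Fin n)) 1
      · rw [Set.indicator_of_mem hx, Real.norm_of_nonneg (by positivity)]
        have hx1 := (mem_ball_zero_iff.1 hx).le
        gcongr
        · nlinarith [norm_nonneg x]
        · exact (hB1 x).trans ((le_max_right _ _).trans (le_max_right _ _))
      · rw [Set.indicator_of_notMem hx, hzero x hx]; simp
    have I2 : Integrable (fun x => (cw τ x * (‖x‖ * ‖rdirac c φ x‖)) ^ 2) := by
      refine (hconst (B ^ 2)).mono' (Measurable.aestronglyMeasurable (by fun_prop))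
        (Eventually.of_forall fun x => ?_)
      have hp := cw_pos τ x
      by_cases hx : x ∈ ball (0 : EuclideanSpace ℝ (Fin n)) 1
      · rw [Set.indicator_of_mem hx, Real.norm_of_nonneg (by positivity)]
        gcongr
        exact hB2 x
      · rw [Set.indicator_of_notMem hx, hzeroD x hx]; simp
    have h1 : ∫ x, (cw τ x * (‖x‖ * ‖rdirac c φ x‖)) ^ 2 ≤
        C' ^ 2 * (∫ x, ‖x‖ ^ 2 * (cw τ x * ‖φ x‖) ^ 2) + (ER * M0) ^ 2 * vol := by
      have e : (ER * M0) ^ 2 * vol = ∫ x, (ball (0 : EuclideanSpace ℝ (Fin n)) 1).indicator (fun _ => (ER * M0) ^ 2) x := by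
        rw [integral_indicator measurableSet_ball, setIntegral_const, smul_eq_mul, mul_comm]
      rw [e, ← integral_const_mul, ← integral_add (I1.const_mul _) (hconst _)]
      refine integral_mono I2 ((I1.const_mul _).add (hconst _)) fun x => ?_
      have hp := cw_pos τ x
      simp only [Pi.add_apply]
      by_cases hx : x ∈ ball (0 : EuclideanSpace ℝ (Fin n)) 1
      · rw [Set.indicator_of_mem hx]
        have hx1 := (mem_ball_zero_iff.1 hx).le
        by_cases hxR : ‖x‖ < R1
        · have := hD x (mem_ball_zero_iff.2 hxR)
          calc (cw τ x * (‖x‖ * ‖rdirac c φ x‖)) ^ 2 ≤ (cw τ x * (‖x‖ * (C' * ‖φ x‖))) ^ 2 := by gcongr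
            _ = C' ^ 2 * (‖x‖ ^ 2 * (cw τ x * ‖φ x‖) ^ 2) := by ring
            _ ≤ _ := le_add_of_nonneg_right (by positivity)
        · push Not at hxR
          calc (cw τ x * (‖x‖ * ‖rdirac c φ x‖)) ^ 2 ≤ (ER * (1 * M0)) ^ 2 := by
                gcongr
                · exact hle x hxR hx1
                · exact hM0 x
            _ = (ER * M0) ^ 2 := by ring
            _ ≤ _ := le_add_of_nonneg_left (by positivity)
      · rw [hzeroD x hx, Set.indicator_of_notMem hx]
        simp; positivity
    have h2 : ER ^ 2 * κ ≤ ∫ x, ‖x‖ ^ 2 * (cw τ x * ‖φ x‖) ^ 2 := by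
      refine le_trans ?_ (setIntegral_le_integral (s := ball 0 R1) I1 (Eventually.of_forall fun x => by
        simp only [Pi.zero_apply]; positivity))
      rw [hκ, ← integral_const_mul]
      refine setIntegral_mono_on (hgi.integrableOn.const_mul _) I1.integrableOn measurableSet_ball fun x hx => ?_
      by_cases hx0 : x = 0
      · simp [hx0]
      have := hge x hx0 (mem_ball_zero_iff.1 hx).le
      calc ER ^ 2 * (‖x‖ ^ 2 * ‖φ x‖ ^ 2) = ‖x‖ ^ 2 * (ER * ‖φ x‖) ^ 2 := by ring
        _ ≤ _ := by gcongr
    have h3 : (2 * τ - C' ^ 2) * (ER ^ 2 * κ) ≤ (ER * M0) ^ 2 * vol := by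
      refine le_trans (mul_le_mul_of_nonneg_left h2 (by linarith)) ?_
      nlinarith [hcar, h1]
    have h4 : ER ^ 2 * ((2 * τ - C' ^ 2) * κ) ≤ ER ^ 2 * (M0 ^ 2 * vol) := by nlinarith [h3]
    exact le_of_mul_le_mul_left h4 (by positivity)
  have hκ0 : 0 ≤ κ := setIntegral_nonneg measurableSet_ball fun x _ => by positivity
  have hκz : κ = 0 := by
    by_contra h
    have hpos : 0 < κ := lt_of_le_of_ne hκ0 (Ne.symm h)
    have hv : 0 ≤ M0 ^ 2 * vol := by positivity
    have := main ((C' ^ 2 + (M0 ^ 2 * vol + 1) / κ) / 2) (by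
      have : 0 ≤ (M0 ^ 2 * vol + 1) / κ := by positivity
      linarith)
    have e : (2 * ((C' ^ 2 + (M0 ^ 2 * vol + 1) / κ) / 2) - C' ^ 2) * κ = M0 ^ 2 * vol + 1 := by
      field_simp; ring
    linarith
  have hae : (fun x : EuclideanSpace ℝ (Fin n) => ‖x‖ ^ 2 * ‖φ x‖ ^ 2) =ᵐ[volume.restrict (ball 0 R1)] 0 :=
    (setIntegral_eq_zero_iff_of_nonneg_ae (Eventually.of_forall fun x => by
      simp only [Pi.zero_apply]; positivity) hgi.integrableOn).1 hκz
  have := Measure.eqOn_open_of_ae_eq hae isOpen_ball hgc.continuousOn continuousOn_const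
  intro x hx
  by_cases hx0 : x = 0
  · rw [hx0, hφ0]
  have h := this hx
  have hp := norm_pos_iff.2 hx0
  simp only [Pi.zero_apply] at h
  simpa [hx0] using h

lemma sucp {c : Fin n → V →L[ℝ] V} (hc : RCl c) (hs : Skew c) {ψ : EuclideanSpace ℝ (Fin n) → V}
    (hψ : ContDiffOn ℝ 1 ψ (ball 0 1)) {C' : ℝ} (hC' : 0 ≤ C')
    (hD : ∀ x ∈ ball (0 : EuclideanSpace ℝ (Fin n)) 1, ‖rdirac c ψ x‖ ≤ C' * ‖ψ x‖)
    (hV : ∀ m : ℕ, VanOrd ψ (m:ℝ)) :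
    ∀ x ∈ ball (0 : EuclideanSpace ℝ (Fin n)) 1, ψ x = 0 := by
  intro x hx
  have hx1 := mem_ball_zero_iff.1 hx
  set R1 := (1 + ‖x‖) / 2 with hR1
  set R2 := (1 + R1) / 2 with hR2
  have hp := norm_nonneg x
  let χ : ContDiffBump (0 : EuclideanSpace ℝ (Fin n)) := ⟨R1, R2, by linarith, by linarith⟩
  have hχs : tsupport χ ⊆ ball 0 1 := by
    rw [χ.tsupport_eq]
    exact closedBall_subset_ball (by change R2 < 1; linarith)
  have hφ : ContDiff ℝ 1 (fun x => χ x • ψ x) := smul_supp_contDiff isOpen_ball χ.contDiff hψ hχs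
  have hone : ∀ y ∈ ball (0 : EuclideanSpace ℝ (Fin n)) R1, χ y = 1 := fun y hy =>
    χ.one_of_mem_closedBall (ball_subset_closedBall hy)
  have hcφ : HasCompactSupport (fun x => χ x • ψ x) := χ.hasCompactSupport.smul_right
  have hsup : tsupport (fun x => χ x • ψ x) ⊆ ball 0 1 :=
    (tsupport_smul_subset_left χ ψ).trans hχs
  have := sucp_core hc hs hφ hsup hcφ (R1 := R1) (by linarith) (by linarith) hC' ?_ ?_ x
    (mem_ball_zero_iff.2 (by linarith))
  · rw [hone x (mem_ball_zero_iff.2 (by linarith)), one_smul] at this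
    exact this
  · intro y hy
    have he : (fun x => χ x • ψ x) =ᶠ[nhds y] ψ := by
      filter_upwards [isOpen_ball.mem_nhds hy] with z hz
      rw [hone z hz, one_smul]
    have h1 := hD y (ball_subset_ball (by linarith) hy)
    simp only [rdirac, he.fderiv_eq, he.eq_of_nhds] at h1 ⊢
    exact h1
  · intro m
    obtain ⟨K, hK⟩ := hV m
    refine ⟨|K|, fun y => ?_⟩
    by_cases hy : y ∈ ball (0 : EuclideanSpace ℝ (Fin n)) 1
    · rw [norm_smul, Real.norm_of_nonneg χ.nonneg]
      refine (mul_le_of_le_one_left (norm_nonneg _) χ.le_one).trans ?_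
      have := hK y hy
      rw [Real.rpow_natCast] at this
      exact this.trans (mul_le_mul_of_nonneg_right (le_abs_self K) (by positivity))
    · have h0 : y ∉ tsupport χ := fun h => hy (hχs h)
      rw [image_eq_zero_of_notMem_tsupport h0]
      simp; positivity

end Sucp

section Unit
variable {n N : ℕ}

lemma CliffordRel.sq {α : Fin n → Matrix (Fin N) (Fin N) ℂ} (h : CliffordRel α) (j : Fin n) :
    α j * α j = -1 := by
  have := h j j
  rw [if_pos rfl, ← two_smul ℂ (α j * α j)] at this
  have h2 : (2:ℂ) • (α j * α j) = (2:ℂ) • (-1) := by rw [this]; module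
  exact smul_right_injective _ (two_ne_zero (α := ℂ)) h2

lemma CliffordRel.swap {α : Fin n → Matrix (Fin N) (Fin N) ℂ} (h : CliffordRel α) {j k : Fin n} (hjk : j ≠ k) :
    α j * α k = -(α k * α j) := by
  have := h j k
  rw [if_neg hjk, smul_zero] at this
  exact eq_neg_of_add_eq_zero_left this

open scoped ComplexOrder in
lemma exists_inv_form {α : Fin n → Matrix (Fin N) (Fin N) ℂ} (h : CliffordRel α) (s : Finset (Fin n)) :
    ∃ H : Matrix (Fin N) (Fin N) ℂ, H.PosDef ∧ ∀ j ∈ s, (α j)ᴴ * H * α j = H := by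
  classical
  induction s using Finset.induction_on with
  | empty => exact ⟨1, Matrix.PosDef.one, by simp⟩
  | insert k s hk ih =>
    obtain ⟨H, hH, hj⟩ := ih
    refine ⟨H + (α k)ᴴ * H * α k, hH.add_posSemidef (hH.posSemidef.conjTranspose_mul_mul_same _), ?_⟩
    intro j hjm
    rw [Matrix.mul_add, Matrix.add_mul]
    have e : (α j)ᴴ * ((α k)ᴴ * H * α k) * α j = (α k * α j)ᴴ * H * (α k * α j) := by
      rw [Matrix.conjTranspose_mul]; simp only [Matrix.mul_assoc]
    rw [e]
    rcases Finset.mem_insert.1 hjm with rfl | hjs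
    · rw [h.sq, Matrix.conjTranspose_neg, Matrix.conjTranspose_one]
      simp only [Matrix.neg_mul, Matrix.mul_neg, Matrix.one_mul, Matrix.mul_one, neg_neg]
      abel
    · have hne : k ≠ j := fun h => hk (h ▸ hjs)
      rw [h.swap hne, Matrix.conjTranspose_neg, Matrix.conjTranspose_mul]
      simp only [Matrix.neg_mul, Matrix.mul_neg, neg_neg]
      have e2 : (α k)ᴴ * (α j)ᴴ * H * (α j * α k) = (α k)ᴴ * ((α j)ᴴ * H * α j) * α k := by
        simp only [Matrix.mul_assoc]
      rw [e2, hj j hjs]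

open scoped ComplexOrder in
open scoped MatrixOrder in
open scoped Matrix.Norms.L2Operator in
lemma exists_factor {H : Matrix (Fin N) (Fin N) ℂ} (hH : H.PosDef) :
    ∃ B : Matrix (Fin N) (Fin N) ℂ, IsUnit B ∧ H = Bᴴ * B := by
  obtain ⟨B, hB, h⟩ := CStarAlgebra.isStrictlyPositive_iff_eq_star_mul_self.mp hH.isStrictlyPositive
  exact ⟨B, hB, h⟩

lemma exists_unitarize {α : Fin n → Matrix (Fin N) (Fin N) ℂ} (h : CliffordRel α) :
    ∃ B B' : Matrix (Fin N) (Fin N) ℂ, B * B' = 1 ∧ B' * B = 1 ∧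
      ∀ j, (B * α j * B')ᴴ = -(B * α j * B') := by
  obtain ⟨H, hH, hj⟩ := exists_inv_form h Finset.univ
  obtain ⟨B, hB, hHB⟩ := exists_factor hH
  obtain ⟨u, rfl⟩ := hB
  refine ⟨u.val, (u⁻¹).val, by simp, by simp, fun j => ?_⟩
  set B : Matrix (Fin N) (Fin N) ℂ := u.val
  set B' : Matrix (Fin N) (Fin N) ℂ := (u⁻¹).val
  have h1 : B * B' = 1 := by simp [B, B']
  have h1' : B'ᴴ * Bᴴ = 1 := by rw [← Matrix.conjTranspose_mul, h1, Matrix.conjTranspose_one]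
  have h2 : (α j)ᴴ * H = -(H * α j) := by
    have := congrArg (· * α j) (hj j (Finset.mem_univ _))
    simp only [Matrix.mul_assoc, h.sq] at this
    rw [Matrix.mul_neg, Matrix.mul_neg, Matrix.mul_one] at this
    rw [← this, neg_neg]
  rw [Matrix.conjTranspose_mul, Matrix.conjTranspose_mul]
  calc B'ᴴ * ((α j)ᴴ * Bᴴ) = B'ᴴ * ((α j)ᴴ * Bᴴ) * (B * B') := by rw [h1, Matrix.mul_one]
    _ = B'ᴴ * ((α j)ᴴ * (Bᴴ * B)) * B' := by simp only [Matrix.mul_assoc]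
    _ = -(B'ᴴ * Bᴴ * (B * α j * B')) := by
        rw [← hHB, h2, hHB]; simp only [Matrix.mul_assoc, Matrix.mul_neg, Matrix.neg_mul]
    _ = _ := by rw [h1', Matrix.one_mul]

/-- a complex matrix as a real continuous linear map -/
def cmat (A : Matrix (Fin N) (Fin N) ℂ) : EuclideanSpace ℂ (Fin N) →L[ℝ] EuclideanSpace ℂ (Fin N) :=
  LinearMap.toContinuousLinearMap ((Matrix.toEuclideanLin A).restrictScalars ℝ)

lemma cmat_apply (A : Matrix (Fin N) (Fin N) ℂ) (v : EuclideanSpace ℂ (Fin N)) :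
    cmat A v = Matrix.toEuclideanLin A v := rfl

lemma cmat_mul (A B : Matrix (Fin N) (Fin N) ℂ) (v : EuclideanSpace ℂ (Fin N)) :
    cmat (A * B) v = cmat A (cmat B v) := by
  simp only [cmat_apply, Matrix.toLpLin_mul_same, LinearMap.comp_apply]

lemma cmat_one (v : EuclideanSpace ℂ (Fin N)) : cmat (1 : Matrix (Fin N) (Fin N) ℂ) v = v := by
  simp [cmat_apply]

lemma cmat_add (A B : Matrix (Fin N) (Fin N) ℂ) (v : EuclideanSpace ℂ (Fin N)) :
    cmat (A + B) v = cmat A v + cmat B v := by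
  simp [cmat_apply]

lemma diracOp_eq (α : Fin n → Matrix (Fin N) (Fin N) ℂ)
    (ψ : EuclideanSpace ℝ (Fin n) → EuclideanSpace ℂ (Fin N)) (x : EuclideanSpace ℝ (Fin n)) :
    diracOp α ψ x = rdirac (fun j => cmat (α j)) ψ x := rfl

lemma CliffordRel.rcl {α : Fin n → Matrix (Fin N) (Fin N) ℂ} (h : CliffordRel α) :
    RCl (fun j => cmat (α j)) := by
  intro j k v
  have e := congrArg (fun A => cmat A v) (h j k)
  simp only [cmat_add, cmat_mul] at e
  rw [e]
  split_ifs
  · simp only [cmat_apply, map_smul, LinearMap.smul_apply]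
    rw [← cmat_apply, cmat_one]
    ext i
    simp
  · simp [cmat_apply]

lemma real_inner_eq (x y : EuclideanSpace ℂ (Fin N)) : inner ℝ x y = (inner ℂ x y).re := by
  simp [PiLp.inner_apply, Complex.inner]

lemma cmat_skew {α : Fin n → Matrix (Fin N) (Fin N) ℂ} (h : ∀ j, (α j)ᴴ = -α j) :
    Skew (fun j => cmat (α j)) := by
  intro j u v
  rw [real_inner_eq, real_inner_eq, cmat_apply, cmat_apply]
  have := Matrix.toEuclideanLin_conjTranspose_eq_adjoint (α j)
  rw [← LinearMap.adjoint_inner_right, ← this, h j]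
  simp

lemma sucp_mat {α : Fin n → Matrix (Fin N) (Fin N) ℂ} (h : CliffordRel α)
    {ψ : EuclideanSpace ℝ (Fin n) → EuclideanSpace ℂ (Fin N)}
    (hψ : ContDiffOn ℝ 1 ψ (ball 0 1)) {C' : ℝ} (hC' : 0 ≤ C')
    (hD : ∀ x ∈ ball (0 : EuclideanSpace ℝ (Fin n)) 1, ‖rdirac (fun j => cmat (α j)) ψ x‖ ≤ C' * ‖ψ x‖)
    (hV : ∀ m : ℕ, VanOrd ψ (m:ℝ)) :
    ∀ x ∈ ball (0 : EuclideanSpace ℝ (Fin n)) 1, ψ x = 0 := by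
  obtain ⟨B, B', h1, h2, h3⟩ := exists_unitarize h
  have hinv : ∀ v, cmat B' (cmat B v) = v := fun v => by rw [← cmat_mul, h2, cmat_one]
  have hcl : CliffordRel (fun j => B * α j * B') := by
    intro j k
    have e : ∀ j k, B * α j * B' * (B * α k * B') = B * (α j * α k) * B' := by
      intro j k
      calc B * α j * B' * (B * α k * B') = B * α j * (B' * B) * α k * B' := by simp only [Matrix.mul_assoc]
        _ = _ := by rw [h2, Matrix.mul_one]; simp only [Matrix.mul_assoc]
    simp only [e]
    rw [← Matrix.add_mul, ← Matrix.mul_add, h j k]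
    split_ifs
    · rw [Matrix.mul_smul, Matrix.smul_mul, Matrix.mul_one, h1]
    · simp
  have hres := sucp hcl.rcl (cmat_skew h3) (ψ := fun x => cmat B (ψ x))
    (C' := ‖cmat B‖ * (C' * ‖cmat B'‖)) ((cmat B).contDiff.comp_contDiffOn hψ) (by positivity) ?_ ?_
  · intro x hx
    have := hres x hx
    rw [← hinv (ψ x), this, map_zero]
  · intro x hx
    have hd : DifferentiableAt ℝ ψ x := (hψ.contDiffAt (isOpen_ball.mem_nhds hx)).differentiableAt one_ne_zero
    have e : rdirac (fun j => cmat (B * α j * B')) (fun x => cmat B (ψ x)) x =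
        cmat B (rdirac (fun j => cmat (α j)) ψ x) := by
      have hf : fderiv ℝ (fun x => cmat B (ψ x)) x = (cmat B).comp (fderiv ℝ ψ x) :=
        ((cmat B).hasFDerivAt.comp x hd.hasFDerivAt).fderiv
      simp only [rdirac, hf, ContinuousLinearMap.comp_apply, cmat_mul, hinv, map_sum]
    rw [e]
    calc _ ≤ ‖cmat B‖ * ‖rdirac (fun j => cmat (α j)) ψ x‖ := (cmat B).le_opNorm _
      _ ≤ ‖cmat B‖ * (C' * ‖ψ x‖) := by gcongr; exact hD x hx
      _ = ‖cmat B‖ * (C' * ‖cmat B' (cmat B (ψ x))‖) := by rw [hinv]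
      _ ≤ ‖cmat B‖ * (C' * (‖cmat B'‖ * ‖cmat B (ψ x)‖)) := by gcongr; exact (cmat B').le_opNorm _
      _ = _ := by ring
  · intro m
    obtain ⟨K, hK⟩ := hV m
    refine ⟨‖cmat B‖ * K, fun x hx => ?_⟩
    calc _ ≤ ‖cmat B‖ * ‖ψ x‖ := (cmat B).le_opNorm _
      _ ≤ ‖cmat B‖ * (K * ‖x‖ ^ (m:ℝ)) := by gcongr; exact hK x hx
      _ = _ := by ring

end Unit

section Poly
variable {n N : ℕ}

lemma pderiv_swap (i j : Fin n) (p : MvPolynomial (Fin n) ℂ) :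
    MvPolynomial.pderiv i (MvPolynomial.pderiv j p) = MvPolynomial.pderiv j (MvPolynomial.pderiv i p) := by
  have h : ⁅MvPolynomial.pderiv (R := ℂ) i, MvPolynomial.pderiv (R := ℂ) j⁆ = 0 := by
    apply MvPolynomial.derivation_ext
    intro k
    rw [Derivation.commutator_apply, MvPolynomial.pderiv_X, MvPolynomial.pderiv_X]
    simp only [Pi.single_apply]
    split_ifs <;> simp
  have := congrArg (fun D => D p) h
  simp only [Derivation.commutator_apply, Derivation.zero_apply] at this
  exact sub_eq_zero.1 this

/-- evaluation at a real point -/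
def rev (x : EuclideanSpace ℝ (Fin n)) (p : MvPolynomial (Fin n) ℂ) : ℂ :=
  MvPolynomial.eval (fun j => ((x j : ℝ) : ℂ)) p

lemma rev_ext {p : MvPolynomial (Fin n) ℂ} (h : ∀ x : EuclideanSpace ℝ (Fin n), rev x p = 0) : p = 0 := by
  refine MvPolynomial.funext_set (fun _ => Set.range (fun r : ℝ => (r:ℂ)))
    (fun _ => Set.infinite_range_of_injective Complex.ofReal_injective) ?_
  intro y hy
  have : ∀ j, ∃ r : ℝ, (r:ℂ) = y j := fun j => hy j (Set.mem_univ j)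
  choose r hr using this
  have h2 := h (WithLp.toLp 2 r)
  rw [map_zero]
  unfold rev at h2
  rw [← h2]
  congr 1
  congr 1
  ext j
  simp [hr]

lemma rev_hasFDerivAt (p : MvPolynomial (Fin n) ℂ) (x : EuclideanSpace ℝ (Fin n)) :
    HasFDerivAt (fun x => rev x p)
      (∑ j, (EuclideanSpace.proj j : EuclideanSpace ℝ (Fin n) →L[ℝ] ℝ).smulRight
        (rev x (MvPolynomial.pderiv j p))) x := by
  induction p using MvPolynomial.induction_on with
  | C a =>
    simp only [rev, MvPolynomial.eval_C, MvPolynomial.pderiv_C, map_zero]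
    refine (hasFDerivAt_const a x).congr_fderiv ?_
    ext; simp
  | add p q hp hq =>
    have := hp.fun_add hq
    simp only [rev, map_add] at this ⊢
    refine this.congr_fderiv ?_
    ext v
    simp [_root_.sum_apply, ← Finset.sum_add_distrib]
  | mul_X p k hp =>
    have hk : HasFDerivAt (fun x : EuclideanSpace ℝ (Fin n) => ((x k : ℝ) : ℂ))
        (Complex.ofRealCLM.comp (EuclideanSpace.proj k : EuclideanSpace ℝ (Fin n) →L[ℝ] ℝ)) x :=
      (Complex.ofRealCLM.comp (EuclideanSpace.proj k : EuclideanSpace ℝ (Fin n) →L[ℝ] ℝ)).hasFDerivAt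
    have := hp.fun_mul hk
    simp only [rev, map_mul, MvPolynomial.eval_X] at this ⊢
    refine this.congr_fderiv ?_
    ext v
    simp only [_root_.add_apply, _root_.smul_apply, _root_.sum_apply, ContinuousLinearMap.smulRight_apply,
      ContinuousLinearMap.comp_apply, MvPolynomial.pderiv_mul, MvPolynomial.pderiv_X, map_add, map_mul,
      MvPolynomial.eval_X, smul_add, Finset.sum_add_distrib]
    rw [add_comm]
    congr 1
    · rw [Finset.smul_sum]
      refine Finset.sum_congr rfl fun j _ => ?_
      simp only [PiLp.proj_apply, Complex.real_smul, smul_eq_mul]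
      ring
    · rw [Finset.sum_eq_single k]
      · simp; ring
      · intro j _ hj
        simp [Pi.single_apply, hj.symm]
      · simp

lemma harm_poly {α : Fin n → Matrix (Fin N) (Fin N) ℂ} (h : CliffordRel α)
    (p : Fin N → MvPolynomial (Fin n) ℂ)
    (hp : ∀ i, ∑ j, ∑ l, (α j i l) • MvPolynomial.pderiv j (p l) = 0) (i : Fin N) :
    ∑ j, MvPolynomial.pderiv j (MvPolynomial.pderiv j (p i)) = 0 := by
  set S : Fin n → Fin n → MvPolynomial (Fin n) ℂ := fun k j =>
    ∑ l, ((α k * α j) i l) • MvPolynomial.pderiv k (MvPolynomial.pderiv j (p l)) with hS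
  have h1 : ∑ k, ∑ j, S k j = 0 := by
    have : ∀ k, ∑ j, S k j = ∑ i', (α k i i') • MvPolynomial.pderiv k
        (∑ j, ∑ l, (α j i' l) • MvPolynomial.pderiv j (p l)) := by
      intro k
      simp only [hS, map_sum, Derivation.map_smul, Finset.smul_sum, smul_smul, Matrix.mul_apply,
        Finset.sum_smul]
      conv_lhs => enter [2, j]; rw [Finset.sum_comm]
      rw [Finset.sum_comm]
    simp only [this, hp, map_zero, smul_zero, Finset.sum_const_zero]
  have h2 : ∑ k, ∑ j, S j k = 0 := by rw [Finset.sum_comm]; exact h1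
  have h3 : ∀ k j, S k j + S j k = if k = j then
      (-2:ℂ) • MvPolynomial.pderiv k (MvPolynomial.pderiv k (p i)) else 0 := by
    intro k j
    simp only [hS]
    rw [← Finset.sum_add_distrib]
    have : ∀ l, ((α k * α j) i l) • MvPolynomial.pderiv k (MvPolynomial.pderiv j (p l)) +
        ((α j * α k) i l) • MvPolynomial.pderiv j (MvPolynomial.pderiv k (p l)) =
        ((α k * α j + α j * α k) i l) • MvPolynomial.pderiv k (MvPolynomial.pderiv j (p l)) := by
      intro l
      rw [pderiv_swap j k, ← add_smul]; rfl
    simp only [this, h k j]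
    split_ifs with hkj
    · subst hkj
      rw [Finset.sum_eq_single i]
      · simp
      · intro l _ hl
        simp [Matrix.one_apply, hl.symm]
      · simp
    · simp
  have h4 : ∑ k, ∑ j, (S k j + S j k) = 0 := by
    simp only [Finset.sum_add_distrib, h1, h2, add_zero]
  simp only [h3, Finset.sum_ite_eq, Finset.mem_univ, if_true] at h4
  rw [← Finset.smul_sum] at h4
  exact (smul_eq_zero.1 h4).resolve_left (by norm_num)

lemma poly_part {α : Fin n → Matrix (Fin N) (Fin N) ℂ} (h : CliffordRel α) {m : ℕ}
    (q : (Fin m → Fin n) → EuclideanSpace ℂ (Fin N)) {P : EuclideanSpace ℝ (Fin n) → EuclideanSpace ℂ (Fin N)}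
    (hP : ∀ x, P x = ∑ J, (∏ i, x (J i)) • q J) (hPd : Differentiable ℝ P)
    (hD : ∀ x, rdirac (fun j => cmat (α j)) P x = 0) (i : Fin N) :
    ∃ p : MvPolynomial (Fin n) ℂ, p.IsHomogeneous m ∧
        (∑ j : Fin n, MvPolynomial.pderiv j (MvPolynomial.pderiv j p)) = 0 ∧
        ∀ x : EuclideanSpace ℝ (Fin n),
          P x i = MvPolynomial.eval (fun j => ((x j : ℝ) : ℂ)) p := by
  set p : Fin N → MvPolynomial (Fin n) ℂ := fun i =>
    ∑ J : Fin m → Fin n, MvPolynomial.C (q J i) * ∏ l, MvPolynomial.X (J l) with hp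
  have hev : ∀ x i, P x i = rev x (p i) := by
    intro x i
    rw [hP x]
    simp [hp, rev, map_sum, mul_comm]
  refine ⟨p i, ?_, ?_, fun x => hev x i⟩
  · refine MvPolynomial.IsHomogeneous.sum _ _ _ fun J _ => ?_
    have h1 : (∏ l, (MvPolynomial.X (J l) : MvPolynomial (Fin n) ℂ)).IsHomogeneous (∑ _l : Fin m, 1) :=
      MvPolynomial.IsHomogeneous.prod _ _ _ fun l _ => MvPolynomial.isHomogeneous_X ℂ _
    have h2 := (MvPolynomial.isHomogeneous_C (Fin n) (q J i)).mul h1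
    simpa using h2
  · refine harm_poly h p ?_ i
    intro i
    apply rev_ext
    intro x
    have hx := congrArg (fun v : EuclideanSpace ℂ (Fin N) => v i) (hD x)
    have hd : ∀ j l, (fderiv ℝ P x (EuclideanSpace.single j 1)) l = rev x (MvPolynomial.pderiv j (p l)) := by
      intro j l
      have h1 : HasFDerivAt (fun x => P x l)
          (((EuclideanSpace.proj l : EuclideanSpace ℂ (Fin N) →L[ℂ] ℂ).restrictScalars ℝ).comp (fderiv ℝ P x)) x :=
        ((EuclideanSpace.proj l : EuclideanSpace ℂ (Fin N) →L[ℂ] ℂ).restrictScalars ℝ).hasFDerivAt.comp x (hPd x).hasFDerivAt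
      have h2 := rev_hasFDerivAt (p l) x
      simp only [hev] at h1
      have h3 := congrArg (fun L => L (EuclideanSpace.single j (1:ℝ))) (h1.unique h2)
      simp only [ContinuousLinearMap.comp_apply, _root_.sum_apply, ContinuousLinearMap.smulRight_apply] at h3
      rw [Finset.sum_eq_single j] at h3
      · simpa using h3
      · intro k _ hk
        simp [hk]
      · simp
    simp only [rdirac, cmat_apply] at hx
    refine Eq.trans ?_ hx
    simp only [rev, map_sum, MvPolynomial.smul_eval]
    simp only [WithLp.ofLp_sum, Finset.sum_apply, Matrix.toEuclideanLin_apply, Matrix.mulVec, dotProduct, hd, rev]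

end Poly

section Asm
variable {n : ℕ}

lemma holder_bounds {V : Type*} [NormedAddCommGroup V] [NormedSpace ℝ V]
    {ψ : EuclideanSpace ℝ (Fin n) → V}
    {a : ℝ≥0} (ha0 : 0 < a) (hreg : ContDiffOn ℝ 1 ψ (ball 0 1))
    {CH : ℝ≥0} (hH : HolderOnWith CH a (fderiv ℝ ψ) (ball 0 1)) (h0 : ψ 0 = 0) :
    ∃ M : ℝ, 0 ≤ M ∧ ∀ x ∈ ball (0 : EuclideanSpace ℝ (Fin n)) 1, ‖ψ x‖ ≤ M * ‖x‖ := by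
  have hb : ∀ x ∈ ball (0 : EuclideanSpace ℝ (Fin n)) 1, ‖fderiv ℝ ψ x‖ ≤ ‖fderiv ℝ ψ 0‖ + CH := by
    intro x hx
    have h1 := hH.dist_le hx (mem_ball_self one_pos)
    rw [dist_eq_norm, dist_zero_right] at h1
    have hx1 : ‖x‖ < 1 := by simpa using hx
    have h2 : ‖x‖ ^ (a:ℝ) ≤ 1 := Real.rpow_le_one (norm_nonneg _) hx1.le a.2
    have h3 : (CH:ℝ) * ‖x‖ ^ (a:ℝ) ≤ CH * 1 := mul_le_mul_of_nonneg_left h2 CH.2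
    have h4 := norm_sub_norm_le (fderiv ℝ ψ x) (fderiv ℝ ψ 0)
    linarith
  refine ⟨‖fderiv ℝ ψ 0‖ + CH, by positivity, fun x hx => ?_⟩
  have := (convex_ball (0 : EuclideanSpace ℝ (Fin n)) 1).norm_image_sub_le_of_norm_fderiv_le (𝕜 := ℝ)
    (fun y hy => (hreg.differentiableOn one_ne_zero).differentiableAt (isOpen_ball.mem_nhds hy)) hb
    (mem_ball_self one_pos) hx
  simpa [h0] using this

lemma lip_poly {V : Type*} [NormedAddCommGroup V] [NormedSpace ℝ V]
    {P : EuclideanSpace ℝ (Fin n) → V} (hP : ContDiff ℝ 2 P) :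
    ∃ L : ℝ, 0 ≤ L ∧ ∀ x ∈ ball (0 : EuclideanSpace ℝ (Fin n)) (1/2), ∀ y ∈ ball (0 : EuclideanSpace ℝ (Fin n)) (1/2),
      ‖fderiv ℝ P x - fderiv ℝ P y‖ ≤ L * ‖x - y‖ := by
  have h1 : ContDiff ℝ 1 (fderiv ℝ P) := hP.fderiv_right (by norm_num)
  have h2 : Continuous (fderiv ℝ (fderiv ℝ P)) := h1.continuous_fderiv one_ne_zero
  obtain ⟨L, hL⟩ := (isCompact_closedBall (0 : EuclideanSpace ℝ (Fin n)) 1).exists_bound_of_continuousOn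
    (f := fderiv ℝ (fderiv ℝ P)) h2.continuousOn
  refine ⟨L, (norm_nonneg _).trans (hL 0 (by simp)), fun x hx y hy => ?_⟩
  refine (convex_ball (0 : EuclideanSpace ℝ (Fin n)) (1/2)).norm_image_sub_le_of_norm_fderiv_le (𝕜 := ℝ)
    (fun z _ => (h1.differentiable one_ne_zero) z) (fun z hz => hL z ?_) hy hx
  simp at hz ⊢
  linarith

end Asm

/-- Expansion of a `C^{1,a}` spinor with `|Dψ| ≤ C|ψ|^σ`, vanishing at the origin but not
identically zero, as a nonzero `D`-harmonic spinor whose components are homogeneous harmonic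
polynomials of degree `k ≥ 1`, plus a remainder vanishing at order `k + δ` for every
`δ ∈ (0,1)`. -/
theorem homogeneous_decomposition
    (n : ℕ) (hn : 2 ≤ n) (N : ℕ) (hN : N = 2 ^ (n / 2))
    (α : Fin n → Matrix (Fin N) (Fin N) ℂ)
    (hcl : CliffordRel α)
    (ψ : EuclideanSpace ℝ (Fin n) → EuclideanSpace ℂ (Fin N))
    -- `ψ` is `C^{1,a}` on the open unit ball for some `a ∈ (0,1)`
    (a : ℝ≥0) (ha0 : 0 < a) (ha1 : a < 1)
    (hreg : ContDiffOn ℝ 1 ψ (Metric.ball 0 1))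
    (hHol : ∃ C : ℝ≥0, HolderOnWith C a (fderiv ℝ ψ) (Metric.ball 0 1))
    -- `|Dψ| ≤ C |ψ|^σ` on the unit ball, with `C ≥ 0`, `σ ≥ 1`
    (C : ℝ) (hC : 0 ≤ C) (σ : ℝ) (hσ : 1 ≤ σ)
    (hD : ∀ x ∈ Metric.ball (0 : EuclideanSpace ℝ (Fin n)) 1,
      ‖diracOp α ψ x‖ ≤ C * ‖ψ x‖ ^ σ)
    -- `ψ(0) = 0` and `ψ` is not identically zero on the unit ball
    (h0 : ψ 0 = 0)
    (hne : ∃ x ∈ Metric.ball (0 : EuclideanSpace ℝ (Fin n)) 1, ψ x ≠ 0) :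
    ∃ (k : ℕ) (R : ℝ) (P Γ : EuclideanSpace ℝ (Fin n) → EuclideanSpace ℂ (Fin N)),
      1 ≤ k ∧ 0 < R ∧ R ≤ 1 ∧
      -- `ψ = P + Γ` on `B_R`
      (∀ x ∈ Metric.ball (0 : EuclideanSpace ℝ (Fin n)) R, ψ x = P x + Γ x) ∧
      -- `P` is not identically zero
      (∃ x : EuclideanSpace ℝ (Fin n), P x ≠ 0) ∧
      -- each component of `P` is a homogeneous harmonic polynomial of degree `k`
      (∀ i : Fin N, ∃ p : MvPolynomial (Fin n) ℂ,
        p.IsHomogeneous k ∧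
        (∑ j : Fin n, MvPolynomial.pderiv j (MvPolynomial.pderiv j p)) = 0 ∧
        ∀ x : EuclideanSpace ℝ (Fin n),
          P x i = MvPolynomial.eval (fun j => ((x j : ℝ) : ℂ)) p) ∧
      -- `P` is a harmonic spinor: `DP = 0`
      (∀ x : EuclideanSpace ℝ (Fin n), diracOp α P x = 0) ∧
      -- remainder estimates: for every `δ ∈ (0,1)` there is a constant `C(δ) > 0`
      (∀ δ : ℝ, 0 < δ → δ < 1 → ∃ Cδ : ℝ, 0 < Cδ ∧
        ∀ x ∈ Metric.ball (0 : EuclideanSpace ℝ (Fin n)) R,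
          ‖Γ x‖ ≤ Cδ * ‖x‖ ^ ((k : ℝ) + δ) ∧
          ‖fderiv ℝ Γ x‖ ≤ Cδ * ‖x‖ ^ ((k : ℝ) + δ - 1)) := by
  obtain ⟨CH, hH⟩ := hHol
  obtain ⟨M, hM0, hM⟩ := holder_bounds ha0 hreg hH h0
  have hn' : 0 < n := by omega
  have ha0' : (0:ℝ) < (a:ℝ) := by exact_mod_cast ha0
  have ha1' : (a:ℝ) < 1 := by exact_mod_cast ha1
  set c : Fin n → EuclideanSpace ℂ (Fin N) →L[ℝ] EuclideanSpace ℂ (Fin N) := fun j => cmat (α j) with hcdef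
  have hc : RCl c := hcl.rcl
  have hMb : ∀ x ∈ ball (0 : EuclideanSpace ℝ (Fin n)) 1, ‖ψ x‖ ≤ M := by
    intro x hx
    have hx1 : ‖x‖ < 1 := by simpa using hx
    exact (hM x hx).trans (mul_le_of_le_one_right hM0 hx1.le)
  set C' : ℝ := C * M ^ (σ - 1) with hC'
  have hC'0 : 0 ≤ C' := by positivity
  have hD' : ∀ x ∈ ball (0 : EuclideanSpace ℝ (Fin n)) 1, ‖rdirac c ψ x‖ ≤ C' * ‖ψ x‖ := by
    intro x hx
    refine (hD x hx).trans ?_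
    rw [hC', mul_assoc]
    refine mul_le_mul_of_nonneg_left ?_ hC
    have h1 : ‖ψ x‖ ^ σ = ‖ψ x‖ ^ (σ - 1) * ‖ψ x‖ := by
      rcases eq_or_lt_of_le (norm_nonneg (ψ x)) with h | h
      · rw [← h, Real.zero_rpow (by linarith), mul_zero]
      · rw [← Real.rpow_add_one h.ne']; congr 1; ring
    rw [h1]
    exact mul_le_mul_of_nonneg_right
      (Real.rpow_le_rpow (norm_nonneg _) (hMb x hx) (by linarith)) (norm_nonneg _)
  have hV1 : VanOrd ψ ((1:ℕ):ℝ) := ⟨M, fun x hx => by simpa using hM x hx⟩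
  have hex : ∃ m : ℕ, 1 ≤ m ∧ VanOrd ψ (m:ℝ) ∧ ¬ VanOrd ψ ((m+1:ℕ):ℝ) := by
    by_contra hcon
    push Not at hcon
    have hall : ∀ m : ℕ, VanOrd ψ ((m+1:ℕ):ℝ) := by
      intro m
      induction m with
      | zero => exact hV1
      | succ m ih => exact hcon (m+1) (by omega) ih
    have hall' : ∀ m : ℕ, VanOrd ψ (m:ℝ) := by
      intro m
      cases m with
      | zero => exact ⟨M, fun x hx => by simpa using hMb x hx⟩
      | succ m => exact hall m
    obtain ⟨x, hx, hx0⟩ := hne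
    exact hx0 (sucp_mat hcl hreg hC'0 hD' hall' x hx)
  obtain ⟨m, hm, hS, hnS⟩ := hex
  set P : EuclideanSpace ℝ (Fin n) → EuclideanSpace ℂ (Fin N) := fun x => Qh c ψ m (fun _ => x) with hPdef
  have hpoly : ∀ x, P x = ∑ J : Fin m → Fin n, (∏ i, x (J i)) •
      Qh c ψ m (fun i => EuclideanSpace.single (J i) 1) := fun x => Qh_poly hn' hreg hD' m hm hS x
  have hP2 : ContDiff ℝ 2 P := by
    have : P = fun x => ∑ J : Fin m → Fin n, (∏ i, x (J i)) •
      Qh c ψ m (fun i => EuclideanSpace.single (J i) 1) := funext hpoly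
    rw [this]
    refine ContDiff.sum fun J _ => ContDiff.fun_smul (contDiff_prod fun i _ => ?_) contDiff_const
    exact (EuclideanSpace.proj (J i) : EuclideanSpace ℝ (Fin n) →L[ℝ] ℝ).contDiff
  have hP1 : ContDiff ℝ 1 P := hP2.of_le (by norm_num)
  obtain ⟨Ch, hCh0, hCh⟩ := stage1 hn' hc hreg hD' m hm hS (1/2) (by norm_num) (by norm_num)
  have hDP : ∀ x, rdirac c P x = 0 :=
    blowup hreg hD' m hS hP1 (fun t x => Qh_smul ..) hCh
  obtain ⟨LP, hLP0, hLP⟩ := lip_poly hP2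
  obtain ⟨K, hK⟩ := hS
  have hball : ∀ {x : EuclideanSpace ℝ (Fin n)}, ‖x‖ ≤ 1/2 → x ∈ ball (0 : EuclideanSpace ℝ (Fin n)) 1 := by
    intro x hx
    simp; linarith
  have hdψ : ∀ x ∈ ball (0 : EuclideanSpace ℝ (Fin n)) 1, DifferentiableAt ℝ ψ x := fun x hx =>
    (hreg.differentiableOn one_ne_zero).differentiableAt (isOpen_ball.mem_nhds hx)
  have hdP : ∀ x, DifferentiableAt ℝ P x := fun x => hP1.differentiable one_ne_zero x
  set Γ : EuclideanSpace ℝ (Fin n) → EuclideanSpace ℂ (Fin N) := fun x => ψ x - P x with hΓ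
  have hsub : ball (0 : EuclideanSpace ℝ (Fin n)) (1/2) ⊆ ball 0 1 := ball_subset_ball (by norm_num)
  have hΓ1 : ContDiffOn ℝ 1 Γ (ball 0 (1/2)) := (hreg.mono hsub).sub hP1.contDiffOn
  have hΓL : ∀ x ∈ ball (0 : EuclideanSpace ℝ (Fin n)) (1/2), ∀ y ∈ ball (0 : EuclideanSpace ℝ (Fin n)) (1/2),
      ‖fderiv ℝ Γ x - fderiv ℝ Γ y‖ ≤ (CH + LP) * ‖x - y‖ ^ (a:ℝ) := by
    intro x hx y hy
    have e : ∀ z ∈ ball (0 : EuclideanSpace ℝ (Fin n)) (1/2), fderiv ℝ Γ z = fderiv ℝ ψ z - fderiv ℝ P z :=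
      fun z hz => fderiv_fun_sub (hdψ z (hsub hz)) (hdP z)
    rw [e x hx, e y hy]
    have h1 := hH.dist_le (hsub hx) (hsub hy)
    rw [dist_eq_norm, dist_eq_norm] at h1
    have h2 := hLP x hx y hy
    have hx1 : ‖x‖ < 1/2 := by simpa using hx
    have hy1 : ‖y‖ < 1/2 := by simpa using hy
    have hxy : ‖x - y‖ ≤ 1 := (norm_sub_le x y).trans (by linarith)
    have h3 : ‖x - y‖ ≤ ‖x - y‖ ^ (a:ℝ) := by
      rcases eq_or_lt_of_le (norm_nonneg (x - y)) with h | h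
      · rw [← h]; positivity
      · exact Real.self_le_rpow_of_le_one h.le hxy ha1'.le
    have h4 := mul_le_mul_of_nonneg_left h3 hLP0
    have h5 : fderiv ℝ ψ x - fderiv ℝ P x - (fderiv ℝ ψ y - fderiv ℝ P y) =
      (fderiv ℝ ψ x - fderiv ℝ ψ y) - (fderiv ℝ P x - fderiv ℝ P y) := by abel
    rw [h5]
    refine (norm_sub_le _ _).trans ?_
    linarith
  have hΓD : ∀ x, ‖x‖ ≤ 1/2 → ‖rdirac c Γ x‖ ≤ C' * K * ‖x‖ ^ (m:ℝ) := by
    intro x hx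
    have e : rdirac c Γ x = rdirac c ψ x := by
      have := rdirac_sub c (hdψ x (hball hx)) (hdP x)
      rw [hDP x, sub_zero] at this
      exact this
    rw [e, mul_assoc]
    exact (hD' x (hball hx)).trans (mul_le_mul_of_nonneg_left (hK x (hball hx)) hC'0)
  refine ⟨m, 1/4, P, Γ, hm, by norm_num, by norm_num, fun x _ => by simp [hΓ], ?_, ?_, hDP, ?_⟩
  · by_contra hcon
    push Not at hcon
    exact hnS (stage2 hn' hc hreg hD' m hm ⟨K, hK⟩ hcon)
  · exact fun i => poly_part hcl _ hpoly (fun x => hdP x) hDP i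
  · intro δ hδ hδ1
    obtain ⟨C1, hC10, hC1⟩ := stage1 hn' hc hreg hD' m hm ⟨K, hK⟩ δ hδ hδ1
    obtain ⟨C2, hC20, hC2⟩ := stage1 hn' hc hreg hD' m hm ⟨K, hK⟩ ((1+δ)/2) (by linarith) (by linarith)
    obtain ⟨C3, hC30, hC3⟩ := grad_est (C := max C2 (C' * K)) hn' hc hΓ1 hm ha0' hΓL hδ
      (by linarith : δ < (1+δ)/2) (by linarith)
      (fun x hx => (hC2 x hx).trans (mul_le_mul_of_nonneg_right (le_max_left _ _) (by positivity)))
      (fun x hx => (hΓD x hx).trans (mul_le_mul_of_nonneg_right (le_max_right _ _) (by positivity)))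
    refine ⟨C1 + C3 + 1, by positivity, fun x hx => ?_⟩
    have hx1 : ‖x‖ < 1/4 := by simpa using hx
    exact ⟨(hC1 x (by linarith)).trans (mul_le_mul_of_nonneg_right (by linarith) (by positivity)),
      (hC3 x hx1).trans (mul_le_mul_of_nonneg_right (by linarith) (by positivity))⟩
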